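/- arXiv:1802.10385 — 3 statements merged into one kernel-verified Lean document; each statement's English description precedes it below -/
import Mathlib

section
/- Let B = A₀ ⊆ A₁ ⊆ ⋯ ⊆ A_{s-1} ⊆ A_s = A be a chain of subalgebras (with the same identity) of an Artin algebra A such that rad(A_{i-1}) is a left ideal of A_i for all 1 ≤ i ≤ s, where s is a positive integer, and suppose that A is 1-syzygy-finite. If the quotient algebra A₁/(rad(A_{s-1})⋯rad(A₁)) is B-syzygy-finite (for example, representation-finite), then the finitistic dimension of B is finite. (When s = 1 the quotient A₁/(rad(A_{s-1})⋯rad(A₁)) is understood to be 0, so the hypothesis holds automatically.) -/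
universe u

open TensorProduct

section Basic

variable (Λ : Type u) [Ring Λ]

/-- `ProjDimLE Λ n M` : the module `M` admits a projective resolution of length `≤ n`
by finitely generated projective `Λ`-modules. -/
def ProjDimLE : ℕ → ModuleCat.{u} Λ → Prop
  | 0, M => Module.Projective Λ M
  | n + 1, M => ∃ (P : ModuleCat.{u} Λ) (g : P →ₗ[Λ] M),
      Module.Projective Λ P ∧ Module.Finite Λ P ∧ Function.Surjective g ∧
      ProjDimLE n (ModuleCat.of Λ (LinearMap.ker g))

/-- The finitistic dimension of `Λ` (computed on finitely generated modules) is finite. -/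
def FinFinDim : Prop :=
  ∃ n : ℕ, ∀ M : ModuleCat.{u} Λ, Module.Finite Λ M →
    (∃ k : ℕ, ProjDimLE Λ k M) → ProjDimLE Λ n M

/-- A module is indecomposable. -/
def ModIndec (M : ModuleCat.{u} Λ) : Prop :=
  Nontrivial M ∧ ∀ N₁ N₂ : Submodule Λ M, IsCompl N₁ N₂ → N₁ = ⊥ ∨ N₂ = ⊥

/-- A class of modules has only finitely many isomorphism classes of indecomposables. -/
def ClassRepFinite (C : ModuleCat.{u} Λ → Prop) : Prop :=
  ∃ (k : ℕ) (N : Fin k → ModuleCat.{u} Λ),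
    ∀ M : ModuleCat.{u} Λ, C M → ModIndec Λ M → ∃ i, Nonempty (M ≃ₗ[Λ] N i)

/-- `Λ` is representation-finite. -/
def RepFinite : Prop :=
  ClassRepFinite Λ (fun M => Module.Finite Λ M)

/-- `X` belongs to `add N`: it is a direct summand of a finite direct sum of copies of `N`. -/
def InAdd (N X : ModuleCat.{u} Λ) : Prop :=
  ∃ (k : ℕ) (i : X →ₗ[Λ] (Fin k → N)) (p : (Fin k → N) →ₗ[Λ] X),
    p.comp i = LinearMap.id

/-- A submodule is superfluous (small). -/
def IsSuperfluous {M : ModuleCat.{u} Λ} (N : Submodule Λ M) : Prop :=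
  ∀ L : Submodule Λ M, L ⊔ N = ⊤ → L = ⊤

/-- `K` is (isomorphic to) the kernel of a projective cover of `M`, i.e. a first syzygy. -/
def IsSyzygyOf (K M : ModuleCat.{u} Λ) : Prop :=
  ∃ (P : ModuleCat.{u} Λ) (g : P →ₗ[Λ] M), Module.Projective Λ P ∧ Module.Finite Λ P ∧
    Function.Surjective g ∧ IsSuperfluous Λ (LinearMap.ker g) ∧
    Nonempty (K ≃ₗ[Λ] LinearMap.ker g)

/-- `K` is an `n`-th syzygy of `M`. -/
def IsNthSyzygy : ℕ → ModuleCat.{u} Λ → ModuleCat.{u} Λ → Prop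
  | 0, K, M => Nonempty (K ≃ₗ[Λ] M)
  | n + 1, K, M => ∃ K' : ModuleCat.{u} Λ, IsNthSyzygy n K' M ∧ IsSyzygyOf Λ K K'

/-- A class `C` of modules is `m`-syzygy-finite. -/
def MSyzygyFiniteClass (m : ℕ) (C : ModuleCat.{u} Λ → Prop) : Prop :=
  ∃ N : ModuleCat.{u} Λ, Module.Finite Λ N ∧
    ∀ X, C X → ∀ K, IsNthSyzygy Λ m K X → InAdd Λ N K

/-- A class `C` of modules is syzygy-finite. -/
def SyzygyFiniteClass (C : ModuleCat.{u} Λ → Prop) : Prop :=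
  ∃ m : ℕ, MSyzygyFiniteClass Λ m C

/-- `Λ` is 1-syzygy-finite. -/
def OneSyzygyFinite : Prop :=
  MSyzygyFiniteClass Λ 1 (fun X => Module.Finite Λ X)

/-- `Λ` is syzygy-finite. -/
def AlgSyzygyFinite : Prop :=
  SyzygyFiniteClass Λ (fun X => Module.Finite Λ X)

/-- The Jacobson radical of `Λ` (intersection of the maximal left ideals). -/
def jacobsonRad : Ideal Λ := sInf {I : Ideal Λ | I.IsMaximal}

end Basic

/-- The Jacobson radical of a subalgebra, as a subset of the ambient algebra. -/
def radSet {R A : Type u} [CommRing R] [Ring A] [Algebra R A] (S : Subalgebra R A) : Set A :=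
  Subtype.val '' ((jacobsonRad ↥S : Ideal ↥S) : Set ↥S)

section Rel

variable {R : Type u} [CommRing R] {B A : Type u} [Ring B] [Ring A]
  [Algebra R B] [Algebra R A] (φ : B →ₐ[R] A)

/-- The tensor product `A ⊗_B X` of the (A,B)-bimodule `A` with a left `A`-module `X`
(viewed as a `B`-module via `φ`), realized as a quotient of `A ⊗_R X`. -/
noncomputable def relTensor (X : ModuleCat.{u} A) : ModuleCat.{u} A :=
  letI : Module R X := Module.compHom X (algebraMap R A)
  ModuleCat.of A ((A ⊗[R] X) ⧸ Submodule.span A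
    {z : A ⊗[R] X | ∃ (a : A) (b : B) (x : X),
      z = (a * φ b) ⊗ₜ[R] x - a ⊗ₜ[R] (φ b • x)})

/-- `X` is `(A,B)`-projective: a direct summand of `A ⊗_B X`. -/
noncomputable def RelProjective (X : ModuleCat.{u} A) : Prop :=
  ∃ (i : X →ₗ[A] relTensor φ X) (p : relTensor φ X →ₗ[A] X), p.comp i = LinearMap.id

/-- The map `g` admits a `B`-linear map `h` with `g ∘ h ∘ g = g`
(this encodes `(A,B)`-exactness of the corresponding short exact sequence). -/
def RelSplitB {P X : ModuleCat.{u} A} (g : P →ₗ[A] X) : Prop :=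
  ∃ h : X →+ P, (∀ (b : B) (x : X), h (φ b • x) = φ b • h x) ∧
    ∀ p : P, g (h (g p)) = g p

/-- `RelProjDimLE φ n X` : `X` has an `(A,B)`-exact resolution of length `≤ n` by
finitely generated `(A,B)`-projective modules, i.e. relative projective dimension `≤ n`. -/
noncomputable def RelProjDimLE : ℕ → ModuleCat.{u} A → Prop
  | 0, X => RelProjective φ X
  | n + 1, X => ∃ (P : ModuleCat.{u} A) (g : P →ₗ[A] X),
      RelProjective φ P ∧ Module.Finite A P ∧ Function.Surjective g ∧ RelSplitB φ g ∧
      RelProjDimLE n (ModuleCat.of A (LinearMap.ker g))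

/-- Restriction of scalars along `φ` of an `A`-module, as an object of `ModuleCat B`. -/
def resMod (X : ModuleCat.{u} A) : ModuleCat.{u} B :=
  @ModuleCat.of B _ X _ (Module.compHom X φ.toRingHom)

/-- The right `B`-module structure on `A` induced by `φ`. -/
def rightModB : Module Bᵐᵒᵖ A :=
  Module.compHom A (RingHom.op φ.toRingHom)

end Rel

variable {R : Type u} [CommRing R] [IsArtinianRing R]
  {A : Type u} [Ring A] [Algebra R A] [Module.Finite R A]

/-!
Let `X` be a `B`-module of finite projective dimension and `L` its second syzygy. As a superfluous
submodule, `L` lies in `rad(B)ⁿ`. It is also cut out of `Bⁿ` by functionals, which are right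
multiplications, so `L` inherits from `rad B` the property of being stable under left multiplication
by `A₁`, now as a submodule of `Aⁿ`. The product `I = rad(A_{s-1}) ⋯ rad(A₁)` is a left ideal of `A`
contained in `A₁`, hence `L` contains the `A`-submodule `I L`, and `A₁ ⧸ I` acts on `L ⧸ I L`.
Therefore `I L` is a first syzygy over `A`, of which there are only finitely many indecomposable
summands, and a high syzygy over `B` of `L ⧸ I L` also comes from a finite list. The
Igusa–Todorov argument bounds the projective dimension of such an extension `L`: a short exact
sequence `0 → X → Y → Z → 0` with `pd Z < ∞` makes the high syzygies of `X` and `Y` stably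
isomorphic, in a split Grothendieck group of finite rank this happens at a uniform level, and
Fitting's lemma then controls `pd Z`.
-/

namespace FinitisticDimension

section ShortExact

/-- There is a short exact sequence `0 → X → Y → Z → 0` of `Λ`-modules. Stable isomorphisms and
dimension shifts only need the existence of the two maps, so they are not part of the data. -/
def ShortExact (Λ : Type*) [Ring Λ] (X Y Z : Type*) [AddCommGroup X] [Module Λ X]
    [AddCommGroup Y] [Module Λ Y] [AddCommGroup Z] [Module Λ Z] : Prop :=
  ∃ (f : X →ₗ[Λ] Y) (g : Y →ₗ[Λ] Z),
    Function.Injective f ∧ Function.Exact f g ∧ Function.Surjective g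

variable {Λ : Type*} [Ring Λ] {X Y Z X' Y' Z' K K' P P' V W : Type*}
  [AddCommGroup X] [Module Λ X] [AddCommGroup Y] [Module Λ Y] [AddCommGroup Z] [Module Λ Z]
  [AddCommGroup X'] [Module Λ X'] [AddCommGroup Y'] [Module Λ Y'] [AddCommGroup Z'] [Module Λ Z']
  [AddCommGroup K] [Module Λ K] [AddCommGroup K'] [Module Λ K']
  [AddCommGroup P] [Module Λ P] [AddCommGroup P'] [Module Λ P']
  [AddCommGroup V] [Module Λ V] [AddCommGroup W] [Module Λ W]

lemma exists_lift_of_injective (f : X →ₗ[Λ] Y) (hf : Function.Injective f) (g : K →ₗ[Λ] Y)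
    (hg : ∀ k, g k ∈ LinearMap.range f) : ∃ a : K →ₗ[Λ] X, ∀ k, f (a k) = g k :=
  let e := LinearEquiv.ofInjective f hf
  ⟨e.symm ∘ₗ g.codRestrict (LinearMap.range f) hg,
    fun k => congrArg Subtype.val (e.apply_symm_apply ⟨g k, hg k⟩)⟩

namespace ShortExact

lemma of_surjective (g : Y →ₗ[Λ] Z) (hg : Function.Surjective g) :
    ShortExact Λ (LinearMap.ker g) Y Z :=
  ⟨(LinearMap.ker g).subtype, g, Subtype.val_injective, LinearMap.exact_subtype_ker_map g, hg⟩

lemma of_submodule (N : Submodule Λ Y) : ShortExact Λ N Y (Y ⧸ N) :=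
  ⟨N.subtype, N.mkQ, Subtype.val_injective, LinearMap.exact_subtype_mkQ N, N.mkQ_surjective⟩

lemma inl_snd : ShortExact Λ X (X × Y) Y :=
  ⟨.inl Λ X Y, .snd Λ X Y, LinearMap.inl_injective, .inl_snd, LinearMap.snd_surjective⟩

lemma congr (h : ShortExact Λ X Y Z) (eX : X ≃ₗ[Λ] X') (eY : Y ≃ₗ[Λ] Y') (eZ : Z ≃ₗ[Λ] Z') :
    ShortExact Λ X' Y' Z' := by
  obtain ⟨f, g, hf, hfg, hg⟩ := h
  refine ⟨eY ∘ₗ f ∘ₗ eX.symm, eZ ∘ₗ g ∘ₗ eY.symm, ?_, ?_, ?_⟩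
  · exact eY.injective.comp (hf.comp eX.symm.injective)
  · refine (Function.Exact.iff_of_ladder_linearEquiv (e₁ := eX) (e₂ := eY) (e₃ := eZ) ?_ ?_).2 hfg
    <;> ext <;> simp
  · exact eZ.surjective.comp (hg.comp eY.symm.surjective)

lemma prod (h : ShortExact Λ X Y Z) (h' : ShortExact Λ X' Y' Z') :
    ShortExact Λ (X × X') (Y × Y') (Z × Z') := by
  obtain ⟨f, g, hf, hfg, hg⟩ := h
  obtain ⟨f', g', hf', hfg', hg'⟩ := h'
  refine ⟨f.prodMap f', g.prodMap g', hf.prodMap hf', fun ⟨y, y'⟩ => ?_, hg.prodMap hg'⟩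
  simp only [LinearMap.prodMap_apply, Prod.mk_eq_zero, hfg y, hfg' y', Set.mem_range, Prod.exists,
    Prod.mk.injEq, exists_and_left, exists_and_right]

lemma prod_left (h : ShortExact Λ X Y Z) (W : Type*) [AddCommGroup W] [Module Λ W] :
    ShortExact Λ (X × W) (Y × W) Z :=
  (h.prod (inl_snd (X := W) (Y := PUnit))).congr (.refl Λ _)
    ((LinearEquiv.refl Λ Y).prodCongr .prodUnique) .prodUnique

lemma prod_right (h : ShortExact Λ X Y Z) (W : Type*) [AddCommGroup W] [Module Λ W] :
    ShortExact Λ X (Y × W) (Z × W) :=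
  (h.prod (inl_snd (X := PUnit) (Y := W))).congr .prodUnique
    ((LinearEquiv.refl Λ Y).prodCongr .uniqueProd) (.refl Λ _)

lemma finite_left [IsNoetherianRing Λ] [Module.Finite Λ Y] (h : ShortExact Λ X Y Z) :
    Module.Finite Λ X := by
  obtain ⟨f, -, hf, -, -⟩ := h
  exact Module.Finite.of_injective f hf

lemma finite_right [Module.Finite Λ Y] (h : ShortExact Λ X Y Z) : Module.Finite Λ Z := by
  obtain ⟨-, g, -, -, hg⟩ := h
  exact Module.Finite.of_surjective g hg

/-- If `P → Z` is onto with kernel `K` and `P` is projective, lifting it along `Y → Z` gives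
`X × P → Y`, which is onto with kernel `K`. -/
lemma rotate [Module.Projective Λ P] (h : ShortExact Λ X Y Z) (hP : ShortExact Λ K P Z) :
    ShortExact Λ K (X × P) Y := by
  obtain ⟨f, g, hf, hfg, hg⟩ := h
  obtain ⟨j, q, hj, hjq, hq⟩ := hP
  obtain ⟨r, hr⟩ := Module.projective_lifting_property g q hg
  replace hr (p : P) : g (r p) = q p := LinearMap.congr_fun hr p
  have hrj (k : K) : -r (j k) ∈ LinearMap.range f :=
    (hfg _).1 (by rw [map_neg, hr, hjq.apply_apply_eq_zero, neg_zero])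
  obtain ⟨a, ha⟩ := exists_lift_of_injective f hf (-(r ∘ₗ j)) hrj
  refine ⟨a.prod j, f.coprod r, fun k l hkl => hj (congrArg Prod.snd hkl), fun ⟨x, p⟩ => ⟨?_, ?_⟩,
    fun y => ?_⟩
  · intro hxp
    have hx : f x = -r p := eq_neg_of_add_eq_zero_left hxp
    have hp : q p = 0 := by
      rw [← hr, ← neg_eq_zero, ← map_neg, ← hx, hfg.apply_apply_eq_zero]
    obtain ⟨k, rfl⟩ := (hjq p).1 hp
    exact ⟨k, Prod.ext (hf ((ha k).trans hx.symm)) rfl⟩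
  · rintro ⟨k, hk⟩
    rw [← hk]
    simp [ha]
  · obtain ⟨p, hp⟩ := hq (g y)
    obtain ⟨x, hx⟩ := (hfg (y - r p)).1 (by rw [map_sub, hr, hp, sub_self])
    exact ⟨(x, p), by simp [hx]⟩

lemma nonempty_equiv_prod [Module.Projective Λ Z] (h : ShortExact Λ X Y Z) :
    Nonempty (Y ≃ₗ[Λ] X × Z) := by
  obtain ⟨f, g, hf, hfg, hg⟩ := h
  obtain ⟨l, hl⟩ := Module.projective_lifting_property g LinearMap.id hg
  exact ⟨(hfg.splitSurjectiveEquiv hf ⟨l, hl⟩).1⟩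

lemma schanuel [Module.Projective Λ P] [Module.Projective Λ P']
    (h : ShortExact Λ K P X) (h' : ShortExact Λ K' P' X) :
    Nonempty ((K × P') ≃ₗ[Λ] (K' × P)) := by
  obtain ⟨e⟩ := (h'.rotate h).nonempty_equiv_prod
  exact ⟨e.symm⟩

lemma exists_comp (hV : ShortExact Λ K W V) (hY : ShortExact Λ K' V Y) :
    ∃ L : Submodule Λ W, ShortExact Λ K L K' ∧ ShortExact Λ L W Y := by
  obtain ⟨i, p, hi, hip, hp⟩ := hV
  obtain ⟨j, q, hj, hjq, hq⟩ := hY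
  have hpker (w : LinearMap.ker (q ∘ₗ p)) : p w ∈ LinearMap.range j := (hjq _).1 w.2
  obtain ⟨c, hc⟩ := exists_lift_of_injective j hj (p.domRestrict _) hpker
  replace hc (w : LinearMap.ker (q ∘ₗ p)) : j (c w) = p w := hc w
  have hiker (k : K) : i k ∈ LinearMap.ker (q ∘ₗ p) := by
    simp [hip.apply_apply_eq_zero]
  refine ⟨LinearMap.ker (q ∘ₗ p), ⟨i.codRestrict _ hiker, c, ?_, ?_, ?_⟩,
    of_surjective _ (hq.comp hp)⟩
  · exact fun k l hkl => hi (congrArg Subtype.val hkl)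
  · intro w
    rw [← map_eq_zero_iff j hj, hc, hip]
    exact exists_congr fun k => (Subtype.ext_iff (a1 := i.codRestrict _ hiker k)).symm
  · intro k
    obtain ⟨w, hw⟩ := hp (j k)
    exact ⟨⟨w, by simp [hw, hjq.apply_apply_eq_zero]⟩, hj ((hc _).trans hw)⟩

lemma horseshoe [Module.Projective Λ P'] (h : ShortExact Λ X Y Z) (hX : ShortExact Λ K P X)
    (hZ : ShortExact Λ K' P' Z) :
    ∃ L : Submodule Λ (P × P'), ShortExact Λ K L K' ∧ ShortExact Λ L (P × P') Y :=
  (hX.prod_right P').exists_comp (h.rotate hZ)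

end ShortExact

end ShortExact

section StableIsomorphism

/-- `X` and `Y` are stably isomorphic: they become isomorphic after adding finitely generated
projective modules. Syzygies are only well defined up to this relation. -/
def StabIso (Λ : Type u) [Ring Λ] (X Y : Type u) [AddCommGroup X] [Module Λ X]
    [AddCommGroup Y] [Module Λ Y] : Prop :=
  ∃ P Q : ModuleCat.{u} Λ, (Module.Finite Λ P ∧ Module.Projective Λ P) ∧
    (Module.Finite Λ Q ∧ Module.Projective Λ Q) ∧ Nonempty ((X × P) ≃ₗ[Λ] (Y × Q))

variable {Λ : Type u} [Ring Λ] {X Y Z X' Y' K K' P P' : Type u}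
  [AddCommGroup X] [Module Λ X] [AddCommGroup Y] [Module Λ Y] [AddCommGroup Z] [Module Λ Z]
  [AddCommGroup X'] [Module Λ X'] [AddCommGroup Y'] [Module Λ Y']
  [AddCommGroup K] [Module Λ K] [AddCommGroup K'] [Module Λ K']
  [AddCommGroup P] [Module Λ P] [AddCommGroup P'] [Module Λ P']

namespace StabIso

lemma of_equiv (e : X ≃ₗ[Λ] Y) : StabIso Λ X Y :=
  ⟨.of Λ PUnit, .of Λ PUnit, ⟨inferInstance, inferInstance⟩, ⟨inferInstance, inferInstance⟩,
    ⟨e.prodCongr (.refl Λ _)⟩⟩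

lemma refl : StabIso Λ X X := of_equiv (.refl Λ X)

lemma symm (h : StabIso Λ X Y) : StabIso Λ Y X := by
  obtain ⟨P, Q, hP, hQ, ⟨e⟩⟩ := h
  exact ⟨Q, P, hQ, hP, ⟨e.symm⟩⟩

lemma trans (h : StabIso Λ X Y) (h' : StabIso Λ Y Z) : StabIso Λ X Z := by
  obtain ⟨P, Q, ⟨_, _⟩, ⟨_, _⟩, ⟨e⟩⟩ := h
  obtain ⟨P', Q', ⟨_, _⟩, ⟨_, _⟩, ⟨e'⟩⟩ := h'
  refine ⟨.of Λ (P × P'), .of Λ (Q' × Q), ⟨inferInstance, inferInstance⟩,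
    ⟨inferInstance, inferInstance⟩, ⟨?_⟩⟩
  exact (LinearEquiv.prodAssoc Λ X P P').symm ≪≫ₗ e.prodCongr (.refl Λ P') ≪≫ₗ
    LinearEquiv.prodAssoc Λ Y Q P' ≪≫ₗ
    (LinearEquiv.refl Λ Y).prodCongr (LinearEquiv.prodComm Λ Q P') ≪≫ₗ
    (LinearEquiv.prodAssoc Λ Y P' Q).symm ≪≫ₗ e'.prodCongr (.refl Λ Q) ≪≫ₗ
    LinearEquiv.prodAssoc Λ Z Q' Q

lemma prod (h : StabIso Λ X Y) (h' : StabIso Λ X' Y') : StabIso Λ (X × X') (Y × Y') := by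
  obtain ⟨P, Q, ⟨_, _⟩, ⟨_, _⟩, ⟨e⟩⟩ := h
  obtain ⟨P', Q', ⟨_, _⟩, ⟨_, _⟩, ⟨e'⟩⟩ := h'
  refine ⟨.of Λ (P × P'), .of Λ (Q × Q'), ⟨inferInstance, inferInstance⟩,
    ⟨inferInstance, inferInstance⟩, ⟨?_⟩⟩
  exact LinearEquiv.prodProdProdComm Λ X X' P P' ≪≫ₗ e.prodCongr e' ≪≫ₗ
    LinearEquiv.prodProdProdComm Λ Y Q Y' Q'

lemma prod_projective [Module.Finite Λ P] [Module.Projective Λ P] : StabIso Λ (X × P) X :=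
  ⟨.of Λ PUnit, .of Λ P, ⟨inferInstance, inferInstance⟩, ⟨‹_›, ‹_›⟩, ⟨.prodUnique⟩⟩

lemma syzygy [Module.Finite Λ P] [Module.Projective Λ P] [Module.Finite Λ P']
    [Module.Projective Λ P'] (h : StabIso Λ X Y) (hK : ShortExact Λ K P X)
    (hK' : ShortExact Λ K' P' Y) : StabIso Λ K K' := by
  obtain ⟨Q, Q', ⟨_, _⟩, ⟨_, _⟩, ⟨e⟩⟩ := h
  obtain ⟨e'⟩ := ((hK.prod_right Q).congr (.refl Λ _) (.refl Λ _) e).schanuel (hK'.prod_right Q')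
  exact ⟨.of Λ (P' × Q'), .of Λ (P × Q), ⟨inferInstance, inferInstance⟩,
    ⟨inferInstance, inferInstance⟩, ⟨e'⟩⟩

end StabIso

end StableIsomorphism

section Fitting

lemma exists_fitting_pow {Λ M : Type*} [Ring Λ] [AddCommGroup M] [Module Λ M] [IsNoetherian Λ M]
    [IsArtinian Λ M] (f : Module.End Λ M) :
    ∃ n ≠ 0, IsCompl (LinearMap.ker (f ^ n)) (LinearMap.range (f ^ n)) ∧
      ∀ x, f x ∈ LinearMap.ker (f ^ n) ↔ x ∈ LinearMap.ker (f ^ n) := by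
  obtain ⟨n, hn, hsup, hcompl⟩ := ((Filter.eventually_ne_atTop 0).and
    ((LinearMap.eventually_iSup_ker_pow_eq f).and
      (LinearMap.eventually_isCompl_ker_pow_range_pow f))).exists
  have hsucc : LinearMap.ker (f ^ n * f) = LinearMap.ker (f ^ n) := by
    refine le_antisymm ?_ fun x hx => ?_
    · rw [← pow_succ, ← hsup]
      exact le_iSup (fun m => LinearMap.ker (f ^ m)) (n + 1)
    · rw [← pow_succ, pow_succ', LinearMap.mem_ker, Module.End.mul_apply, LinearMap.mem_ker.1 hx,
        map_zero]
  exact ⟨n, hn, hcompl, fun x => SetLike.ext_iff.1 hsucc x⟩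

end Fitting

section ProjectiveDimension

open CategoryTheory

/-- The projective dimension of `X` is at most `n`. -/
abbrev PdLE (Λ : Type u) [Ring Λ] (X : Type u) [AddCommGroup X] [Module Λ X] (n : ℕ) : Prop :=
  HasProjectiveDimensionLE (ModuleCat.of Λ X) n

variable {Λ : Type u} [Ring Λ] {X Y Z P U V : Type u}
  [AddCommGroup X] [Module Λ X] [AddCommGroup Y] [Module Λ Y] [AddCommGroup Z] [Module Λ Z]
  [AddCommGroup P] [Module Λ P] [AddCommGroup U] [Module Λ U] [AddCommGroup V] [Module Λ V]
  {n : ℕ}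

lemma shortExact_ofHom (f : X →ₗ[Λ] Y) (g : Y →ₗ[Λ] Z) (hf : Function.Injective f)
    (hfg : Function.Exact f g) (hg : Function.Surjective g) :
    (ShortComplex.mk (ModuleCat.ofHom f) (ModuleCat.ofHom g)
      (by ext x; exact hfg.apply_apply_eq_zero x)).ShortExact where
  exact := (ShortComplex.ShortExact.moduleCat_exact_iff_function_exact _).2 hfg
  mono_f := (ModuleCat.mono_iff_injective _).2 hf
  epi_g := (ModuleCat.epi_iff_surjective _).2 hg

lemma pdLE_zero_iff : PdLE Λ X 0 ↔ Module.Projective Λ X :=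
  (projective_iff_hasProjectiveDimensionLE_zero (X := ModuleCat.of Λ X)).symm.trans
    (IsProjective.iff_projective X).symm

namespace PdLE

lemma mono {m : ℕ} (h : PdLE Λ X m) (hmn : m ≤ n) : PdLE Λ X n :=
  hasProjectiveDimensionLT_of_ge _ (m + 1) _ (by omega)

lemma of_projective [Module.Projective Λ P] (n : ℕ) : PdLE Λ P n :=
  (pdLE_zero_iff.2 ‹_›).mono n.zero_le

lemma of_retract (h : PdLE Λ Y n) (i : X →ₗ[Λ] Y) (p : Y →ₗ[Λ] X)
    (hpi : p ∘ₗ i = LinearMap.id) : PdLE Λ X n :=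
  Retract.hasProjectiveDimensionLT (X := ModuleCat.of Λ X) (Y := ModuleCat.of Λ Y)
    { i := ModuleCat.ofHom i
      r := ModuleCat.ofHom p
      retract := by rw [← ModuleCat.ofHom_comp, hpi]; rfl } (n + 1)

lemma of_equiv (h : PdLE Λ X n) (e : X ≃ₗ[Λ] Y) : PdLE Λ Y n :=
  h.of_retract e.symm e (by ext; simp)

lemma fst (h : PdLE Λ (X × Y) n) : PdLE Λ X n :=
  h.of_retract (.inl Λ X Y) (.fst Λ X Y) (LinearMap.fst_comp_inl Λ X Y)

end PdLE

namespace ShortExact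

lemma pdLE_right (h : ShortExact Λ X Y Z) (hX : PdLE Λ X n) (hY : PdLE Λ Y (n + 1)) :
    PdLE Λ Z (n + 1) := by
  obtain ⟨f, g, hf, hfg, hg⟩ := h
  exact (shortExact_ofHom f g hf hfg hg).hasProjectiveDimensionLT_X₃ (n + 1) hX hY

lemma pdLE_mid (h : ShortExact Λ X Y Z) (hX : PdLE Λ X n) (hZ : PdLE Λ Z n) : PdLE Λ Y n := by
  obtain ⟨f, g, hf, hfg, hg⟩ := h
  exact (shortExact_ofHom f g hf hfg hg).hasProjectiveDimensionLT_X₂ (n + 1) hX hZ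

lemma pdLE_left (h : ShortExact Λ X Y Z) (hY : PdLE Λ Y n) (hZ : PdLE Λ Z (n + 1)) :
    PdLE Λ X n := by
  obtain ⟨f, g, hf, hfg, hg⟩ := h
  exact (shortExact_ofHom f g hf hfg hg).hasProjectiveDimensionLT_X₁ (n + 1) hY hZ

lemma pdLE_succ_iff [Module.Projective Λ P] (h : ShortExact Λ X P Z) :
    PdLE Λ Z (n + 1) ↔ PdLE Λ X n :=
  ⟨fun hZ => h.pdLE_left (.of_projective n) hZ, fun hX => h.pdLE_right hX (.of_projective _)⟩

end ShortExact

lemma PdLE.prod (hX : PdLE Λ X n) (hY : PdLE Λ Y n) : PdLE Λ (X × Y) n :=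
  ShortExact.inl_snd.pdLE_mid hX hY

lemma PdLE.pi {ι : Type} [Finite ι] {M : ι → Type u} [∀ i, AddCommGroup (M i)]
    [∀ i, Module Λ (M i)] (h : ∀ i, PdLE Λ (M i) n) : PdLE Λ (∀ i, M i) n := by
  induction ι using Finite.induction_empty_option with
  | of_equiv e ih => exact (ih fun i => h (e i)).of_equiv (LinearEquiv.piCongrLeft Λ M e)
  | h_empty => exact .of_projective n
  | h_option ih =>
    exact ((h none).prod (ih fun i => h (some i))).of_equiv (LinearEquiv.piOptionEquivProd Λ).symm

lemma StabIso.pdLE (h : StabIso Λ X Y) (hX : PdLE Λ X n) : PdLE Λ Y n := by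
  obtain ⟨P, Q, ⟨_, _⟩, ⟨_, _⟩, ⟨e⟩⟩ := h
  exact ((hX.prod (.of_projective n)).of_equiv e).fst

lemma projDimLE_iff [IsNoetherianRing Λ] (n : ℕ) (M : ModuleCat.{u} Λ) [Module.Finite Λ M] :
    ProjDimLE Λ n M ↔ PdLE Λ M n := by
  induction n generalizing M with
  | zero => exact pdLE_zero_iff.symm
  | succ n ih =>
    constructor
    · rintro ⟨P, g, _, _, hg, h⟩
      exact (ShortExact.of_surjective g hg).pdLE_succ_iff.2 ((ih _).1 h)
    · intro h
      obtain ⟨k, g, hg⟩ := Module.Finite.exists_fin' Λ M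
      exact ⟨.of Λ (Fin k → Λ), g, inferInstanceAs (Module.Projective Λ (Fin k → Λ)),
        inferInstanceAs (Module.Finite Λ (Fin k → Λ)), hg,
        (ih _).2 ((ShortExact.of_surjective g hg).pdLE_succ_iff.1 h)⟩

open Abelian in
lemma ext_precomp_fst_surjective (h : U →ₗ[Λ] V × P) (g : (V × P) →ₗ[Λ] Z)
    (hh : Function.Injective h) (hhg : Function.Exact h g) (hg : Function.Surjective g)
    (hP : PdLE Λ P n) (hZ : PdLE Λ Z n) [HasExt.{u} (ModuleCat.{u} Λ)] (C : ModuleCat.{u} Λ)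
    {q : ℕ} (hq : n < q) :
    Function.Surjective fun y : Ext (ModuleCat.of Λ V) C q =>
      (Ext.mk₀ (ModuleCat.ofHom (LinearMap.fst Λ V P ∘ₗ h))).comp y (zero_add q) := by
  intro y
  obtain ⟨w, hw⟩ : ∃ w : Ext (ModuleCat.of Λ (V × P)) C q,
      (Ext.mk₀ (ModuleCat.ofHom h)).comp w (zero_add q) = y :=
    Ext.contravariant_sequence_exact₁ (shortExact_ofHom h g hh hhg hg) C y (add_comm 1 q)
      (Ext.eq_zero_of_hasProjectiveDimensionLT _ (n + 1) (by omega))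
  have hwP : (Ext.mk₀ (ModuleCat.ofHom (.inr Λ V P))).comp w (zero_add q) = 0 :=
    Ext.eq_zero_of_hasProjectiveDimensionLT _ (n + 1) hq
  have hsplit : ModuleCat.ofHom h =
      ModuleCat.ofHom (.fst Λ V P ∘ₗ h) ≫ ModuleCat.ofHom (.inl Λ V P) +
        ModuleCat.ofHom (.snd Λ V P ∘ₗ h) ≫ ModuleCat.ofHom (.inr Λ V P) := by
    ext u : 2
    change h u = ((h u).1, 0) + (0, (h u).2)
    simp
  refine ⟨(Ext.mk₀ (ModuleCat.ofHom (.inl Λ V P))).comp w (zero_add q), ?_⟩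
  rw [← hw, hsplit, Ext.mk₀_add, Ext.add_comp, ← Ext.mk₀_comp_mk₀, ← Ext.mk₀_comp_mk₀,
    Ext.comp_assoc_of_second_deg_zero, Ext.comp_assoc_of_second_deg_zero, hwP, Ext.comp_zero,
    add_zero]

open Abelian in
lemma ext_eq_zero_of_isNilpotent {C D : ModuleCat.{u} Λ} [HasExt.{u} (ModuleCat.{u} Λ)] {q : ℕ}
    {f : Module.End Λ D} (hf : IsNilpotent f)
    (hsurj : Function.Surjective fun y : Ext D C q =>
      (Ext.mk₀ (ModuleCat.ofHom f)).comp y (zero_add q)) (y : Ext D C q) : y = 0 := by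
  have hpow (k : ℕ) : Function.Surjective fun y : Ext D C q =>
      (Ext.mk₀ (ModuleCat.ofHom (f ^ k))).comp y (zero_add q) := by
    induction k with
    | zero => exact fun y => ⟨y, y.mk₀_id_comp⟩
    | succ k ih =>
      convert hsurj.comp ih using 2 with y
      rw [pow_succ, Module.End.mul_eq_comp, ModuleCat.ofHom_comp, ← Ext.mk₀_comp_mk₀,
        Ext.comp_assoc_of_second_deg_zero]
      rfl
  obtain ⟨k, hk⟩ := hf
  obtain ⟨z, rfl⟩ := hpow k y
  change (Ext.mk₀ (ModuleCat.ofHom (f ^ k))).comp z (zero_add q) = 0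
  rw [hk, ModuleCat.ofHom_zero, Ext.mk₀_zero, Ext.zero_comp]

/-- For `q > n`, the nilpotent endomorphism `fst ∘ h` of `U` acts surjectively on `Ext^q(U, C)`,
which therefore vanishes. -/
lemma PdLE.of_isNilpotent_fst_comp (h : U →ₗ[Λ] U × P) (g : (U × P) →ₗ[Λ] Z)
    (hh : Function.Injective h) (hhg : Function.Exact h g) (hg : Function.Surjective g)
    (hP : PdLE Λ P n) (hZ : PdLE Λ Z n)
    (hnil : IsNilpotent (LinearMap.fst Λ U P ∘ₗ h : Module.End Λ U)) : PdLE Λ U n := by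
  have := hasExt_of_enoughProjectives.{u} (ModuleCat.{u} Λ)
  exact (hasProjectiveDimensionLT_iff _ _).2 fun q hq C y => ext_eq_zero_of_isNilpotent hnil
    (ext_precomp_fst_surjective h g hh hhg hg hP hZ C hq) y

/-- By Fitting's lemma, `U` is the sum of a part `V` on which the first component of `h` is
nilpotent and a part on which it is invertible. The latter cancels in the cokernel. -/
lemma exists_nilpotent_reduction [IsNoetherian Λ U] [IsArtinian Λ U] (h : U →ₗ[Λ] U × P)
    (g : (U × P) →ₗ[Λ] Z) (hh : Function.Injective h) (hhg : Function.Exact h g)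
    (hg : Function.Surjective g) :
    ∃ (V : Submodule Λ U) (p : U →ₗ[Λ] V) (h₀ : V →ₗ[Λ] V × P) (g₀ : (V × P) →ₗ[Λ] Z),
      p ∘ₗ V.subtype = LinearMap.id ∧ Function.Injective h₀ ∧ Function.Exact h₀ g₀ ∧
      Function.Surjective g₀ ∧ IsNilpotent (LinearMap.fst Λ V P ∘ₗ h₀ : Module.End Λ V) := by
  let f : Module.End Λ U := LinearMap.fst Λ U P ∘ₗ h
  obtain ⟨n, hn, hcompl, hker⟩ := exists_fitting_pow f
  set V := LinearMap.ker (f ^ n)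
  let f₀ : Module.End Λ V := f.restrict fun u hu => (hker u).2 hu
  let h₀ : V →ₗ[Λ] V × P := f₀.prod (LinearMap.snd Λ U P ∘ₗ h ∘ₗ V.subtype)
  have hh₀ (v : V) : V.subtype.prodMap LinearMap.id (h₀ v) = h v := rfl
  refine ⟨V, V.projectionOnto _ hcompl, h₀, g ∘ₗ V.subtype.prodMap LinearMap.id,
    V.projectionOnto_comp_subtype hcompl, fun u v huv => ?_, fun x => ⟨fun hx => ?_, ?_⟩,
    fun z => ?_, n, ?_⟩
  · exact Subtype.ext (hh (by rw [← hh₀, huv, hh₀]))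
  · obtain ⟨u, hu⟩ := (hhg _).1 hx
    have hfu : f u = x.1 := congrArg Prod.fst hu
    refine ⟨⟨u, (hker u).1 (hfu ▸ x.1.2)⟩, Prod.ext (Subtype.ext hfu) ?_⟩
    exact (congrArg Prod.snd hu :)
  · rintro ⟨v, rfl⟩
    exact hhg.apply_apply_eq_zero (v : U)
  · obtain ⟨⟨u, a⟩, rfl⟩ := hg z
    obtain ⟨v, _, hv, ⟨y, rfl⟩, rfl⟩ :=
      Submodule.codisjoint_iff_exists_add_eq.1 hcompl.codisjoint u
    obtain ⟨m, rfl⟩ := Nat.exists_eq_succ_of_ne_zero hn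
    let c := h ((f ^ m) y)
    have hc : c.1 = (f ^ (m + 1)) y := by
      rw [pow_succ', Module.End.mul_apply]
      rfl
    refine ⟨(⟨v, hv⟩, a - c.2), ?_⟩
    have hsub : (v, a - c.2) = (v + (f ^ (m + 1)) y, a) - c :=
      Prod.ext (by rw [Prod.fst_sub, hc, add_sub_cancel_right]) rfl
    change g (v, a - c.2) = _
    rw [hsub, map_sub, hhg.apply_apply_eq_zero, sub_zero]
  · change f₀ ^ n = 0
    rw [Module.End.pow_restrict n]
    exact LinearMap.ext fun v => Subtype.ext v.2

lemma ShortExact.exists_retract_pdLE [IsNoetherian Λ U] [IsArtinian Λ U] [Module.Projective Λ P]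
    (h : ShortExact Λ U (U × P) Z) {r : ℕ} (hZ : PdLE Λ Z r) :
    ∃ (V : Submodule Λ U) (p : U →ₗ[Λ] V), p ∘ₗ V.subtype = LinearMap.id ∧
      PdLE Λ V r ∧ ∀ d, PdLE Λ V d → PdLE Λ Z (d + 1) := by
  obtain ⟨h, g, hh, hhg, hg⟩ := h
  obtain ⟨V, p, h₀, g₀, hp, hh₀, hhg₀, hg₀, hnil⟩ := exists_nilpotent_reduction h g hh hhg hg
  refine ⟨V, p, hp, .of_isNilpotent_fst_comp h₀ g₀ hh₀ hhg₀ hg₀ (.of_projective r) hZ hnil,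
    fun d hd => ?_⟩
  have hses : ShortExact Λ V (V × P) Z := ⟨h₀, g₀, hh₀, hhg₀, hg₀⟩
  exact hses.pdLE_right hd ((hd.prod (.of_projective d)).mono d.le_succ)

end ProjectiveDimension

end FinitisticDimension

namespace InAdd

variable {Λ : Type u} [Ring Λ] {M N X Y : ModuleCat.{u} Λ}

lemma of_finite (ι : Type*) [Finite ι] (i : X →ₗ[Λ] (ι → N)) (p : (ι → N) →ₗ[Λ] X)
    (hpi : p ∘ₗ i = LinearMap.id) : InAdd Λ N X := by
  obtain ⟨k, ⟨e⟩⟩ := Finite.exists_equiv_fin ι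
  let E := LinearEquiv.funCongrLeft Λ N e
  exact ⟨k, E.symm ∘ₗ i, p ∘ₗ E, LinearMap.ext fun x =>
    (congrArg p (E.apply_symm_apply (i x))).trans (LinearMap.congr_fun hpi x)⟩

lemma of_retract (h : InAdd Λ N Y) (i : X →ₗ[Λ] Y) (p : Y →ₗ[Λ] X)
    (hpi : p ∘ₗ i = LinearMap.id) : InAdd Λ N X := by
  obtain ⟨k, j, q, hqj⟩ := h
  refine ⟨k, j ∘ₗ i, p ∘ₗ q, ?_⟩
  rw [LinearMap.comp_assoc, ← LinearMap.comp_assoc i, hqj, LinearMap.id_comp, hpi]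

lemma of_equiv (h : InAdd Λ N Y) (e : X ≃ₗ[Λ] Y) : InAdd Λ N X :=
  h.of_retract e e.symm (by ext; simp)

lemma refl (N : ModuleCat.{u} Λ) : InAdd Λ N N :=
  of_finite Unit (LinearEquiv.funUnique Unit Λ N).symm (LinearEquiv.funUnique Unit Λ N)
    (by ext; simp)

lemma of_equiv_prod (e : M ≃ₗ[Λ] X × Y) : InAdd Λ M X :=
  ((refl M).of_equiv (X := .of Λ (X × Y)) e.symm).of_retract (.inl Λ X Y) (.fst Λ X Y)
    (LinearMap.fst_comp_inl Λ X Y)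

lemma of_equiv_pi {ι : Type} {N : ι → ModuleCat.{u} Λ} (e : M ≃ₗ[Λ] ∀ i, N i) (i : ι) :
    InAdd Λ M (N i) := by
  classical
  exact ((refl M).of_equiv (X := .of Λ (∀ i, N i)) e.symm).of_retract
    (LinearMap.single Λ (fun i => N i) i) (LinearMap.proj i) (LinearMap.proj_comp_single_same Λ _ i)

lemma pi {κ : Type} [Finite κ] {X : κ → ModuleCat.{u} Λ} (h : ∀ a, InAdd Λ N (X a)) :
    InAdd Λ N (.of Λ (∀ a, X a)) := by
  choose k i p hpi using h
  refine of_finite (Σ a, Fin (k a))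
    (LinearMap.pi fun s => LinearMap.proj s.2 ∘ₗ i s.1 ∘ₗ LinearMap.proj s.1)
    (LinearMap.pi fun a => p a ∘ₗ LinearMap.pi fun b => LinearMap.proj (⟨a, b⟩ : Σ a, Fin (k a))) ?_
  exact LinearMap.ext fun x => funext fun a => LinearMap.congr_fun (hpi a) (x a)

lemma prod (hX : InAdd Λ N X) (hY : InAdd Λ N Y) : InAdd Λ N (.of Λ (X × Y)) := by
  obtain ⟨k, i, p, hpi⟩ := hX
  obtain ⟨l, j, q, hqj⟩ := hY
  let e := LinearEquiv.sumArrowLequivProdArrow (Fin k) (Fin l) Λ N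
  refine of_finite (Fin k ⊕ Fin l) (e.symm ∘ₗ i.prodMap j) (p.prodMap q ∘ₗ e) ?_
  refine LinearMap.ext fun x => ?_
  simpa using Prod.ext (LinearMap.congr_fun hpi x.1) (LinearMap.congr_fun hqj x.2)

lemma trans (hM : InAdd Λ N M) (hX : InAdd Λ M X) : InAdd Λ N X := by
  obtain ⟨k, i, p, hpi⟩ := hX
  exact (pi (X := fun _ : Fin k => M) fun _ => hM).of_retract i p hpi

lemma of_projective [Module.Finite Λ X] [Module.Projective Λ X] :
    InAdd Λ (.of Λ Λ) X := by
  obtain ⟨n, g, hg⟩ := Module.Finite.exists_fin' Λ X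
  obtain ⟨l, hl⟩ := Module.projective_lifting_property g LinearMap.id hg
  exact ⟨n, l, g, hl⟩

lemma finite [Module.Finite Λ N] (h : InAdd Λ N X) : Module.Finite Λ X := by
  obtain ⟨k, i, p, hpi⟩ := h
  exact Module.Finite.of_surjective p fun x => ⟨i x, LinearMap.congr_fun hpi x⟩

lemma exists_equiv_prod (h : InAdd Λ N X) :
    ∃ (k : ℕ) (Y : ModuleCat.{u} Λ), Nonempty ((Fin k → N) ≃ₗ[Λ] X × Y) := by
  obtain ⟨k, i, p, hpi⟩ := h
  exact ⟨k, .of Λ (LinearMap.ker p), ⟨((LinearMap.exact_subtype_ker_map p).splitSurjectiveEquiv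
    Subtype.val_injective ⟨i, hpi⟩).1 ≪≫ₗ .prodComm Λ _ _⟩⟩

end InAdd

namespace FinitisticDimension

section KrullSchmidt

/-- The direct sum of `a i` copies of `N i` over all `i`, as functions on the set of copies. -/
abbrev sumOfCopies {Λ : Type u} [Ring Λ] {ι : Type} (N : ι → ModuleCat.{u} Λ) (a : ι → ℕ) :
    ModuleCat.{u} Λ :=
  .of Λ (∀ s : Σ i, Fin (a i), N s.1)

variable {Λ : Type u} [Ring Λ] {ι : Type}

lemma nonempty_sumOfCopies_add_equiv (N : ι → ModuleCat.{u} Λ) (a b : ι → ℕ) :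
    Nonempty (sumOfCopies N (a + b) ≃ₗ[Λ] sumOfCopies N a × sumOfCopies N b) := by
  let e : (Σ i, Fin ((a + b) i)) ≃ (Σ i, Fin (a i)) ⊕ (Σ i, Fin (b i)) :=
    (Equiv.sigmaCongrRight fun _ => finSumFinEquiv.symm).trans
      (Equiv.sigmaSumDistrib (fun i => Fin (a i)) fun i => Fin (b i))
  exact ⟨LinearEquiv.piCongrLeft' Λ (fun s : Σ i, Fin ((a + b) i) => (N s.1 : Type u)) e ≪≫ₗ
    LinearEquiv.sumPiEquivProdPi Λ _ _ _⟩

lemma exists_equiv_sumOfCopies {κ : Type} [Finite κ] (N : ι → ModuleCat.{u} Λ)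
    (E : κ → ModuleCat.{u} Λ) (h : ∀ j, ∃ i, Nonempty (E j ≃ₗ[Λ] N i)) :
    ∃ a, Nonempty ((∀ j, E j) ≃ₗ[Λ] sumOfCopies N a) := by
  choose σ hσ using h
  let e : (Σ i, Fin (Nat.card {j // σ j = i})) ≃ κ :=
    (Equiv.sigmaCongrRight fun i => (Finite.equivFin {j // σ j = i}).symm).trans
      (Equiv.sigmaFiberEquiv σ)
  have he (s) : Nonempty (E (e s) ≃ₗ[Λ] N s.1) := by
    have hs : σ (e s) = s.1 := ((Finite.equivFin {j // σ j = s.1}).symm s.2).2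
    exact hs ▸ hσ (e s)
  exact ⟨_, ⟨(LinearEquiv.piCongrLeft Λ (fun j => (E j : Type u)) e).symm ≪≫ₗ
    LinearEquiv.piCongrRight fun s => (he s).some⟩⟩

lemma bijective_of_leftInverse_of_isLocalRing {X Y : Type*} [AddCommGroup X] [Module Λ X]
    [AddCommGroup Y] [Module Λ Y] [Nontrivial X] [IsLocalRing (Module.End Λ Y)] (j : X →ₗ[Λ] Y)
    (q : Y →ₗ[Λ] X) (hqj : q ∘ₗ j = LinearMap.id) : Function.Bijective j := by
  have hinv : Function.LeftInverse q j := LinearMap.congr_fun hqj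
  let ε : Module.End Λ Y := j ∘ₗ q
  have hidem : ε * ε = ε := LinearMap.ext fun y => congrArg j (hinv (q y))
  refine ⟨hinv.injective, fun y => ?_⟩
  rcases IsLocalRing.isUnit_or_isUnit_of_add_one (add_sub_cancel ε 1) with hε | hε
  · have hone : ε = 1 := hε.mul_left_cancel (hidem.trans (mul_one ε).symm)
    exact ⟨q y, LinearMap.congr_fun hone y⟩
  · have hzero : ε = 0 := hε.mul_left_cancel (by rw [sub_mul, one_mul, hidem, sub_self, mul_zero])
    obtain ⟨x, hx⟩ := exists_ne (0 : X)
    have hjx : j x = 0 := by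
      rw [← hinv x]
      exact LinearMap.congr_fun hzero (j x)
    exact absurd ((map_eq_zero_iff j hinv.injective).1 hjx) hx

lemma nonempty_equiv_of_retract_pi [Finite ι] (N : ι → ModuleCat.{u} Λ)
    (hN : ∀ i, IsLocalRing (Module.End Λ (N i))) (X : ModuleCat.{u} Λ)
    (hX : IsLocalRing (Module.End Λ X)) (i : X →ₗ[Λ] (∀ a, N a)) (p : (∀ a, N a) →ₗ[Λ] X)
    (hpi : p ∘ₗ i = LinearMap.id) : ∃ a, Nonempty (X ≃ₗ[Λ] N a) := by
  classical
  have := Fintype.ofFinite ι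
  let j (a : ι) : X →ₗ[Λ] N a := LinearMap.proj a ∘ₗ i
  let q (a : ι) : N a →ₗ[Λ] X := p ∘ₗ LinearMap.single Λ (fun a => N a) a
  have hsum : ∑ a, (q a ∘ₗ j a : Module.End Λ X) = 1 := by
    refine LinearMap.ext fun x => ?_
    rw [LinearMap.sum_apply]
    change ∑ a, p (Pi.single a (i x a)) = x
    rw [← map_sum, Finset.univ_sum_single]
    exact LinearMap.congr_fun hpi x
  obtain ⟨a, -, v, hv⟩ := IsLocalRing.exists_of_isUnit_sum (hsum ▸ isUnit_one)
  have hvqj : ((v⁻¹ : (Module.End Λ X)ˣ) : Module.End Λ X) * (q a ∘ₗ j a) = 1 := by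
    rw [← hv, Units.inv_mul]
  have : Nontrivial X := not_subsingleton_iff_nontrivial.1 fun _ =>
    not_subsingleton (Module.End Λ X) inferInstance
  have := hN a
  exact ⟨a, ⟨.ofBijective (j a) (bijective_of_leftInverse_of_isLocalRing (j a)
    ((v⁻¹ : (Module.End Λ X)ˣ).1 ∘ₗ q a) hvqj)⟩⟩

lemma exists_isCompl_ne_top_of_not_isLocalRing {M : Type*} [AddCommGroup M] [Module Λ M]
    [IsNoetherian Λ M] [IsArtinian Λ M] [Nontrivial M]
    (hM : ¬ IsLocalRing (Module.End Λ M)) :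
    ∃ K L : Submodule Λ M, IsCompl K L ∧ K ≠ ⊤ ∧ L ≠ ⊤ := by
  obtain ⟨f, hf, hf'⟩ : ∃ f : Module.End Λ M, ¬ IsUnit f ∧ ¬ IsUnit (1 - f) := by
    contrapose! hM
    exact .of_isUnit_or_isUnit_one_sub_self fun f => or_iff_not_imp_left.2 (hM f)
  obtain ⟨n, hn, hcompl, -⟩ := exists_fitting_pow f
  refine ⟨_, _, hcompl, fun hker => ?_, fun hrange => ?_⟩
  · exact hf' (IsNilpotent.isUnit_one_sub ⟨n, LinearMap.ker_eq_top.1 hker⟩)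
  · have hker : LinearMap.ker (f ^ n) = ⊥ := by simpa [hrange] using hcompl.inf_eq_bot
    exact hf ((isUnit_pow_iff hn).1 ((Module.End.isUnit_iff _).2
      ⟨LinearMap.ker_eq_bot.1 hker, LinearMap.range_eq_top.1 hrange⟩))

lemma exists_equiv_pi_isLocalRing (M : ModuleCat.{u} Λ) [IsNoetherian Λ M] [IsArtinian Λ M] :
    ∃ (ι : Type) (_ : Finite ι) (N : ι → ModuleCat.{u} Λ),
      (∀ i, IsLocalRing (Module.End Λ (N i))) ∧ Nonempty (M ≃ₗ[Λ] ∀ i, N i) := by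
  induction hlen : Module.length Λ M using WellFoundedLT.induction generalizing M with
  | ind n ih =>
  subst hlen
  rcases subsingleton_or_nontrivial M with hM | hM
  · exact ⟨Empty, inferInstance, Empty.elim, nofun, ⟨.ofSubsingleton _ _⟩⟩
  by_cases hloc : IsLocalRing (Module.End Λ M)
  · exact ⟨Unit, inferInstance, fun _ => M, fun _ => hloc, ⟨(LinearEquiv.funUnique Unit Λ M).symm⟩⟩
  obtain ⟨K, L, hKL, hK, hL⟩ := exists_isCompl_ne_top_of_not_isLocalRing hloc
  obtain ⟨ι, _, N, hN, ⟨e⟩⟩ := ih _ (Submodule.length_lt hK) (.of Λ K) rfl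
  obtain ⟨κ, _, N', hN', ⟨e'⟩⟩ := ih _ (Submodule.length_lt hL) (.of Λ L) rfl
  let W : ι ⊕ κ → ModuleCat.{u} Λ := Sum.elim N N'
  exact ⟨ι ⊕ κ, inferInstance, W, Sum.rec hN hN',
    ⟨(Submodule.prodEquivOfIsCompl K L hKL).symm ≪≫ₗ e.prodCongr e' ≪≫ₗ
      (LinearEquiv.sumPiEquivProdPi Λ ι κ fun s => (W s : Type u)).symm⟩⟩

lemma exists_sumOfCopies_of_inAdd [IsArtinianRing Λ] (M : ModuleCat.{u} Λ) [Module.Finite Λ M] :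
    ∃ (ι : Type) (_ : Finite ι) (N : ι → ModuleCat.{u} Λ), (∀ i, InAdd Λ M (N i)) ∧
      ∀ X, InAdd Λ M X → ∃ a, Nonempty (X ≃ₗ[Λ] sumOfCopies N a) := by
  obtain ⟨ι, _, N, hN, ⟨e⟩⟩ := exists_equiv_pi_isLocalRing M
  refine ⟨ι, ‹_›, N, InAdd.of_equiv_pi e, fun X hX => ?_⟩
  have := hX.finite
  obtain ⟨κ, _, E, hE, ⟨eX⟩⟩ := exists_equiv_pi_isLocalRing X
  have hretract (j : κ) : ∃ i, Nonempty (E j ≃ₗ[Λ] N i) := by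
    obtain ⟨k, i, p, hpi⟩ := hX.trans (InAdd.of_equiv_pi eX j)
    let F : (Fin k → M) ≃ₗ[Λ] ∀ s : (Σ _ : Fin k, ι), N s.2 :=
      LinearEquiv.piCongrRight (fun _ => e) ≪≫ₗ
        (LinearEquiv.piCurry Λ fun (_ : Fin k) (b : ι) => (N b : Type u)).symm
    obtain ⟨s, hs⟩ := nonempty_equiv_of_retract_pi (fun s : (Σ _ : Fin k, ι) => N s.2)
      (fun s => hN s.2) (E j) (hE j) (F ∘ₗ i) (p ∘ₗ F.symm)
      (LinearMap.ext fun x => by simpa using LinearMap.congr_fun hpi x)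
    exact ⟨s.2, hs⟩
  obtain ⟨a, ⟨eE⟩⟩ := exists_equiv_sumOfCopies N E hretract
  exact ⟨a, ⟨eX ≪≫ₗ eE⟩⟩

end KrullSchmidt

section StableAdd

variable {Λ : Type u} [Ring Λ] {N N' X Y : ModuleCat.{u} Λ}

/-- `X` belongs to `add (N ⊕ Λ)`. In contrast to `add N`, this class is closed under stable
isomorphism, so that membership of a syzygy does not depend on the projective resolution. -/
def StabAdd (N X : ModuleCat.{u} Λ) : Prop :=
  InAdd Λ (.of Λ (N × Λ)) X

lemma _root_.InAdd.stabAdd (h : InAdd Λ N X) : StabAdd N X :=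
  (InAdd.of_equiv_prod (Y := .of Λ Λ) (.refl Λ _)).trans h

namespace StabAdd

lemma of_projective [Module.Finite Λ X] [Module.Projective Λ X] : StabAdd N X :=
  (InAdd.of_equiv_prod (M := .of Λ (N × Λ)) (X := .of Λ Λ) (.prodComm Λ N Λ)).trans .of_projective

lemma prod (hX : StabAdd N X) (hY : StabAdd N Y) : StabAdd N (.of Λ (X × Y)) :=
  InAdd.prod hX hY

lemma fst (h : StabAdd N (.of Λ (X × Y))) : StabAdd N X :=
  InAdd.of_retract h (.inl Λ X Y) (.fst Λ X Y) (LinearMap.fst_comp_inl Λ X Y)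

lemma snd (h : StabAdd N (.of Λ (X × Y))) : StabAdd N Y :=
  InAdd.of_retract h (.inr Λ X Y) (.snd Λ X Y) (LinearMap.snd_comp_inr Λ X Y)

lemma of_stabIso (hX : StabAdd N X) (h : StabIso Λ X Y) : StabAdd N Y := by
  obtain ⟨P, Q, ⟨_, _⟩, ⟨_, _⟩, ⟨e⟩⟩ := h
  exact fst (Y := Q) (InAdd.of_equiv (hX.prod (Y := P) .of_projective) e.symm)

lemma trans (hN : StabAdd N' N) (h : StabAdd N X) : StabAdd N' X :=
  InAdd.trans (hN.prod (Y := .of Λ Λ) .of_projective) h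

end StabAdd

end StableAdd

section Syzygies

variable {Λ : Type u} [Ring Λ]

open Classical in
/-- A first syzygy of a finitely generated module: the kernel of some epimorphism from a finitely
generated free module, so that it is not minimal and only canonical up to stable isomorphism. On
modules which are not finitely generated, it takes the junk value `M`. -/
noncomputable def syz (M : ModuleCat.{u} Λ) : ModuleCat.{u} Λ :=
  if h : Module.Finite Λ M then
    .of Λ (LinearMap.ker (@Module.Finite.exists_fin' Λ M _ _ _ h).choose_spec.choose)
  else M

/-- The `n`-th syzygy of a finitely generated module, obtained by iterating `syz`. -/
noncomputable def nsyz : ℕ → ModuleCat.{u} Λ → ModuleCat.{u} Λ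
  | 0, M => M
  | n + 1, M => syz (nsyz n M)

variable {N K P W X Y Z : ModuleCat.{u} Λ}

lemma exists_shortExact_syz (M : ModuleCat.{u} Λ) [h : Module.Finite Λ M] :
    ∃ n : ℕ, ShortExact Λ (syz M) (Fin n → Λ) M := by
  rw [syz, dif_pos h]
  exact ⟨_, .of_surjective _ (@Module.Finite.exists_fin' Λ M _ _ _ h).choose_spec.choose_spec⟩

lemma ShortExact.stabIso_syz [Module.Finite Λ P] [Module.Projective Λ P] [Module.Finite Λ Y]
    (h : ShortExact Λ K P X) (hXY : StabIso Λ X Y) : StabIso Λ K (syz Y) := by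
  obtain ⟨n, hn⟩ := exists_shortExact_syz Y
  exact hXY.syzygy h hn

lemma StabIso.syz [Module.Finite Λ X] [Module.Finite Λ Y] (h : StabIso Λ X Y) :
    StabIso Λ (syz X) (syz Y) := by
  obtain ⟨n, hn⟩ := exists_shortExact_syz X
  exact hn.stabIso_syz (P := .of Λ (Fin n → Λ)) h

lemma stabIso_syz_prod [Module.Finite Λ X] [Module.Finite Λ Y] :
    StabIso Λ (syz X × syz Y) (syz (.of Λ (X × Y))) := by
  obtain ⟨n, hn⟩ := exists_shortExact_syz X
  obtain ⟨m, hm⟩ := exists_shortExact_syz Y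
  exact (hn.prod hm).stabIso_syz (K := .of Λ (syz X × syz Y))
    (P := .of Λ ((Fin n → Λ) × (Fin m → Λ))) (X := .of Λ (X × Y)) .refl

variable [IsNoetherianRing Λ]

instance finite_syz [Module.Finite Λ X] : Module.Finite Λ (syz X) := by
  obtain ⟨n, h⟩ := exists_shortExact_syz X
  exact h.finite_left

instance finite_nsyz (n : ℕ) [Module.Finite Λ X] : Module.Finite Λ (nsyz n X) := by
  induction n with
  | zero => assumption
  | succ n ih => exact finite_syz

lemma StabIso.nsyz [Module.Finite Λ X] [Module.Finite Λ Y] (h : StabIso Λ X Y) (n : ℕ) :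
    StabIso Λ (nsyz n X) (nsyz n Y) := by
  induction n with
  | zero => exact h
  | succ n ih => exact ih.syz

lemma stabIso_nsyz_prod [Module.Finite Λ X] [Module.Finite Λ Y] (n : ℕ) :
    StabIso Λ (nsyz n X × nsyz n Y) (nsyz n (.of Λ (X × Y))) := by
  induction n with
  | zero => exact .refl
  | succ n ih => exact stabIso_syz_prod.trans (ih.syz (X := .of Λ (nsyz n X × nsyz n Y)))

lemma pdLE_nsyz_iff (n : ℕ) {k : ℕ} [Module.Finite Λ X] :
    PdLE Λ (nsyz n X) k ↔ PdLE Λ X (k + n) := by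
  induction n generalizing k with
  | zero => rfl
  | succ n ih =>
    obtain ⟨m, hm⟩ := exists_shortExact_syz (nsyz n X)
    rw [← add_assoc, add_right_comm, ← ih]
    exact hm.pdLE_succ_iff.symm

lemma projective_nsyz [Module.Finite Λ X] {n : ℕ} (h : PdLE Λ X n) :
    Module.Projective Λ (nsyz n X) :=
  pdLE_zero_iff.1 ((pdLE_nsyz_iff n).2 (by rwa [zero_add]))

lemma stabAdd_nsyz_prod_iff [Module.Finite Λ X] [Module.Finite Λ Y] (n : ℕ) :
    StabAdd N (nsyz n (.of Λ (X × Y))) ↔ StabAdd N (nsyz n X) ∧ StabAdd N (nsyz n Y) := by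
  constructor
  · intro h
    have h' : StabAdd N (.of Λ (nsyz n X × nsyz n Y)) := h.of_stabIso (stabIso_nsyz_prod n).symm
    exact ⟨h'.fst, h'.snd⟩
  · rintro ⟨hX, hY⟩
    exact (hX.prod hY).of_stabIso (stabIso_nsyz_prod n)

lemma stabAdd_nsyz_pi [Module.Finite Λ X] {n : ℕ} (h : StabAdd N (nsyz n X)) (k : ℕ) :
    StabAdd N (nsyz n (.of Λ (Fin k → X))) := by
  induction k with
  | zero =>
    have := projective_nsyz (X := .of Λ (Fin 0 → X)) (.of_projective n)
    exact .of_projective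
  | succ k ih =>
    refine ((stabAdd_nsyz_prod_iff n).2 ⟨h, ih⟩).of_stabIso (.nsyz (.of_equiv ?_) n)
    exact Fin.consLinearEquiv Λ fun _ => X

lemma StabAdd.nsyz [Module.Finite Λ N] (h : StabAdd N X) (n : ℕ) :
    StabAdd (nsyz n N) (nsyz n X) := by
  obtain ⟨k, Y, ⟨e⟩⟩ := InAdd.exists_equiv_prod h
  have : Module.Finite Λ (X × Y) := .equiv e
  have : Module.Finite Λ X := .of_surjective (LinearMap.fst Λ X Y) Prod.fst_surjective
  have : Module.Finite Λ Y := .of_surjective (LinearMap.snd Λ X Y) Prod.snd_surjective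
  have := projective_nsyz (X := .of Λ Λ) (.of_projective n)
  have hN : StabAdd (FinitisticDimension.nsyz n N) (FinitisticDimension.nsyz n (.of Λ (N × Λ))) :=
    (stabAdd_nsyz_prod_iff (Y := .of Λ Λ) n).2 ⟨(InAdd.refl _).stabAdd, .of_projective⟩
  exact ((stabAdd_nsyz_prod_iff n).1 ((stabAdd_nsyz_pi hN k).of_stabIso
    (.nsyz (Y := .of Λ (X × Y)) (.of_equiv e) n))).1

lemma ShortExact.nsyz [Module.Finite Λ Y] (h : ShortExact Λ X Y Z) (n : ℕ) :
    ∃ Y' Z' : ModuleCat.{u} Λ, Module.Finite Λ Y' ∧ Module.Finite Λ Z' ∧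
      ShortExact Λ (nsyz n X) Y' Z' ∧
      StabIso Λ Y' (FinitisticDimension.nsyz n Y) ∧
      StabIso Λ Z' (FinitisticDimension.nsyz n Z) := by
  have := h.finite_left
  have := h.finite_right
  induction n with
  | zero => exact ⟨Y, Z, ‹_›, ‹_›, h, .refl, .refl⟩
  | succ n ih =>
    obtain ⟨Y', Z', _, _, h', hY, hZ⟩ := ih
    obtain ⟨k, hk⟩ := exists_shortExact_syz (FinitisticDimension.nsyz n X)
    obtain ⟨l, hl⟩ := exists_shortExact_syz Z'
    obtain ⟨L, hL, hL'⟩ := h'.horseshoe hk hl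
    exact ⟨.of Λ L, FinitisticDimension.syz Z', hL'.finite_left, inferInstance, hL,
      hL'.stabIso_syz (K := .of Λ L) (P := .of Λ ((Fin k → Λ) × (Fin l → Λ))) hY, hZ.syz⟩

lemma ShortExact.stabIso_nsyz [Module.Finite Λ Y] (h : ShortExact Λ X Y Z) {r : ℕ}
    (hZ : PdLE Λ Z r) :
    StabIso Λ (FinitisticDimension.nsyz r X) (FinitisticDimension.nsyz r Y) := by
  have := h.finite_right
  obtain ⟨Y', Z', _, _, h', hY', hZ'⟩ := h.nsyz r
  have := projective_nsyz hZ
  have : Module.Projective Λ Z' := pdLE_zero_iff.1 (hZ'.symm.pdLE (.of_projective 0))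
  obtain ⟨e⟩ := h'.nonempty_equiv_prod
  exact StabIso.prod_projective.symm.trans ((StabIso.of_equiv e.symm).trans hY')

end Syzygies

section IgusaTodorov

variable {Λ : Type u} [Ring Λ]

lemma stabIso_nsyz_sumOfCopies_add [IsNoetherianRing Λ] {ι : Type} [Finite ι]
    (N : ι → ModuleCat.{u} Λ) [∀ i, Module.Finite Λ (N i)] (n : ℕ) (a b : ι → ℕ) :
    StabIso Λ (nsyz n (sumOfCopies N (a + b)))
      (nsyz n (sumOfCopies N a) × nsyz n (sumOfCopies N b)) := by
  obtain ⟨e⟩ := nonempty_sumOfCopies_add_equiv N a b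
  exact (StabIso.nsyz (Y := .of Λ (sumOfCopies N a × sumOfCopies N b)) (.of_equiv e) n).trans
    (stabIso_nsyz_prod n).symm

/-- The subgroup of the split Grothendieck group `ℤ^ι` of `add (⨁ N i)` consisting of the
differences `[X] - [Y]` for which `X` and `Y` have stably isomorphic `n`-th syzygies. -/
def stableKer [IsNoetherianRing Λ] {ι : Type} [Finite ι] (N : ι → ModuleCat.{u} Λ)
    [∀ i, Module.Finite Λ (N i)] (n : ℕ) : AddSubgroup (ι → ℤ) where
  carrier := {v | ∃ a b : ι → ℕ, (v = fun i => (a i : ℤ) - b i) ∧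
    StabIso Λ (nsyz n (sumOfCopies N a)) (nsyz n (sumOfCopies N b))}
  zero_mem' := ⟨0, 0, by ext; simp, .refl⟩
  add_mem' := by
    rintro _ _ ⟨a, b, rfl, h⟩ ⟨a', b', rfl, h'⟩
    refine ⟨a + a', b + b', by ext; simp; ring, ?_⟩
    exact (stabIso_nsyz_sumOfCopies_add N n a a').trans
      ((h.prod h').trans (stabIso_nsyz_sumOfCopies_add N n b b').symm)
  neg_mem' := by
    rintro _ ⟨a, b, rfl, h⟩
    exact ⟨b, a, by ext; simp, h.symm⟩

lemma exists_stableKer_le [IsNoetherianRing Λ] {ι : Type} [Finite ι] (N : ι → ModuleCat.{u} Λ)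
    [∀ i, Module.Finite Λ (N i)] : ∃ n, ∀ r, stableKer N r ≤ stableKer N n := by
  have hmono : Monotone fun n => AddSubgroup.toIntSubmodule (stableKer N n) := by
    refine monotone_nat_of_le_succ fun n => ?_
    rintro _ ⟨a, b, rfl, h⟩
    exact ⟨a, b, rfl, h.syz⟩
  obtain ⟨n, hn⟩ := monotone_stabilizes_iff_noetherian.2 inferInstance
    (⟨_, hmono⟩ : ℕ →o Submodule ℤ (ι → ℤ))
  exact ⟨n, fun r => (hmono (le_max_left r n)).trans (hn _ (le_max_right r n)).ge⟩

variable [IsArtinianRing Λ]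

lemma exists_stabIso_nsyz_prod (M : ModuleCat.{u} Λ) [Module.Finite Λ M] :
    ∃ n : ℕ, ∀ X Y : ModuleCat.{u} Λ, InAdd Λ M X → InAdd Λ M Y →
      ∀ r, StabIso Λ (nsyz r X) (nsyz r Y) → ∃ C : ModuleCat.{u} Λ, InAdd Λ M C ∧
        StabIso Λ (nsyz n (.of Λ (X × C))) (nsyz n (.of Λ (Y × C))) := by
  obtain ⟨ι, _, N, hN, hdec⟩ := exists_sumOfCopies_of_inAdd M
  have (i : ι) : Module.Finite Λ (N i) := (hN i).finite
  obtain ⟨n, hn⟩ := exists_stableKer_le N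
  refine ⟨n, fun X Y hX hY r h => ?_⟩
  have := hX.finite
  have := hY.finite
  obtain ⟨a, ⟨eX⟩⟩ := hdec X hX
  obtain ⟨b, ⟨eY⟩⟩ := hdec Y hY
  have hXa (k : ℕ) : StabIso Λ (nsyz k X) (nsyz k (sumOfCopies N a)) := .nsyz (.of_equiv eX) k
  have hYb (k : ℕ) : StabIso Λ (nsyz k Y) (nsyz k (sumOfCopies N b)) := .nsyz (.of_equiv eY) k
  obtain ⟨a', b', hab, h'⟩ := hn r ⟨a, b, rfl, (hXa r).symm.trans (h.trans (hYb r))⟩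
  have hsum : a + b' = b + a' := by
    funext i
    have := congrFun hab i
    simp only [Pi.add_apply] at this ⊢
    omega
  have hswap : StabIso Λ (nsyz n (sumOfCopies N a) × nsyz n (sumOfCopies N b'))
      (nsyz n (sumOfCopies N b) × nsyz n (sumOfCopies N b')) := by
    refine (stabIso_nsyz_sumOfCopies_add N n a b').symm.trans ?_
    rw [hsum]
    exact (stabIso_nsyz_sumOfCopies_add N n b a').trans (StabIso.refl.prod h')
  refine ⟨sumOfCopies N b', .pi fun s => hN s.1, ?_⟩
  exact (stabIso_nsyz_prod n).symm.trans (((hXa n).prod .refl).trans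
    (hswap.trans (((hYb n).symm.prod .refl).trans (stabIso_nsyz_prod n))))

lemma exists_pdLE_bound_of_inAdd (M : ModuleCat.{u} Λ) [Module.Finite Λ M] :
    ∃ d : ℕ, ∀ X : ModuleCat.{u} Λ, InAdd Λ M X → (∃ r, PdLE Λ X r) → PdLE Λ X d := by
  obtain ⟨ι, _, N, -, hdec⟩ := exists_sumOfCopies_of_inAdd M
  have hbound (i : ι) : ∃ d, (∃ r, PdLE Λ (N i) r) → PdLE Λ (N i) d := by
    by_cases h : ∃ r, PdLE Λ (N i) r
    · exact h.imp fun r hr _ => hr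
    · exact ⟨0, fun h' => absurd h' h⟩
  choose d hd using hbound
  obtain ⟨D, hD⟩ := (Set.finite_range d).bddAbove
  refine ⟨D, fun X hX ⟨r, hr⟩ => ?_⟩
  obtain ⟨a, ⟨e⟩⟩ := hdec X hX
  classical
  have hsummand (s : Σ i, Fin (a i)) : PdLE Λ (N s.1) r :=
    (hr.of_equiv e).of_retract (LinearMap.single Λ (fun s : Σ i, Fin (a i) => (N s.1 : Type u)) s)
      (LinearMap.proj s) (LinearMap.proj_comp_single_same Λ _ s)
  exact (PdLE.pi fun s => (hd s.1 ⟨r, hsummand s⟩).mono (hD ⟨s.1, rfl⟩)).of_equiv e.symm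

lemma ShortExact.pdLE_of_stabIso_nsyz {X Y Z : ModuleCat.{u} Λ} [Module.Finite Λ Y]
    (h : ShortExact Λ X Y Z) {n d : ℕ}
    (hXY : StabIso Λ (FinitisticDimension.nsyz n X) (FinitisticDimension.nsyz n Y))
    (hd : ∀ U : ModuleCat.{u} Λ, InAdd Λ (FinitisticDimension.nsyz n X) U →
      (∃ r, PdLE Λ U r) → PdLE Λ U d)
    (hZ : ∃ r, PdLE Λ Z r) : PdLE Λ Z (d + 1 + n) := by
  have := h.finite_left
  have := h.finite_right
  obtain ⟨r, hr⟩ := hZ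
  obtain ⟨Y', Z', _, _, h', hY', hZ'⟩ := h.nsyz n
  obtain ⟨Q, P, ⟨_, _⟩, ⟨_, _⟩, ⟨e⟩⟩ := hY'.trans hXY.symm
  have hcoker := (h'.prod_right Q).congr (.refl Λ _) e (.refl Λ _)
  have hpd : PdLE Λ (Z' × Q) r :=
    (hZ'.symm.pdLE ((pdLE_nsyz_iff n).2 (hr.mono (by omega)))).prod (.of_projective r)
  obtain ⟨V, p, hp, hV, hVd⟩ := hcoker.exists_retract_pdLE hpd
  have hVadd : InAdd Λ (FinitisticDimension.nsyz n X) (.of Λ V) :=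
    (InAdd.refl _).of_retract V.subtype p hp
  exact (pdLE_nsyz_iff n).1 (hZ'.pdLE (hVd d (hd _ hVadd ⟨r, hV⟩)).fst)

/-- If `pd Z < ∞`, then high syzygies of `X` and `Y` are stably isomorphic. By `exists_stableKer_le`
this already happens at a uniform level `n`, where the Fitting argument of
`ShortExact.exists_retract_pdLE` reduces `pd Z` to that of a summand of the `n`-th syzygy of `X`. -/
theorem exists_pdLE_bound_of_shortExact (M : ModuleCat.{u} Λ) [Module.Finite Λ M] :
    ∃ d : ℕ, ∀ X Y Z : ModuleCat.{u} Λ, InAdd Λ M X → InAdd Λ M Y → ShortExact Λ X Y Z →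
      (∃ r, PdLE Λ Z r) → PdLE Λ Z d := by
  obtain ⟨n, hn⟩ := exists_stabIso_nsyz_prod M
  obtain ⟨d, hd⟩ := exists_pdLE_bound_of_inAdd (.of Λ (nsyz n M × Λ))
  refine ⟨d + 1 + n, fun X Y Z hX hY h ⟨r, hr⟩ => ?_⟩
  have := hX.finite
  have := hY.finite
  have : Module.Finite Λ Z := h.finite_right
  obtain ⟨C, hC, hXY⟩ := hn X Y hX hY r (h.stabIso_nsyz hr)
  have := hC.finite
  refine ShortExact.pdLE_of_stabIso_nsyz (X := .of Λ (X × C)) (Y := .of Λ (Y × C))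
    (h.prod_left C) hXY (fun U hU => hd U ?_) ⟨r, hr⟩
  exact ((hX.prod hC).stabAdd.nsyz n).trans hU.stabAdd

/-- The syzygies of `L` sit in a short exact sequence whose outer terms are syzygies of `T` and of
`Q`. Rotating it presents them as cokernels of maps between modules from finitely many summands. -/
theorem exists_pdLE_bound_of_extension (M M' : ModuleCat.{u} Λ) [Module.Finite Λ M]
    [Module.Finite Λ M'] (m : ℕ) :
    ∃ d : ℕ, ∀ T L Q : ModuleCat.{u} Λ, Module.Finite Λ L → ShortExact Λ T L Q →
      StabAdd M T → StabAdd M' (nsyz m Q) → (∃ r, PdLE Λ L r) → PdLE Λ L d := by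
  let W : ModuleCat.{u} Λ := .of Λ (syz M' × nsyz m M)
  obtain ⟨d, hd⟩ := exists_pdLE_bound_of_shortExact (.of Λ (W × Λ))
  refine ⟨d + m, fun T L Q _ h hT hQ ⟨r, hr⟩ => ?_⟩
  have : Module.Finite Λ T := h.finite_left
  have : Module.Finite Λ Q := h.finite_right
  obtain ⟨L', Q', _, _, h', hL', hQ'⟩ := h.nsyz m
  obtain ⟨k, hk⟩ := exists_shortExact_syz Q'
  have hM' : StabAdd W (syz M') := (InAdd.of_equiv_prod (.refl Λ _)).stabAdd
  have hM : StabAdd W (nsyz m M) := (InAdd.of_equiv_prod (.prodComm Λ _ _)).stabAdd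
  have hleft : StabAdd W (syz Q') := hM'.trans ((hQ.of_stabIso hQ'.symm).nsyz 1)
  have hmid : StabAdd W (.of Λ (nsyz m T × (Fin k → Λ))) :=
    (hM.trans (hT.nsyz m)).prod (Y := .of Λ (Fin k → Λ)) .of_projective
  have hpd : PdLE Λ (nsyz m L) r := (pdLE_nsyz_iff m).2 (hr.mono (by omega))
  exact (pdLE_nsyz_iff m).1
    (hL'.pdLE (hd _ _ L' hleft hmid (h'.rotate hk) ⟨r, hL'.symm.pdLE hpd⟩))

end IgusaTodorov

section ProjectiveCovers

variable {Λ : Type u} [Ring Λ]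

/-- If `L + ker g = P` with `L ≠ P`, lifting `g` through `g|L` gives an endomorphism `f` of `P` with
image in `L` and `g ∘ f = g`. The Fitting image of `f` is the required summand. -/
lemma exists_projective_ne_top_of_not_isSuperfluous {P M : ModuleCat.{u} Λ} [Module.Projective Λ P]
    [IsNoetherian Λ P] [IsArtinian Λ P] (g : P →ₗ[Λ] M) (hg : Function.Surjective g)
    (hs : ¬ IsSuperfluous Λ (LinearMap.ker g)) :
    ∃ V : Submodule Λ P, V ≠ ⊤ ∧ Module.Projective Λ V ∧
      Function.Surjective (g ∘ₗ V.subtype) := by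
  obtain ⟨L, hL, hL'⟩ : ∃ L : Submodule Λ P, L ⊔ LinearMap.ker g = ⊤ ∧ L ≠ ⊤ := by
    simpa [IsSuperfluous] using hs
  have hgL : Function.Surjective (g ∘ₗ L.subtype) := by
    intro x
    obtain ⟨y, rfl⟩ := hg x
    obtain ⟨l, hl, z, hz, rfl⟩ := Submodule.mem_sup.1 (hL ▸ Submodule.mem_top (x := y))
    exact ⟨⟨l, hl⟩, by simp [LinearMap.mem_ker.1 hz]⟩
  obtain ⟨π, hπ⟩ := Module.projective_lifting_property _ g hgL
  let f : Module.End Λ P := L.subtype ∘ₗ π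
  have hgf (n : ℕ) (x : P) : g ((f ^ n) x) = g x := by
    induction n generalizing x with
    | zero => rfl
    | succ n ih =>
      rw [pow_succ, Module.End.mul_apply, ih]
      exact LinearMap.congr_fun hπ x
  obtain ⟨n, hn, hcompl, -⟩ := exists_fitting_pow f
  refine ⟨LinearMap.range (f ^ n), fun htop => hL' (top_le_iff.1 (htop ▸ ?_)),
    .of_split _ _ (Submodule.projectionOnto_comp_subtype hcompl.symm), fun x => ?_⟩
  · obtain ⟨m, rfl⟩ := Nat.exists_eq_succ_of_ne_zero hn
    rintro _ ⟨x, rfl⟩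
    rw [pow_succ', Module.End.mul_apply]
    exact (π _).2
  · obtain ⟨y, rfl⟩ := hg x
    exact ⟨⟨_, y, rfl⟩, hgf n y⟩

lemma _root_.SyzygyFiniteClass.mono {C C' : ModuleCat.{u} Λ → Prop}
    (h : SyzygyFiniteClass Λ C) (hC : ∀ X, C' X → C X) : SyzygyFiniteClass Λ C' := by
  obtain ⟨m, N, hN, hm⟩ := h
  exact ⟨m, N, hN, fun X hX => hm X (hC X hX)⟩

variable {K M : ModuleCat.{u} Λ}

lemma exists_shortExact_of_isSyzygyOf (h : IsSyzygyOf Λ K M) :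
    ∃ P : ModuleCat.{u} Λ, Module.Projective Λ P ∧ Module.Finite Λ P ∧ ShortExact Λ K P M := by
  obtain ⟨P, g, hP, hP', hg, -, ⟨e⟩⟩ := h
  exact ⟨P, hP, hP', (ShortExact.of_surjective g hg).congr e.symm (.refl Λ _) (.refl Λ _)⟩

variable [IsArtinianRing Λ]

lemma exists_isSyzygyOf_of_surjective (P : ModuleCat.{u} Λ) [Module.Projective Λ P]
    [Module.Finite Λ P] (g : P →ₗ[Λ] M) (hg : Function.Surjective g) : ∃ K, IsSyzygyOf Λ K M := by
  induction hlen : Module.length Λ P using WellFoundedLT.induction generalizing P with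
  | ind n ih =>
  subst hlen
  by_cases hs : IsSuperfluous Λ (LinearMap.ker g)
  · exact ⟨.of Λ (LinearMap.ker g), P, g, ‹_›, ‹_›, hg, hs, ⟨.refl Λ _⟩⟩
  · obtain ⟨V, hV, _, hgV⟩ := exists_projective_ne_top_of_not_isSuperfluous g hg hs
    exact ih _ (Submodule.length_lt hV) (.of Λ V) _ hgV rfl

lemma exists_isSyzygyOf (M : ModuleCat.{u} Λ) [Module.Finite Λ M] : ∃ K, IsSyzygyOf Λ K M := by
  obtain ⟨n, g, hg⟩ := Module.Finite.exists_fin' Λ M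
  exact exists_isSyzygyOf_of_surjective (.of Λ (Fin n → Λ)) g hg

lemma exists_isNthSyzygy (M : ModuleCat.{u} Λ) [Module.Finite Λ M] (n : ℕ) :
    ∃ K, IsNthSyzygy Λ n K M ∧ Module.Finite Λ K ∧ StabIso Λ K (nsyz n M) := by
  induction n with
  | zero => exact ⟨M, ⟨.refl Λ M⟩, ‹_›, .refl⟩
  | succ n ih =>
    obtain ⟨K', hK', _, h⟩ := ih
    obtain ⟨K, hK⟩ := exists_isSyzygyOf K'
    obtain ⟨P, _, _, hP⟩ := exists_shortExact_of_isSyzygyOf hK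
    exact ⟨K, ⟨K', hK', hK⟩, hP.finite_left, hP.stabIso_syz h⟩

lemma _root_.MSyzygyFiniteClass.exists_stabAdd_nsyz {m : ℕ} {C : ModuleCat.{u} Λ → Prop}
    (h : MSyzygyFiniteClass Λ m C) : ∃ N : ModuleCat.{u} Λ, Module.Finite Λ N ∧
      ∀ X : ModuleCat.{u} Λ, Module.Finite Λ X → C X → StabAdd N (nsyz m X) := by
  obtain ⟨N, hN, hC⟩ := h
  refine ⟨N, hN, fun X _ hX => ?_⟩
  obtain ⟨K, hK, -, hKX⟩ := exists_isNthSyzygy X m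
  exact (hC X hX K hK).stabAdd.of_stabIso hKX

lemma _root_.OneSyzygyFinite.exists_stabAdd_submodule (h : OneSyzygyFinite Λ) :
    ∃ N : ModuleCat.{u} Λ, Module.Finite Λ N ∧ ∀ (P : ModuleCat.{u} Λ) [Module.Finite Λ P]
      [Module.Projective Λ P] (T : Submodule Λ P), StabAdd N (.of Λ T) := by
  obtain ⟨N, hN, hsyz⟩ := h.exists_stabAdd_nsyz
  refine ⟨N, hN, fun P _ _ T => ?_⟩
  have hT : ShortExact Λ (ModuleCat.of Λ T) P (ModuleCat.of Λ (P ⧸ T)) := .of_submodule T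
  have : Module.Finite Λ (ModuleCat.of Λ (P ⧸ T)) := hT.finite_right
  exact (hsyz _ ‹_› ‹_›).of_stabIso (hT.stabIso_syz .refl).symm

end ProjectiveCovers

section Subalgebras

variable {R : Type u} [CommRing R] {A : Type u} [Ring A] [Algebra R A]

/-- The `B`-module `X` is the restriction of an `A₁`-module annihilated by `I ∩ A₁`. When
`B ≤ A₁` and `I` is contained in `A₁`, these are the `A₁ ⧸ I`-modules regarded as `B`-modules. -/
def ExtendsAction (B A₁ : Subalgebra R A) (I : Ideal A) (X : Type u) [AddCommGroup X]
    [Module B X] : Prop :=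
  ∃ _ : Module A₁ X, (∀ (a : A₁) (ha : (a : A) ∈ B) (v : X), a • v = (⟨a, ha⟩ : B) • v) ∧
    ∀ a : A₁, (a : A) ∈ I → ∀ v : X, a • v = 0

lemma extendsAction_quotient {B A₁ : Subalgebra R A} {I : Ideal A} {X : Type u} [AddCommGroup X]
    [Module B X] [Module A₁ X]
    (hX : ∀ (a : A₁) (ha : (a : A) ∈ B) (v : X), a • v = (⟨a, ha⟩ : B) • v) (T : Submodule B X)
    (hT : ∀ a : A₁, ∀ v ∈ T, a • v ∈ T) (hI : ∀ a : A₁, (a : A) ∈ I → ∀ v : X, a • v ∈ T) :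
    ExtendsAction B A₁ I (X ⧸ T) := by
  let : SMul A₁ (X ⧸ T) := ⟨fun a => QuotientAddGroup.map T.toAddSubgroup T.toAddSubgroup
    (DistribSMul.toAddMonoidHom X a) (hT a)⟩
  refine ⟨Function.Surjective.module A₁ T.mkQ.toAddMonoidHom T.mkQ_surjective fun _ _ => rfl,
    fun a ha q => ?_, fun a ha q => ?_⟩
  all_goals obtain ⟨v, rfl⟩ := T.mkQ_surjective q
  · exact congrArg T.mkQ (hX a ha v)
  · exact (Submodule.Quotient.mk_eq_zero T).2 (hI a ha v)

lemma _root_.InAdd.restrictScalars {N X : ModuleCat.{u} A} (h : InAdd A N X)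
    (B : Subalgebra R A) : InAdd B (ModuleCat.of B N) (ModuleCat.of B X) := by
  obtain ⟨k, i, p, hpi⟩ := h
  exact ⟨k, i.restrictScalars B, p.restrictScalars B,
    LinearMap.ext fun x => LinearMap.congr_fun hpi x⟩

/-- The submodule `T` is `I L`. -/
lemma exists_shortExact_of_smul_mem {B A₁ : Subalgebra R A} {I : Ideal A} (hI : ∀ x ∈ I, x ∈ A₁)
    {E : Type u} [AddCommGroup E] [Module A E] (L : Submodule B E)
    (hL : ∀ a ∈ A₁, ∀ v ∈ L, a • v ∈ L) :
    ∃ (T : Submodule A E) (Q : ModuleCat.{u} B),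
      ShortExact B T L Q ∧ ExtendsAction B A₁ I Q := by
  let T : Submodule A E := Submodule.span A {z | ∃ y ∈ I, ∃ v ∈ L, z = y • v}
  have hTL : T.restrictScalars B ≤ L := fun z (hz : z ∈ T) => by
    induction hz using Submodule.closure_induction with
    | zero => exact L.zero_mem
    | add x y _ _ hx hy => exact L.add_mem hx hy
    | smul_mem a x hx =>
      obtain ⟨y, hy, v, hv, rfl⟩ := hx
      rw [smul_smul]
      exact hL _ (hI _ (I.mul_mem_left a hy)) v hv
  let TL : Submodule B L := (T.restrictScalars B).comap L.subtype
  refine ⟨T, .of B (L ⧸ TL), (ShortExact.of_submodule TL).congr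
    (Submodule.comapSubtypeEquivOfLe hTL) (.refl B _) (.refl B _), ?_⟩
  let L₁ : Submodule A₁ E := { L with smul_mem' := fun a _ hv => hL a a.2 _ hv }
  let : Module A₁ L := inferInstanceAs (Module A₁ L₁)
  have hcompat : ∀ (a : A₁) (ha : (a : A) ∈ B) (v : L), a • v = (⟨a, ha⟩ : B) • v :=
    fun _ _ _ => rfl
  have hTL' : ∀ a : A₁, ∀ v ∈ TL, a • v ∈ TL := fun a _ hv => T.smul_mem (a : A) hv
  have hITL : ∀ a : A₁, (a : A) ∈ I → ∀ v : L, a • v ∈ TL :=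
    fun a ha v => Submodule.subset_span ⟨a, ha, v, v.2, rfl⟩
  exact extendsAction_quotient hcompat TL hTL' hITL

theorem exists_pdLE_bound_of_smul_mem (B A₁ : Subalgebra R A) [IsArtinianRing B]
    [Module.Finite B A] {I : Ideal A} (hI : ∀ x ∈ I, x ∈ A₁) (h1 : OneSyzygyFinite A)
    (hq : SyzygyFiniteClass B fun X => Module.Finite B X ∧ ExtendsAction B A₁ I X) :
    ∃ d : ℕ, ∀ (n : ℕ) (L : Submodule B (Fin n → A)), (∀ a ∈ A₁, ∀ v ∈ L, a • v ∈ L) →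
      (∃ r, PdLE B L r) → PdLE B L d := by
  have : IsArtinianRing A := .of_finite B A
  obtain ⟨N, _, hN⟩ := h1.exists_stabAdd_submodule
  obtain ⟨m, hm⟩ := hq
  obtain ⟨N', _, hN'⟩ := hm.exists_stabAdd_nsyz
  have : Module.Finite B N := .trans A N
  obtain ⟨d, hd⟩ := exists_pdLE_bound_of_extension (.of B (N × A)) N' m
  refine ⟨d, fun n L hL hpd => ?_⟩
  obtain ⟨T, Q, h, hQ⟩ := exists_shortExact_of_smul_mem hI L hL
  have hQfin : Module.Finite B Q := h.finite_right
  have hT : InAdd A (.of A (N × A)) (.of A T) := hN (.of A (Fin n → A)) T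
  exact hd (.of B T) (.of B L) Q inferInstance h (hT.restrictScalars B).stabAdd
    (hN' Q hQfin ⟨hQfin, hQ⟩) hpd

end Subalgebras

section Radical

lemma _root_.IsSuperfluous.le_jacobson {Λ : Type u} [Ring Λ] {P : ModuleCat.{u} Λ}
    {K : Submodule Λ P} (hK : IsSuperfluous Λ K) : K ≤ Module.jacobson Λ P :=
  le_sInf fun m (hm : IsCoatom m) => by_contra fun h => hm.1 (hK m (hm.2 _ (left_lt_sup.2 h)))

lemma apply_mem_jacobsonRad {Λ : Type u} [Ring Λ] {P : Type*} [AddCommGroup P] [Module Λ P]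
    (φ : P →ₗ[Λ] Λ) {w : P} (hw : w ∈ Module.jacobson Λ P) : φ w ∈ jacobsonRad Λ := by
  rw [jacobsonRad, ← Ring.jacobson_eq_sInf_isMaximal]
  exact Module.le_comap_jacobson φ hw

variable {R : Type u} [CommRing R] {A : Type u} [Ring A] [Algebra R A] {B A₁ : Subalgebra R A}

lemma radSet_subset (B : Subalgebra R A) : radSet B ⊆ B := by
  rintro _ ⟨x, -, rfl⟩
  exact x.2

/-- The coordinatewise inclusion `Bⁿ → Aⁿ`. -/
def inclPi (B : Subalgebra R A) (n : ℕ) : (Fin n → B) →ₗ[B] (Fin n → A) where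
  toFun v i := v i
  map_add' _ _ := rfl
  map_smul' _ _ := rfl

lemma inclPi_injective (B : Subalgebra R A) (n : ℕ) : Function.Injective (inclPi B n) :=
  fun _ _ h => funext fun i => Subtype.ext (congrFun h i)

/-- `B`-linear functionals on `Bⁿ` are right multiplications, so they commute even with left
multiplication by an `a : A` outside `B`. -/
lemma coe_apply_eq_mul {n : ℕ} (φ : (Fin n → B) →ₗ[B] B) {a : A} {w w' : Fin n → B}
    (h : inclPi B n w' = a • inclPi B n w) : (φ w' : A) = a * φ w := by
  have hφ (v : Fin n → B) :
      (φ v : A) = ∑ i, (v i : A) * (φ fun j => if i = j then 1 else 0 : B) := by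
    rw [LinearMap.pi_apply_eq_sum_univ φ v]
    simp only [smul_eq_mul, AddSubmonoidClass.coe_finsetSum, MulMemClass.coe_mul]
  rw [hφ w, hφ w', Finset.mul_sum]
  refine Finset.sum_congr rfl fun i _ => ?_
  rw [← mul_assoc]
  exact congrArg (· * _) (congrFun h i)

lemma smul_mem_map_inclPi_ker (hrad : ∀ x ∈ radSet B, ∀ a ∈ A₁, a * x ∈ radSet B) {n : ℕ}
    {ι : Type*} (ψ : (Fin n → B) →ₗ[B] (ι → B))
    (hψ : LinearMap.ker ψ ≤ Module.jacobson B (Fin n → B)) :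
    ∀ a ∈ A₁, ∀ v ∈ (LinearMap.ker ψ).map (inclPi B n),
      a • v ∈ (LinearMap.ker ψ).map (inclPi B n) := by
  rintro a ha _ ⟨w, hw, rfl⟩
  have haw (i : Fin n) : a * w i ∈ B :=
    radSet_subset B (hrad _ ⟨w i, apply_mem_jacobsonRad (.proj i) (hψ hw), rfl⟩ a ha)
  let w' : Fin n → B := fun i => ⟨a * w i, haw i⟩
  have hw' : inclPi B n w' = a • inclPi B n w := rfl
  refine ⟨w', funext fun j => Subtype.ext ?_, hw'⟩
  have hwj : ψ w j = 0 := congrFun hw j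
  calc (ψ w' j : A) = a * ψ w j := coe_apply_eq_mul (LinearMap.proj j ∘ₗ ψ) hw'
    _ = 0 := by rw [hwj, ZeroMemClass.coe_zero, mul_zero]

lemma map_ker_eq_ker_of_comp_eq_id {Λ P F M : Type*} [Ring Λ] [AddCommGroup P] [Module Λ P]
    [AddCommGroup F] [Module Λ F] [AddCommGroup M] [Module Λ M] {i : P →ₗ[Λ] F} {p : F →ₗ[Λ] P}
    (hpi : p ∘ₗ i = LinearMap.id) (g : P →ₗ[Λ] M) :
    (LinearMap.ker g).map i = LinearMap.ker ((LinearMap.id - i ∘ₗ p).prod (g ∘ₗ p)) := by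
  have hpi' (x : P) : p (i x) = x := LinearMap.congr_fun hpi x
  ext v
  simp only [Submodule.mem_map, LinearMap.mem_ker, LinearMap.prod_apply, Function.prod,
    LinearMap.sub_apply, LinearMap.id_apply, LinearMap.comp_apply, Prod.mk_eq_zero, sub_eq_zero]
  constructor
  · rintro ⟨x, hx, rfl⟩
    exact ⟨by rw [hpi'], by rw [hpi', hx]⟩
  · rintro ⟨hv, hgv⟩
    exact ⟨p v, hgv, hv.symm⟩

lemma exists_equiv_smul_mem_of_isSyzygyOf
    (hrad : ∀ x ∈ radSet B, ∀ a ∈ A₁, a * x ∈ radSet B) {m : ℕ} {Y : Submodule B (Fin m → B)}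
    {K : ModuleCat.{u} B} (hK : IsSyzygyOf B K (.of B Y)) :
    ∃ (n : ℕ) (L : Submodule B (Fin n → A)), Nonempty (K ≃ₗ[B] L) ∧
      ∀ a ∈ A₁, ∀ v ∈ L, a • v ∈ L := by
  obtain ⟨P, g, _, _, -, hs, ⟨e⟩⟩ := hK
  obtain ⟨n, i, p, hpi⟩ : InAdd B (.of B B) P := .of_projective
  have hi : Function.Injective i :=
    Function.LeftInverse.injective (g := p) fun x => LinearMap.congr_fun hpi x
  let ψ := (LinearEquiv.sumArrowLequivProdArrow (Fin n) (Fin m) B B).symm.toLinearMap ∘ₗ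
    (LinearMap.id - i ∘ₗ p).prod (Y.subtype ∘ₗ g ∘ₗ p)
  have hψ : (LinearMap.ker g).map i = LinearMap.ker ψ := by
    rw [LinearEquiv.ker_comp, ← LinearMap.comp_assoc, ← map_ker_eq_ker_of_comp_eq_id hpi,
      LinearMap.ker_comp_of_ker_eq_bot _ Y.ker_subtype]
  refine ⟨n, (LinearMap.ker ψ).map (inclPi B n), ⟨?_⟩, smul_mem_map_inclPi_ker hrad ψ ?_⟩
  · rw [← hψ]
    exact e ≪≫ₗ Submodule.equivMapOfInjective i hi _ ≪≫ₗ
      Submodule.equivMapOfInjective (inclPi B n) (inclPi_injective B n) _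
  · rw [← hψ]
    exact (Submodule.map_mono (hs.le_jacobson)).trans (Module.map_jacobson_le i)

theorem finFinDim_of_ideal_le (B A₁ : Subalgebra R A) [IsArtinianRing B] [Module.Finite B A]
    {I : Ideal A} (hI : ∀ x ∈ I, x ∈ A₁) (hrad : ∀ x ∈ radSet B, ∀ a ∈ A₁, a * x ∈ radSet B)
    (h1 : OneSyzygyFinite A)
    (hq : SyzygyFiniteClass B fun X => Module.Finite B X ∧ ExtendsAction B A₁ I X) :
    FinFinDim B := by
  obtain ⟨d, hd⟩ := exists_pdLE_bound_of_smul_mem B A₁ hI h1 hq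
  refine ⟨d + 1 + 1, fun X _ ⟨r, hr⟩ => ?_⟩
  rw [projDimLE_iff] at hr ⊢
  obtain ⟨m, π, hπ⟩ := Module.Finite.exists_fin' B X
  obtain ⟨K, hK⟩ := exists_isSyzygyOf (ModuleCat.of B (LinearMap.ker π))
  obtain ⟨P, _, _, hY⟩ := exists_shortExact_of_isSyzygyOf hK
  obtain ⟨n, L, ⟨e⟩, hL⟩ := exists_equiv_smul_mem_of_isSyzygyOf hrad hK
  have hX := ShortExact.of_surjective π hπ
  have hKr : PdLE B K r :=
    hY.pdLE_succ_iff.1 (hX.pdLE_succ_iff.1 (hr.mono (by omega)))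
  exact hX.pdLE_succ_iff.2 (hY.pdLE_succ_iff.2
    ((hd n L hL ⟨r, hKr.of_equiv e⟩).of_equiv e.symm))

end Radical

section Chain

variable {R : Type u} [CommRing R] {A : Type u} [Ring A] [Algebra R A]

lemma mul_prod_mem {m : ℕ} (C : Fin (m + 1) → Subalgebra R A) (x : Fin m → A)
    (h : ∀ j : Fin m, ∀ a ∈ C j.succ, a * x j ∈ C j.castSucc) {a : A} (ha : a ∈ C (Fin.last m)) :
    a * (List.ofFn fun j : Fin m => x j.rev).prod ∈ C 0 := by
  induction m generalizing a with
  | zero => simpa using ha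
  | succ m ih =>
    rw [List.ofFn_succ, List.prod_cons, ← mul_assoc, Fin.rev_zero]
    simp_rw [Fin.rev_succ]
    exact ih (fun j => C j.castSucc) (fun j => x j.castSucc) (fun j => h j.castSucc)
      (h (Fin.last m) a ha)

/-- For a chain `A₀, …, A_s = A` with `s = m + 1`, the left ideal `rad (A_{s-1}) ⋯ rad (A₁)` of `A`.
It is all of `A` if `s = 1`. -/
def radProduct {m : ℕ} (A' : Fin (m + 2) → Subalgebra R A) : Ideal A :=
  Ideal.span {y | ∃ x : Fin m → A, (∀ j, x j ∈ radSet (A' j.succ.castSucc)) ∧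
    (List.ofFn fun j : Fin m => x j.rev).prod = y}

lemma mem_of_mem_radProduct {m : ℕ} {A' : Fin (m + 2) → Subalgebra R A}
    (htop : A' (Fin.last (m + 1)) = ⊤)
    (hrad : ∀ j : Fin (m + 1), ∀ x ∈ radSet (A' j.castSucc), ∀ a ∈ A' j.succ,
      a * x ∈ radSet (A' j.castSucc)) {y : A} (hy : y ∈ radProduct A') : y ∈ A' 1 := by
  induction hy using Submodule.closure_induction with
  | zero => exact zero_mem _
  | add y z _ _ hy hz => exact add_mem hy hz
  | smul_mem a y hy =>
    obtain ⟨x, hx, rfl⟩ := hy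
    refine mul_prod_mem (fun j => A' j.succ) x
      (fun j b hb => radSet_subset _ (hrad j.succ (x j) (hx j) b hb)) ?_
    rw [Fin.succ_last, htop]
    exact Algebra.mem_top

end Chain

end FinitisticDimension

open FinitisticDimension in
theorem statement4_general {R : Type u} [CommRing R] {A : Type u} [Ring A] [Algebra R A] {m : ℕ}
    (A' : Fin (m + 2) → Subalgebra R A) [IsArtinianRing (A' 0)] [Module.Finite (A' 0) A]
    (htop : A' (Fin.last (m + 1)) = ⊤)
    (hrad : ∀ j : Fin (m + 1), ∀ x ∈ radSet (A' j.castSucc), ∀ a ∈ A' j.succ,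
      a * x ∈ radSet (A' j.castSucc))
    (h1 : OneSyzygyFinite A)
    (hq : SyzygyFiniteClass (A' 0) fun X =>
      Module.Finite (A' 0) X ∧ ExtendsAction (A' 0) (A' 1) (radProduct A') X) :
    FinFinDim (A' 0) :=
  finFinDim_of_ideal_le (A' 0) (A' 1) (fun _ => mem_of_mem_radProduct htop hrad) (hrad 0) h1 hq

/-- Chain of subalgebras `B = A₀ ⊆ ⋯ ⊆ A_s = A` with `rad (A_{i-1})` a left
ideal of `A_i`.  If `A` is 1-syzygy-finite and `A₁/(rad (A_{s-1}) ⋯ rad (A₁))` is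
`B`-syzygy-finite (its modules, restricted to `B`-modules along `B ⊆ A₁`), then
`fin.dim B < ∞`. -/
theorem statement4 (s : ℕ) (hs : 0 < s)
    (A' : Fin (s + 1) → Subalgebra R A)
    (hchain : ∀ j : Fin s, A' j.castSucc ≤ A' j.succ)
    (htop : A' (Fin.last s) = ⊤)
    (hrad : ∀ j : Fin s, ∀ x ∈ radSet (A' j.castSucc), ∀ a ∈ A' j.succ,
      a * x ∈ radSet (A' j.castSucc))
    (h1 : OneSyzygyFinite A)
    (hq : SyzygyFiniteClass ↥(A' 0) (fun X => Module.Finite ↥(A' 0) X ∧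
      ∃ sm : ↥(A' 1) → X → X,
        (∀ v : X, sm 1 v = v) ∧
        (∀ (a b : ↥(A' 1)) (v : X), sm (a * b) v = sm a (sm b v)) ∧
        (∀ (a : ↥(A' 1)) (v w : X), sm a (v + w) = sm a v + sm a w) ∧
        (∀ (a b : ↥(A' 1)) (v : X), sm (a + b) v = sm a v + sm b v) ∧
        (∀ (a : ↥(A' 1)) (hb : (a : A) ∈ A' 0) (v : X),
          sm a v = (⟨(a : A), hb⟩ : ↥(A' 0)) • v) ∧
        (∀ x : Fin (s - 1) → A,
          (∀ j : Fin (s - 1), x j ∈ radSet (A' ⟨j.1 + 1, by omega⟩)) →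
          ∀ (hm : (List.ofFn fun j : Fin (s - 1) => x j.rev).prod ∈ A' 1) (v : X),
            sm (⟨(List.ofFn fun j : Fin (s - 1) => x j.rev).prod, hm⟩ : ↥(A' 1)) v = 0))) :
    FinFinDim ↥(A' 0) := by
  obtain ⟨m, rfl⟩ := Nat.exists_eq_add_of_le' hs
  have : Module.Finite R (A' 0) := inferInstanceAs (Module.Finite R (A' 0).toSubmodule)
  have : IsArtinianRing (A' 0) := .of_finite R (A' 0)
  have : Module.Finite (A' 0) A := .of_restrictScalars_finite R (A' 0) A
  refine statement4_general A' htop hrad h1 (hq.mono fun X ⟨hX, hXA, hXB, hXI⟩ => ⟨hX, ?_⟩)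
  exact ⟨fun a v => a • v, one_smul _, mul_smul, smul_add, add_smul, hXB,
    fun x hx hm => hXI ⟨_, hm⟩ (Ideal.subset_span ⟨x, hx, rfl⟩)⟩
end

section
/- Let φ : B → A be a homomorphism of Artin algebras preserving identities. If B is representation-finite, then there are only finitely many isomorphism classes of indecomposable (A,B)-projective finitely generated A-modules. -/
/-!
An `(A, B)`-projective module `X` is a summand of `A ⊗_B X`. As `A` has finite length over `B`, so
does `X`, which is therefore a finite direct sum of indecomposable `B`-modules and lies in `add M`,
where `M` is the sum of the finitely many finitely generated indecomposable `B`-modules. Since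
`A ⊗_B -` is additive, `X` lies in `add (A ⊗_B M)`. The module `A ⊗_B M` has finite length, and by
the Krull–Schmidt exchange argument the indecomposable objects of `add Y`, for `Y` of finite length,
are the finitely many indecomposable summands of `Y`.
-/

universe u

open TensorProduct

variable {R : Type u} [CommRing R] [IsArtinianRing R]
  {B A : Type u} [Ring B] [Ring A] [Algebra R B] [Algebra R A]
  [Module.Finite R B] [Module.Finite R A]

section FiniteLength

theorem isFiniteLength_of_tower (R : Type*) {S M : Type*} [Ring R] [Ring S] [AddCommGroup M]
    [SMul R S] [Module S M] [Module R M] [IsScalarTower R S M] (h : IsFiniteLength R M) :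
    IsFiniteLength S M := by
  rw [isFiniteLength_iff_isNoetherian_isArtinian] at h ⊢
  exact ⟨isNoetherian_of_tower R h.1, isArtinian_of_tower R h.2⟩

theorem isFiniteLength_pi {Λ ι : Type*} [Ring Λ] [Finite ι] {M : ι → Type*}
    [∀ i, AddCommGroup (M i)] [∀ i, Module Λ (M i)] (h : ∀ i, IsFiniteLength Λ (M i)) :
    IsFiniteLength Λ (∀ i, M i) := by
  simp only [isFiniteLength_iff_isNoetherian_isArtinian] at h ⊢
  have := fun i => (h i).1
  have := fun i => (h i).2
  exact ⟨inferInstance, inferInstance⟩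

theorem isFiniteLength_trans {R S M : Type*} [Ring R] [Ring S] [AddCommGroup M] [Module R S]
    [Module S M] [Module R M] [IsScalarTower R S S] [IsScalarTower R S M] [Module.Finite S M]
    (h : IsFiniteLength R S) : IsFiniteLength R M := by
  obtain ⟨n, f, hf⟩ := Module.Finite.exists_fin' S M
  have : LinearMap.CompatibleSMul (Fin n → S) M R S := ⟨fun g c x => by
    rw [← one_smul S x, ← smul_assoc, map_smul, smul_assoc, map_smul]⟩
  exact (isFiniteLength_pi fun _ : Fin n => h).of_surjective (f := f.restrictScalars R) hf

end FiniteLength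

section KrullSchmidt

variable {Λ : Type u} [Ring Λ]

namespace ModIndec

/-- Fitting's lemma: a high power of an endomorphism splits the module into its kernel
and its range. -/
theorem isLocalRing_end {M : ModuleCat.{u} Λ} (hM : ModIndec Λ M) (hfin : IsFiniteLength Λ M) :
    IsLocalRing (Module.End Λ M) := by
  obtain ⟨_, _⟩ := isFiniteLength_iff_isNoetherian_isArtinian.mp hfin
  have := hM.1
  refine IsLocalRing.of_isUnit_or_isUnit_one_sub_self fun f => ?_
  obtain ⟨n, hn, hcompl⟩ := ((Filter.eventually_ne_atTop 0).and
    f.eventually_isCompl_ker_pow_range_pow).exists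
  rcases hM.2 _ _ hcompl with hker | hrange
  · have hbij : Function.Bijective (f ^ n) :=
      IsArtinian.bijective_of_injective_endomorphism _ (LinearMap.ker_eq_bot.mp hker)
    exact .inl ((isUnit_pow_iff hn).mp ((Module.End.isUnit_iff _).mpr hbij))
  · exact .inr (IsNilpotent.isUnit_one_sub ⟨n, LinearMap.range_eq_bot.mp hrange⟩)

theorem nonempty_linearEquiv_of_comp_eq_id {X Z : ModuleCat.{u} Λ} [Nontrivial X]
    (hZ : ModIndec Λ Z) {f : X →ₗ[Λ] Z} {g : Z →ₗ[Λ] X} (h : g ∘ₗ f = LinearMap.id) :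
    Nonempty (X ≃ₗ[Λ] Z) := by
  have hgf : Function.LeftInverse g f := LinearMap.congr_fun h
  have hidem : IsIdempotentElem (M := Module.End Λ Z) (f ∘ₗ g) :=
    LinearMap.ext fun z => congrArg f (hgf (g z))
  have hcompl : IsCompl (LinearMap.range f) (LinearMap.ker g) := by
    simpa only [LinearMap.range_comp_of_range_eq_top f (LinearMap.range_eq_top.mpr hgf.surjective),
      LinearMap.ker_comp_of_ker_eq_bot g (LinearMap.ker_eq_bot.mpr hgf.injective)]
      using LinearMap.IsIdempotentElem.isCompl hidem
  rcases hZ.2 _ _ hcompl with hrange | hker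
  · obtain ⟨x, hx⟩ := exists_ne (0 : X)
    rw [LinearMap.range_eq_bot] at hrange
    exact absurd (hgf.injective (by simp [hrange])) hx
  · exact ⟨(LinearEquiv.ofBijective g ⟨LinearMap.ker_eq_bot.mp hker, hgf.surjective⟩).symm⟩

theorem nonempty_linearEquiv_of_isUnit_comp {X Z : ModuleCat.{u} Λ} [Nontrivial X]
    (hZ : ModIndec Λ Z) {f : X →ₗ[Λ] Z} {g : Z →ₗ[Λ] X}
    (h : IsUnit (M := Module.End Λ X) (g ∘ₗ f)) : Nonempty (X ≃ₗ[Λ] Z) := by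
  obtain ⟨v, hv⟩ := h.exists_left_inv
  exact hZ.nonempty_linearEquiv_of_comp_eq_id (f := f) (g := v ∘ₗ g) hv

theorem exists_linearEquiv_of_sum_comp_eq_id {X : ModuleCat.{u} Λ} (hX : ModIndec Λ X)
    (hfin : IsFiniteLength Λ X) {ι : Type*} [Fintype ι] {Z : ι → ModuleCat.{u} Λ}
    (hZ : ∀ i, ModIndec Λ (Z i)) {a : ∀ i, X →ₗ[Λ] Z i} {b : ∀ i, Z i →ₗ[Λ] X}
    (h : ∑ i, b i ∘ₗ a i = LinearMap.id) : ∃ i, Nonempty (X ≃ₗ[Λ] Z i) := by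
  have := hX.1
  have := hX.isLocalRing_end hfin
  have hunit : IsUnit (M := Module.End Λ X) (∑ i, b i ∘ₗ a i) := h ▸ isUnit_one
  obtain ⟨i, -, hi⟩ := IsLocalRing.exists_of_isUnit_sum hunit
  exact ⟨i, (hZ i).nonempty_linearEquiv_of_isUnit_comp hi⟩

end ModIndec

variable (Λ) in
/-- `M` is isomorphic to a finite direct sum of indecomposable modules. -/
def IsFiniteSumOfIndec (M : Type u) [AddCommGroup M] [Module Λ M] : Prop :=
  ∃ (ι : Type) (_ : Fintype ι) (Z : ι → ModuleCat.{u} Λ),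
    (∀ i, ModIndec Λ (Z i)) ∧ Nonempty (M ≃ₗ[Λ] ∀ i, Z i)

namespace IsFiniteSumOfIndec

variable {M N : Type u} [AddCommGroup M] [Module Λ M] [AddCommGroup N] [Module Λ N]

theorem of_linearEquiv (e : M ≃ₗ[Λ] N) : IsFiniteSumOfIndec Λ N → IsFiniteSumOfIndec Λ M
  | ⟨ι, _, Z, hZ, ⟨f⟩⟩ => ⟨ι, inferInstance, Z, hZ, ⟨e.trans f⟩⟩

theorem of_subsingleton [Subsingleton M] : IsFiniteSumOfIndec Λ M :=
  ⟨Empty, inferInstance, Empty.elim, nofun, ⟨LinearEquiv.ofSubsingleton M _⟩⟩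

theorem of_modIndec {M : ModuleCat.{u} Λ} (hM : ModIndec Λ M) : IsFiniteSumOfIndec Λ M :=
  ⟨Unit, inferInstance, fun _ => M, fun _ => hM, ⟨(LinearEquiv.funUnique Unit Λ M).symm⟩⟩

theorem prod : IsFiniteSumOfIndec Λ M → IsFiniteSumOfIndec Λ N → IsFiniteSumOfIndec Λ (M × N)
  | ⟨ι, _, Z, hZ, ⟨e⟩⟩, ⟨κ, _, W, hW, ⟨f⟩⟩ =>
    let V : ι ⊕ κ → ModuleCat.{u} Λ := Sum.elim Z W
    ⟨ι ⊕ κ, inferInstance, V, Sum.rec hZ hW,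
      ⟨(e.prodCongr f).trans (LinearEquiv.sumPiEquivProdPi Λ ι κ fun j => V j).symm⟩⟩

theorem of_isCompl {P Q : Submodule Λ M} (h : IsCompl P Q) (hP : IsFiniteSumOfIndec Λ P)
    (hQ : IsFiniteSumOfIndec Λ Q) : IsFiniteSumOfIndec Λ M :=
  (hP.prod hQ).of_linearEquiv (P.prodEquivOfIsCompl Q h).symm

variable (Λ M) in
theorem of_isArtinian [IsArtinian Λ M] : IsFiniteSumOfIndec Λ M := by
  suffices h : ∀ N : Submodule Λ M, IsFiniteSumOfIndec Λ N from
    (h ⊤).of_linearEquiv Submodule.topEquiv.symm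
  intro N
  induction N using WellFoundedLT.induction with
  | ind N ih =>
  have of_ne_top (P : Submodule Λ N) (hP : P ≠ ⊤) : IsFiniteSumOfIndec Λ P := by
    have hlt : P.map N.subtype < N := by
      simpa only [Submodule.map_subtype_top] using
        Submodule.map_strictMono_of_injective N.injective_subtype hP.lt_top
    exact (ih _ hlt).of_linearEquiv (N.equivSubtypeMap P)
  rcases subsingleton_or_nontrivial N with _ | hN
  · exact of_subsingleton
  by_cases hind : ModIndec Λ (ModuleCat.of Λ N)
  · exact of_modIndec hind
  obtain ⟨P, Q, hPQ, hP, hQ⟩ : ∃ P Q : Submodule Λ N, IsCompl P Q ∧ P ≠ ⊥ ∧ Q ≠ ⊥ := by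
    by_contra! h
    exact hind ⟨hN, fun P Q hPQ => or_iff_not_imp_left.mpr (h P Q hPQ)⟩
  exact of_isCompl hPQ (of_ne_top P fun h => hQ (eq_bot_of_top_isCompl (h ▸ hPQ)))
    (of_ne_top Q fun h => hP (eq_bot_of_isCompl_top (h ▸ hPQ)))

theorem exists_sum_comp_eq_id {M : ModuleCat.{u} Λ} (hM : IsFiniteSumOfIndec Λ M) :
    ∃ (ι : Type) (_ : Fintype ι) (Z : ι → ModuleCat.{u} Λ) (a : ∀ i, M →ₗ[Λ] Z i)
      (b : ∀ i, Z i →ₗ[Λ] M), (∀ i, ModIndec Λ (Z i)) ∧ (∀ i, a i ∘ₗ b i = LinearMap.id) ∧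
        ∑ i, b i ∘ₗ a i = LinearMap.id := by
  classical
  obtain ⟨ι, _, Z, hZ, ⟨e⟩⟩ := hM
  refine ⟨ι, inferInstance, Z, fun i => LinearMap.proj i ∘ₗ e.toLinearMap,
    fun i => e.symm.toLinearMap ∘ₗ LinearMap.single Λ (fun i => Z i) i, hZ,
    fun i => LinearMap.ext fun z => by simp, LinearMap.ext fun x => e.injective ?_⟩
  simp [LinearMap.sum_apply, Finset.univ_sum_single]

end IsFiniteSumOfIndec

end KrullSchmidt

section AdditiveClosure

variable {Λ : Type u} [Ring Λ]

namespace InAdd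

variable {N X Y : ModuleCat.{u} Λ}

theorem of_sum_comp_eq_id {ι : Type*} [Fintype ι] {a : ι → X →ₗ[Λ] N} {b : ι → N →ₗ[Λ] X}
    (h : ∑ i, b i ∘ₗ a i = LinearMap.id) : InAdd Λ N X := by
  let e := (Fintype.equivFin ι).symm
  refine ⟨_, LinearMap.pi fun j => a (e j), ∑ j, b (e j) ∘ₗ LinearMap.proj j, ?_⟩
  calc (∑ j, b (e j) ∘ₗ LinearMap.proj j) ∘ₗ LinearMap.pi (fun j => a (e j))
      = ∑ j, b (e j) ∘ₗ a (e j) := by ext; simp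
    _ = LinearMap.id := (e.sum_comp fun i => b i ∘ₗ a i).trans h

theorem exists_sum_comp_eq_id (h : InAdd Λ N X) :
    ∃ (k : ℕ) (a : Fin k → X →ₗ[Λ] N) (b : Fin k → N →ₗ[Λ] X),
      ∑ j, b j ∘ₗ a j = LinearMap.id := by
  obtain ⟨k, i, p, hpi⟩ := h
  refine ⟨k, fun j => LinearMap.proj j ∘ₗ i, fun j => p ∘ₗ LinearMap.single Λ (fun _ => N) j, ?_⟩
  ext x
  have hsum : ∑ j, p (Pi.single j (i x j)) = p (i x) := by
    rw [← map_sum, Finset.univ_sum_single]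
  simpa [LinearMap.sum_apply] using hsum.trans (LinearMap.congr_fun hpi x)

theorem of_comp_eq_id (h : InAdd Λ N Y) {s : X →ₗ[Λ] Y} {r : Y →ₗ[Λ] X}
    (hrs : r ∘ₗ s = LinearMap.id) : InAdd Λ N X := by
  obtain ⟨k, i, p, hpi⟩ := h
  exact ⟨k, i ∘ₗ s, r ∘ₗ p, by
    rw [LinearMap.comp_assoc, ← LinearMap.comp_assoc s, hpi, LinearMap.id_comp, hrs]⟩

theorem isFiniteLength (h : InAdd Λ N X) (hN : IsFiniteLength Λ N) : IsFiniteLength Λ X := by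
  obtain ⟨k, i, p, hpi⟩ := h
  have hi : Function.LeftInverse p i := LinearMap.congr_fun hpi
  exact (isFiniteLength_pi fun _ => hN).of_injective hi.injective

end InAdd

theorem classRepFinite_inAdd {Y : ModuleCat.{u} Λ} (hY : IsFiniteLength Λ Y) :
    ClassRepFinite Λ (InAdd Λ Y) := by
  have := (isFiniteLength_iff_isNoetherian_isArtinian.mp hY).2
  obtain ⟨ι, _, Z, a, b, hZ, -, hba⟩ :=
    (IsFiniteSumOfIndec.of_isArtinian Λ Y).exists_sum_comp_eq_id
  refine ⟨_, Z ∘ (Fintype.equivFin ι).symm, fun X hX hXind => ?_⟩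
  obtain ⟨k, c, d, hdc⟩ := hX.exists_sum_comp_eq_id
  have hsum : ∑ q : Fin k × ι, (d q.1 ∘ₗ b q.2) ∘ₗ (a q.2 ∘ₗ c q.1) = LinearMap.id :=
    calc ∑ q : Fin k × ι, (d q.1 ∘ₗ b q.2) ∘ₗ (a q.2 ∘ₗ c q.1)
        = ∑ j, d j ∘ₗ (∑ i, b i ∘ₗ a i) ∘ₗ c j := by
          ext x
          simp [Fintype.sum_prod_type, LinearMap.sum_apply]
      _ = LinearMap.id := by simpa only [hba, LinearMap.id_comp] using hdc
  obtain ⟨q, hq⟩ := hXind.exists_linearEquiv_of_sum_comp_eq_id (hX.isFiniteLength hY)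
    (Z := fun q : Fin k × ι => Z q.2) (fun q => hZ q.2) hsum
  exact ⟨Fintype.equivFin ι q.2, by rwa [Function.comp_apply, Equiv.symm_apply_apply]⟩

theorem RepFinite.exists_forall_inAdd (h : RepFinite Λ) :
    ∃ M : ModuleCat.{u} Λ, Module.Finite Λ M ∧
      ∀ X : ModuleCat.{u} Λ, IsFiniteLength Λ X → InAdd Λ M X := by
  obtain ⟨k, N, hN⟩ := h
  let T := {i : Fin k // Module.Finite Λ (N i)}
  have (t : T) : Module.Finite Λ (N t) := t.2
  refine ⟨ModuleCat.of Λ (∀ t : T, N t), inferInstanceAs (Module.Finite Λ (∀ t : T, N t)),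
    fun X hX => ?_⟩
  obtain ⟨_, _⟩ := isFiniteLength_iff_isNoetherian_isArtinian.mp hX
  obtain ⟨ι, _, Z, a, b, hZ, hab, hba⟩ :=
    (IsFiniteSumOfIndec.of_isArtinian Λ X).exists_sum_comp_eq_id
  have hfin (i : ι) : Module.Finite Λ (Z i) :=
    .of_surjective (a i) (LinearMap.surjective_of_comp_eq_id _ _ (hab i))
  choose σ hσ using fun i => hN (Z i) (hfin i) (hZ i)
  let e (i : ι) := (hσ i).some
  let t (i : ι) : T := ⟨σ i, (hfin i).equiv (e i)⟩
  refine InAdd.of_sum_comp_eq_id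
    (a := fun i => LinearMap.single Λ (fun t : T => N t) (t i) ∘ₗ (e i).toLinearMap ∘ₗ a i)
    (b := fun i => b i ∘ₗ (e i).symm.toLinearMap ∘ₗ LinearMap.proj (t i)) ?_
  rw [← hba]
  exact Finset.sum_congr rfl fun i _ => LinearMap.ext fun x => by simp [t]

end AdditiveClosure

section Induced

variable {R B A : Type*} [CommRing R] [Ring B] [Ring A] [Algebra R B] [Algebra R A] (φ : B →ₐ[R] A)

/-- The `A`-module `A ⊗_B N` induced along `φ` from a `B`-module `N`, presented in the same way as
`relTensor` so that `relTensor φ X` is by definition the module induced from `resMod φ X`. -/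
abbrev InducedModule (N : Type*) [AddCommGroup N] [Module R N] [Module B N] : Type _ :=
  (A ⊗[R] N) ⧸ Submodule.span A {z : A ⊗[R] N | ∃ (a : A) (b : B) (x : N),
    z = (a * φ b) ⊗ₜ[R] x - a ⊗ₜ[R] (b • x)}

namespace InducedModule

variable (N : Type*) [AddCommGroup N] [Module R N] [Module B N]

/-- The unit `x ↦ 1 ⊗ x` of the adjunction between induction and restriction along `φ`. -/
noncomputable def unit : N →ₛₗ[(φ : B →+* A)] InducedModule φ N where
  toFun x := Submodule.Quotient.mk (1 ⊗ₜ x)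
  map_add' x y := by rw [TensorProduct.tmul_add, Submodule.Quotient.mk_add]
  map_smul' b x := by
    have hrel : (Submodule.Quotient.mk ((1 * φ b) ⊗ₜ x) : InducedModule φ N) =
        Submodule.Quotient.mk (1 ⊗ₜ (b • x)) :=
      (Submodule.Quotient.eq _).mpr (Submodule.subset_span ⟨1, b, x, rfl⟩)
    rw [← hrel, ← Submodule.Quotient.mk_smul, TensorProduct.smul_tmul', one_mul]
    simp

theorem span_range_unit : Submodule.span A (Set.range (unit φ N)) = ⊤ := by
  refine Submodule.eq_top_iff'.mpr fun z => ?_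
  obtain ⟨z, rfl⟩ := Submodule.Quotient.mk_surjective _ z
  induction z using TensorProduct.induction_on with
  | zero => exact zero_mem _
  | tmul a x =>
    have hsmul : (Submodule.Quotient.mk (a ⊗ₜ x) : InducedModule φ N) = a • unit φ N x := by
      change _ = Submodule.Quotient.mk (a • (1 ⊗ₜ x))
      rw [TensorProduct.smul_tmul', smul_eq_mul, mul_one]
    exact hsmul ▸ Submodule.smul_mem _ a (Submodule.subset_span ⟨x, rfl⟩)
  | add z w hz hw => exact add_mem hz hw

instance finite [Module.Finite B N] : Module.Finite A (InducedModule φ N) := by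
  obtain ⟨S, hS⟩ := Module.Finite.fg_top (R := B) (M := N)
  refine ⟨Submodule.fg_def.mpr ⟨_, S.finite_toSet.image (unit φ N), top_le_iff.mp ?_⟩⟩
  rw [← span_range_unit, Submodule.span_le, ← Set.image_univ, ← Submodule.top_coe (R := B), ← hS]
  exact Submodule.image_span_subset_span _ _

variable {φ N} in
theorem hom_ext {P : Type*} [AddCommGroup P] [Module A P] {f g : InducedModule φ N →ₗ[A] P}
    (h : ∀ x, f (unit φ N x) = g (unit φ N x)) : f = g :=
  LinearMap.ext_on_range (span_range_unit φ N) h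

variable {N} {N' : Type*} [AddCommGroup N'] [Module R N'] [Module B N']
  [IsScalarTower R B N] [IsScalarTower R B N']

/-- The functorial map `A ⊗_B N → A ⊗_B N'` induced by a `B`-linear map `N → N'`. -/
noncomputable def map (f : N →ₗ[B] N') : InducedModule φ N →ₗ[A] InducedModule φ N' :=
  Submodule.mapQ _ _
    (TensorProduct.AlgebraTensorModule.map (LinearMap.id : A →ₗ[A] A) (f.restrictScalars R)) <| by
    rw [Submodule.span_le]
    rintro _ ⟨a, b, x, rfl⟩
    exact Submodule.subset_span ⟨a, b, f x, by simp⟩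

theorem map_unit (f : N →ₗ[B] N') (x : N) : map φ f (unit φ N x) = unit φ N' (f x) :=
  rfl

end InducedModule

end Induced

section RelativelyProjective

variable {R B A : Type u} [CommRing R] [Ring B] [Ring A] [Algebra R B] [Algebra R A]

theorem InAdd.induced (φ : B →ₐ[R] A) {N X : ModuleCat.{u} B} [Module R N] [Module R X]
    [IsScalarTower R B N] [IsScalarTower R B X] (h : InAdd B N X) :
    InAdd A (ModuleCat.of A (InducedModule φ N)) (ModuleCat.of A (InducedModule φ X)) := by
  obtain ⟨k, a, b, hba⟩ := h.exists_sum_comp_eq_id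
  refine InAdd.of_sum_comp_eq_id (a := fun j => InducedModule.map φ (a j))
    (b := fun j => InducedModule.map φ (b j)) (InducedModule.hom_ext fun x => ?_)
  have hx : ∑ j, b j (a j x) = x := by simpa [LinearMap.sum_apply] using LinearMap.congr_fun hba x
  simp only [LinearMap.sum_apply, LinearMap.comp_apply, InducedModule.map_unit, ← map_sum, hx,
    LinearMap.id_apply]

variable {φ : B →ₐ[R] A}

theorem RelProjective.inAdd_induced {M : ModuleCat.{u} B} [Module R M] [IsScalarTower R B M]
    {X : ModuleCat.{u} A} (hX : RelProjective φ X) (hM : InAdd B M (resMod φ X)) :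
    InAdd A (ModuleCat.of A (InducedModule φ M)) X := by
  let : Module R (resMod φ X) := Module.compHom X (algebraMap R A)
  have : IsScalarTower R B (resMod φ X) := .of_algebraMap_smul fun r (x : X) =>
    congrArg (· • x) (φ.commutes r)
  obtain ⟨s, p, hps⟩ := hX
  exact (hM.induced φ).of_comp_eq_id hps

theorem isFiniteLength_of_resMod {X : ModuleCat.{u} A} (h : IsFiniteLength B (resMod φ X)) :
    IsFiniteLength A X := by
  let : SMul B A := ⟨fun b a => φ b * a⟩
  let : Module B X := Module.compHom X φ.toRingHom
  have : IsScalarTower B A X := ⟨fun b a x => mul_smul (φ b) a x⟩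
  exact isFiniteLength_of_tower B (M := X) h

theorem isFiniteLength_resMod (h : IsFiniteLength B (resMod φ (ModuleCat.of A A)))
    (X : ModuleCat.{u} A) [Module.Finite A X] : IsFiniteLength B (resMod φ X) := by
  let : Module B A := Module.compHom A φ.toRingHom
  let : Module B X := Module.compHom X φ.toRingHom
  have : IsScalarTower B A A := ⟨fun b a x => mul_smul (φ b) a x⟩
  have : IsScalarTower B A X := ⟨fun b a x => mul_smul (φ b) a x⟩
  replace h : IsFiniteLength B A := h
  change IsFiniteLength B X
  exact isFiniteLength_trans (M := X) h

variable (φ) in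
theorem isFiniteLength_resMod_of_isArtinianRing [IsArtinianRing R] [Module.Finite R A] :
    IsFiniteLength B (resMod φ (ModuleCat.of A A)) := by
  let : Module B A := Module.compHom A φ.toRingHom
  have : IsScalarTower R B A := ⟨fun r b a => by
    change φ (r • b) * a = r • (φ b * a)
    rw [map_smul, smul_mul_assoc]⟩
  have hA : IsFiniteLength R A := isFiniteLength_iff_isNoetherian_isArtinian.mpr
    ⟨inferInstance, inferInstance⟩
  change IsFiniteLength B A
  exact isFiniteLength_of_tower R hA

theorem statement5_general (φ : B →ₐ[R] A) (hA : IsFiniteLength B (resMod φ (ModuleCat.of A A)))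
    (hB : RepFinite B) :
    ClassRepFinite A (fun X => Module.Finite A X ∧ RelProjective φ X) := by
  obtain ⟨M, _, hM⟩ := hB.exists_forall_inAdd
  let : Module R M := Module.compHom M (algebraMap R B)
  have : IsScalarTower R B M := .of_algebraMap_smul fun _ _ => rfl
  have : Module.Finite A (ModuleCat.of A (InducedModule φ M)) := InducedModule.finite φ M
  have hlength : IsFiniteLength A (ModuleCat.of A (InducedModule φ M)) :=
    isFiniteLength_of_resMod (isFiniteLength_resMod hA _)
  obtain ⟨k, Z, hZ⟩ := classRepFinite_inAdd hlength
  refine ⟨k, Z, fun X hX hind => hZ X ?_ hind⟩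
  obtain ⟨_, hrel⟩ := hX
  exact hrel.inAdd_induced (hM _ (isFiniteLength_resMod hA X))

end RelativelyProjective

/-- If `B` is representation-finite, there are only finitely many isomorphism
classes of indecomposable `(A,B)`-projective finitely generated `A`-modules. -/
theorem statement5 (φ : B →ₐ[R] A) (hB : RepFinite B) :
    ClassRepFinite A (fun X => Module.Finite A X ∧ RelProjective φ X) :=
  statement5_general φ (isFiniteLength_resMod_of_isArtinianRing φ) hB
end

section
/- Let B be a subalgebra of an Artin algebra A with the same identity such that rad(B) is a left ideal of A and rad(B)·A = rad(A). If B is representation-finite, then the finitistic dimension of A is finite. -/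
universe u

open TensorProduct

variable {R : Type u} [CommRing R] [IsArtinianRing R]
  {A : Type u} [Ring A] [Algebra R A] [Module.Finite R A]

/-!
Stable isomorphism classes of finitely generated modules over an Artinian ring form, by
Krull–Schmidt, a cancellative commutative monoid on which the syzygy operator `Ω` acts.

Consider a short exact sequence `0 → X → Y → Z → 0` whose first two terms have classes `x`, `y` in
a fixed finitely generated submonoid, and suppose that `Z` has finite projective dimension. Then
`Ωᵏ x = Ωᵏ y` for large `k`, and since the submonoid spans a Noetherian `ℤ`-module in the
Grothendieck group, this already holds for a bounded `k = n`. The sequence of `n`-th syzygies thus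
involves an endomorphism of `Ωⁿ X` up to projective modules. By Fitting's lemma only its nilpotent
part matters, and on that part the long exact `Ext` sequence forces finite projective dimension.
Being a summand of `Ωⁿ X`, this part ranges over a finitely generated submonoid as well, which
bounds its projective dimension, and hence that of `Z` (Igusa and Todorov).

With `J = rad B`, the sequence `0 → Ω (M ⧸ J M) → J M ⊕ P → M → 0` is of this type for every `M`.
Indeed `M ⧸ J M` is annihilated by `rad A`, hence is a summand of a power of `A ⧸ rad A`. On the
other hand, since `A J = J ⊆ B`, the `A`-module `J Y` depends additively on the isomorphism class
of the `B`-module `Y` alone, so finitely many indecomposable `B`-modules yield finitely many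
classes generating all `J M`.
-/

section DirectSummands

variable {Λ : Type*} [Ring Λ]

/-- `Y` is isomorphic to a direct summand of `M`, encoded by a split injection. -/
def IsSummand (Λ : Type*) [Ring Λ] (Y M : Type*) [AddCommGroup Y] [Module Λ Y]
    [AddCommGroup M] [Module Λ M] : Prop :=
  ∃ (i : Y →ₗ[Λ] M) (p : M →ₗ[Λ] Y), p ∘ₗ i = LinearMap.id

variable {M N C W Y : Type*} [AddCommGroup M] [Module Λ M] [AddCommGroup N] [Module Λ N]
  [AddCommGroup C] [Module Λ C] [AddCommGroup W] [Module Λ W] [AddCommGroup Y] [Module Λ Y]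

lemma isCompl_range_ker_of_bijective_comp {j : C →ₗ[Λ] W} {p : W →ₗ[Λ] Y}
    (h : Function.Bijective (p ∘ₗ j)) : IsCompl (LinearMap.range j) (LinearMap.ker p) := by
  refine IsCompl.of_le ?_ fun w _ => ?_
  · rintro _ ⟨⟨c, rfl⟩, hc⟩
    have : c = 0 := h.1 (by simpa using hc)
    simp [this]
  · obtain ⟨c, hc⟩ := h.2 (p w)
    rw [← add_sub_cancel (j c) w]
    exact Submodule.add_mem_sup (LinearMap.mem_range_self j c) (by
      rw [LinearMap.mem_ker, map_sub, sub_eq_zero, ← hc, LinearMap.comp_apply])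

lemma IsSummand.exists_equiv_prod (h : IsSummand Λ Y M) :
    ∃ K : Submodule Λ M, Nonempty ((Y × K) ≃ₗ[Λ] M) := by
  obtain ⟨i, p, h⟩ := h
  have hinj : Function.Injective i := Function.LeftInverse.injective (LinearMap.congr_fun h)
  have hc : IsCompl (LinearMap.range i) (LinearMap.ker p) :=
    isCompl_range_ker_of_bijective_comp (by rw [h]; exact Function.bijective_id)
  exact ⟨LinearMap.ker p, ⟨((LinearEquiv.ofInjective i hinj).prodCongr (.refl Λ _)).trans
    (Submodule.prodEquivOfIsCompl _ _ hc)⟩⟩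

lemma isLocalRing_end_of_indecomposable [IsNoetherian Λ Y] [IsArtinian Λ Y] [Nontrivial Y]
    (h : ∀ N₁ N₂ : Submodule Λ Y, IsCompl N₁ N₂ → N₁ = ⊥ ∨ N₂ = ⊥) :
    IsLocalRing (Module.End Λ Y) where
  isUnit_or_isUnit_of_add_one {a b} hab := by
    obtain ⟨n, hn⟩ := (LinearMap.eventually_isCompl_ker_pow_range_pow a).exists_forall_of_atTop
    obtain hker | hrange := h _ _ (hn (n + 1) n.le_succ)
    · left
      rw [Module.End.isUnit_iff]
      refine IsArtinian.bijective_of_injective_endomorphism a (LinearMap.ker_eq_bot.1 ?_)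
      rw [eq_bot_iff, ← hker, pow_succ]
      exact LinearMap.ker_le_ker_comp a (a ^ n)
    · right
      rw [eq_sub_of_add_eq' hab]
      exact IsNilpotent.isUnit_one_sub ⟨n + 1, LinearMap.range_eq_bot.1 hrange⟩

lemma IsSummand.of_prod [IsLocalRing (Module.End Λ Y)] (h : IsSummand Λ Y (M × N)) :
    IsSummand Λ Y M ∨ IsSummand Λ Y N := by
  obtain ⟨i, p, h⟩ := h
  have hadd : (p ∘ₗ LinearMap.inl Λ M N) ∘ₗ (LinearMap.fst Λ M N ∘ₗ i) +
      (p ∘ₗ LinearMap.inr Λ M N) ∘ₗ (LinearMap.snd Λ M N ∘ₗ i) = (1 : Module.End Λ Y) := by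
    ext y
    simpa [← map_add] using LinearMap.congr_fun h y
  refine (IsLocalRing.isUnit_or_isUnit_of_add_one hadd).imp ?_ ?_ <;>
  · intro hu
    obtain ⟨v, hv⟩ := hu.exists_left_inv
    exact ⟨_, v ∘ₗ p ∘ₗ _, hv⟩

lemma IsSummand.nonempty_equiv [IsLocalRing (Module.End Λ M)] [Nontrivial Y]
    (h : IsSummand Λ Y M) : Nonempty (Y ≃ₗ[Λ] M) := by
  obtain ⟨i, p, h⟩ := h
  have hpi : ∀ y, p (i y) = y := LinearMap.congr_fun h
  obtain hu | hu := IsLocalRing.isUnit_or_isUnit_of_add_one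
    (add_sub_cancel (i ∘ₗ p) (1 : Module.End Λ M)) <;> rw [Module.End.isUnit_iff] at hu
  · exact ⟨LinearEquiv.ofBijective i
      ⟨Function.LeftInverse.injective hpi, .of_comp (g := p) hu.2⟩⟩
  · obtain ⟨y, hy⟩ := exists_ne (0 : Y)
    have hiy : i y = 0 := hu.1 (by simp [hpi])
    exact absurd (by rw [← hpi y, hiy, map_zero]) hy

/-- The section is one of `j₁`, `j₂`, `j₁ + j₂`. -/
lemma exists_common_section [IsLocalRing (Module.End Λ C)] {p₁ p₂ : W →ₗ[Λ] C}
    {j₁ j₂ : C →ₗ[Λ] W} (h₁ : p₁ ∘ₗ j₁ = LinearMap.id) (h₂ : p₂ ∘ₗ j₂ = LinearMap.id) :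
    ∃ j : C →ₗ[Λ] W, Function.Bijective (p₁ ∘ₗ j) ∧ Function.Bijective (p₂ ∘ₗ j) := by
  have hunit (a : Module.End Λ C) (ha : ¬ IsUnit a) : IsUnit (1 + a) :=
    (IsLocalRing.isUnit_or_isUnit_of_add_one (b := -a) (by abel)).resolve_right (by simpa using ha)
  simp only [← Module.End.isUnit_iff]
  by_cases h₁₂ : IsUnit (p₁ ∘ₗ j₂ : Module.End Λ C)
  · exact ⟨j₂, h₁₂, h₂ ▸ isUnit_one⟩
  by_cases h₂₁ : IsUnit (p₂ ∘ₗ j₁ : Module.End Λ C)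
  · exact ⟨j₁, h₁ ▸ isUnit_one, h₂₁⟩
  · refine ⟨j₁ + j₂, ?_, ?_⟩
    · rw [LinearMap.comp_add, h₁]
      exact hunit _ h₁₂
    · rw [LinearMap.comp_add, h₂, add_comm]
      exact hunit _ h₂₁

lemma nonempty_equiv_of_exact_of_exact [IsLocalRing (Module.End Λ C)]
    {f₁ : M →ₗ[Λ] W} {f₂ : N →ₗ[Λ] W} {p₁ p₂ : W →ₗ[Λ] C} {j₁ j₂ : C →ₗ[Λ] W}
    (hf₁ : Function.Injective f₁) (hf₂ : Function.Injective f₂)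
    (hfp₁ : Function.Exact f₁ p₁) (hfp₂ : Function.Exact f₂ p₂)
    (h₁ : p₁ ∘ₗ j₁ = LinearMap.id) (h₂ : p₂ ∘ₗ j₂ = LinearMap.id) : Nonempty (M ≃ₗ[Λ] N) := by
  obtain ⟨j, hj₁, hj₂⟩ := exists_common_section h₁ h₂
  have eker : LinearMap.ker p₁ ≃ₗ[Λ] LinearMap.ker p₂ :=
    (Submodule.quotientEquivOfIsCompl _ _ (isCompl_range_ker_of_bijective_comp hj₁)).symm.trans
      (Submodule.quotientEquivOfIsCompl _ _ (isCompl_range_ker_of_bijective_comp hj₂))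
  rw [hfp₁.linearMap_ker_eq, hfp₂.linearMap_ker_eq] at eker
  exact ⟨((LinearEquiv.ofInjective f₁ hf₁).trans eker).trans (LinearEquiv.ofInjective f₂ hf₂).symm⟩

lemma nonempty_equiv_of_prod_equiv_prod [IsLocalRing (Module.End Λ C)]
    (e : (M × C) ≃ₗ[Λ] (N × C)) : Nonempty (M ≃ₗ[Λ] N) :=
  nonempty_equiv_of_exact_of_exact (f₁ := LinearMap.inl Λ M C) (p₁ := LinearMap.snd Λ M C)
    (f₂ := e.symm.toLinearMap ∘ₗ LinearMap.inl Λ N C)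
    (p₂ := LinearMap.snd Λ N C ∘ₗ e.toLinearMap) (j₁ := LinearMap.inr Λ M C)
    (j₂ := e.symm.toLinearMap ∘ₗ LinearMap.inr Λ N C) LinearMap.inl_injective
    (e.symm.injective.comp LinearMap.inl_injective) .inl_snd
    (fun w => by simpa [LinearEquiv.symm_apply_eq] using Function.Exact.inl_snd (R := Λ) (e w))
    (by ext; simp) (by ext; simp)

lemma nonempty_prod_equiv_sup_of_disjoint {N₁ N₂ : Submodule Λ M} (h : Disjoint N₁ N₂) :
    Nonempty ((N₁ × N₂) ≃ₗ[Λ] ↥(N₁ ⊔ N₂)) := by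
  have hinj : Function.Injective (N₁.subtype.coprod N₂.subtype) := by
    rw [← LinearMap.ker_eq_bot, LinearMap.ker_coprod_of_disjoint_range]
    · simp
    · simpa using h
  exact ⟨(LinearEquiv.ofInjective _ hinj).trans
    (LinearEquiv.ofEq _ _ (by simp [LinearMap.range_coprod]))⟩

lemma map_subtype_lt_of_isCompl {N : Submodule Λ M} {K L : Submodule Λ N} (h : IsCompl K L)
    (hL : L ≠ ⊥) : K.map N.subtype < N := by
  refine lt_of_le_of_ne (Submodule.map_subtype_le _ _) fun hK => hL ?_
  have hK' : K = ⊤ := Submodule.map_injective_of_injective N.injective_subtype (by simp [hK])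
  simpa [hK'] using h.inf_eq_bot

@[elab_as_elim]
lemma submodule_decomposition_induction [IsArtinian Λ M] {p : Submodule Λ M → Prop}
    (bot : p ⊥)
    (indecomposable : ∀ N : Submodule Λ M, Nontrivial N →
      (∀ N₁ N₂ : Submodule Λ N, IsCompl N₁ N₂ → N₁ = ⊥ ∨ N₂ = ⊥) → p N)
    (sup : ∀ N₁ N₂ : Submodule Λ M, Disjoint N₁ N₂ → p N₁ → p N₂ → p (N₁ ⊔ N₂))
    (N : Submodule Λ M) : p N := by
  induction N using WellFoundedLT.induction with
  | ind N ih =>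
    by_cases hbot : N = ⊥
    · rwa [hbot]
    by_cases hindec : ∀ N₁ N₂ : Submodule Λ N, IsCompl N₁ N₂ → N₁ = ⊥ ∨ N₂ = ⊥
    · exact indecomposable N (Submodule.nontrivial_iff_ne_bot.2 hbot) hindec
    push Not at hindec
    obtain ⟨N₁, N₂, hc, hN₁, hN₂⟩ := hindec
    have hsup : N₁.map N.subtype ⊔ N₂.map N.subtype = N := by
      rw [← Submodule.map_sup, hc.sup_eq_top, Submodule.map_subtype_top]
    have hdisj : Disjoint (N₁.map N.subtype) (N₂.map N.subtype) :=
      (Submodule.disjoint_map N.injective_subtype hc.disjoint)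
    rw [← hsup]
    exact sup _ _ hdisj (ih _ (map_subtype_lt_of_isCompl hc hN₂))
      (ih _ (map_subtype_lt_of_isCompl hc.symm hN₁))

end DirectSummands

section StableClasses

variable {Λ : Type u} [Ring Λ]

/-- Two modules are stably isomorphic if they become isomorphic after adding finitely generated
projective modules. -/
def StablyIso (Λ : Type u) [Ring Λ] (M N : Type u) [AddCommGroup M] [Module Λ M]
    [AddCommGroup N] [Module Λ N] : Prop :=
  ∃ P Q : FGModuleCat.{u} Λ, Module.Projective Λ P ∧ Module.Projective Λ Q ∧
    Nonempty ((M × P) ≃ₗ[Λ] (N × Q))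

section

variable {M N K L : Type u} [AddCommGroup M] [Module Λ M] [AddCommGroup N] [Module Λ N]
  [AddCommGroup K] [Module Λ K] [AddCommGroup L] [Module Λ L]

lemma StablyIso.of_equiv (e : M ≃ₗ[Λ] N) : StablyIso Λ M N :=
  ⟨.of Λ PUnit, .of Λ PUnit, inferInstanceAs (Module.Projective Λ PUnit.{u + 1}),
    inferInstanceAs (Module.Projective Λ PUnit.{u + 1}), ⟨e.prodCongr (.refl Λ _)⟩⟩

lemma StablyIso.symm (h : StablyIso Λ M N) : StablyIso Λ N M := by
  obtain ⟨P, Q, hP, hQ, ⟨e⟩⟩ := h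
  exact ⟨Q, P, hQ, hP, ⟨e.symm⟩⟩

lemma StablyIso.prod (h : StablyIso Λ M N) (h' : StablyIso Λ K L) :
    StablyIso Λ (M × K) (N × L) := by
  obtain ⟨P, Q, _, _, ⟨e⟩⟩ := h
  obtain ⟨P', Q', _, _, ⟨e'⟩⟩ := h'
  exact ⟨.of Λ (P × P'), .of Λ (Q × Q'), inferInstanceAs (Module.Projective Λ (P × P')),
    inferInstanceAs (Module.Projective Λ (Q × Q')),
    ⟨((LinearEquiv.prodProdProdComm Λ M K P P').trans (e.prodCongr e')).trans
      (LinearEquiv.prodProdProdComm Λ N L Q Q').symm⟩⟩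

lemma StablyIso.trans (h : StablyIso Λ M N) (h' : StablyIso Λ N K) : StablyIso Λ M K := by
  obtain ⟨P, Q, _, _, ⟨e⟩⟩ := h
  obtain ⟨P', Q', _, _, ⟨e'⟩⟩ := h'
  have eMN : (M × P × P') ≃ₗ[Λ] (N × Q × P') := (LinearEquiv.prodAssoc Λ M P P').symm.trans
    ((e.prodCongr (.refl Λ P')).trans (LinearEquiv.prodAssoc Λ N Q P'))
  have eNK : (N × P' × Q) ≃ₗ[Λ] (K × Q' × Q) := (LinearEquiv.prodAssoc Λ N P' Q).symm.trans
    ((e'.prodCongr (.refl Λ Q)).trans (LinearEquiv.prodAssoc Λ K Q' Q))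
  exact ⟨.of Λ (P × P'), .of Λ (Q' × Q), inferInstanceAs (Module.Projective Λ (P × P')),
    inferInstanceAs (Module.Projective Λ (Q' × Q)),
    ⟨(eMN.trans ((LinearEquiv.refl Λ N).prodCongr (LinearEquiv.prodComm Λ Q P'))).trans eNK⟩⟩

end

instance stableSetoid (Λ : Type u) [Ring Λ] : Setoid (FGModuleCat.{u} Λ) where
  r M N := StablyIso Λ M N
  iseqv := ⟨fun _ => .of_equiv (.refl Λ _), StablyIso.symm, StablyIso.trans⟩

/-- The stable isomorphism classes of finitely generated modules, a commutative monoid under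
direct sum whose zero is the class of the projective modules. -/
def StableClass (Λ : Type u) [Ring Λ] : Type (u + 1) := Quotient (stableSetoid Λ)

/-- The stable isomorphism class of a finitely generated module. -/
def stableClass (Λ : Type u) [Ring Λ] (M : Type u) [AddCommGroup M] [Module Λ M]
    [Module.Finite Λ M] : StableClass Λ :=
  Quotient.mk _ (.of Λ M)

@[elab_as_elim]
lemma StableClass.ind {p : StableClass Λ → Prop}
    (h : ∀ M : FGModuleCat.{u} Λ, p (stableClass Λ M)) (s : StableClass Λ) : p s :=
  Quotient.ind h s

section

variable {M N : Type u} [AddCommGroup M] [Module Λ M] [Module.Finite Λ M]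
  [AddCommGroup N] [Module Λ N] [Module.Finite Λ N]

lemma stableClass_eq_iff : stableClass Λ M = stableClass Λ N ↔ StablyIso Λ M N :=
  Quotient.eq

lemma stableClass_congr (e : M ≃ₗ[Λ] N) : stableClass Λ M = stableClass Λ N :=
  stableClass_eq_iff.2 (.of_equiv e)

end

instance : Zero (StableClass Λ) := ⟨stableClass Λ PUnit⟩

instance : Add (StableClass Λ) :=
  ⟨Quotient.map₂ (fun M N => .of Λ (M × N)) fun _ _ h _ _ h' => StablyIso.prod h h'⟩

lemma stableClass_prod (M N : Type u) [AddCommGroup M] [Module Λ M] [Module.Finite Λ M]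
    [AddCommGroup N] [Module Λ N] [Module.Finite Λ N] :
    stableClass Λ (M × N) = stableClass Λ M + stableClass Λ N := rfl

lemma stableClass_punit : stableClass Λ PUnit = 0 := rfl

instance : AddCommMonoid (StableClass Λ) where
  add_assoc a b c := by
    induction a using StableClass.ind with | h M
    induction b using StableClass.ind with | h N
    induction c using StableClass.ind with | h K
    exact stableClass_congr (LinearEquiv.prodAssoc Λ M N K)
  zero_add a := by
    induction a using StableClass.ind with | h M
    exact stableClass_congr (M := PUnit × M) LinearEquiv.uniqueProd
  add_zero a := by
    induction a using StableClass.ind with | h M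
    exact stableClass_congr (M := M × PUnit) LinearEquiv.prodUnique
  add_comm a b := by
    induction a using StableClass.ind with | h M
    induction b using StableClass.ind with | h N
    exact stableClass_congr (LinearEquiv.prodComm Λ M N)
  nsmul := nsmulRec

lemma stableClass_eq_zero_iff {M : Type u} [AddCommGroup M] [Module Λ M] [Module.Finite Λ M] :
    stableClass Λ M = 0 ↔ Module.Projective Λ M := by
  rw [← stableClass_punit, stableClass_eq_iff]
  constructor
  · rintro ⟨P, Q, _, _, ⟨e⟩⟩
    have : Module.Projective Λ (M × P) := .of_equiv e.symm
    exact .of_split (LinearMap.inl Λ M P) (LinearMap.fst Λ M P) (LinearMap.fst_comp_inl ..)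
  · intro hM
    exact ⟨.of Λ PUnit, .of Λ M, inferInstanceAs (Module.Projective Λ PUnit.{u + 1}), hM,
      ⟨LinearEquiv.prodComm Λ M PUnit.{u + 1}⟩⟩

lemma StableClass.eq_zero_of_add_eq_zero {a b : StableClass Λ} (h : a + b = 0) : a = 0 := by
  induction a using StableClass.ind with | h M
  induction b using StableClass.ind with | h N
  rw [← stableClass_prod, stableClass_eq_zero_iff] at h
  exact stableClass_eq_zero_iff.2
    (.of_split (LinearMap.inl Λ M N) (LinearMap.fst Λ M N) (LinearMap.fst_comp_inl ..))

lemma IsSummand.exists_stableClass_add_eq {Y M : Type u} [AddCommGroup Y] [Module Λ Y]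
    [Module.Finite Λ Y] [AddCommGroup M] [Module Λ M] [Module.Finite Λ M]
    (h : IsSummand Λ Y M) : ∃ c, stableClass Λ Y + c = stableClass Λ M := by
  obtain ⟨K, ⟨e⟩⟩ := h.exists_equiv_prod
  have : Module.Finite Λ K := .of_surjective (LinearMap.snd Λ Y K ∘ₗ e.symm.toLinearMap)
    (Prod.snd_surjective.comp e.symm.surjective)
  exact ⟨stableClass Λ K, stableClass_congr e⟩

end StableClasses

section KrullSchmidt

variable {Λ : Type u} [Ring Λ]

/-- The stable classes of modules with a local endomorphism ring. -/
def localClasses (Λ : Type u) [Ring Λ] : Set (StableClass Λ) :=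
  {s | ∃ Y : FGModuleCat.{u} Λ, IsLocalRing (Module.End Λ Y) ∧ stableClass Λ Y = s}

lemma closure_localClasses [IsArtinianRing Λ] :
    AddSubmonoid.closure (localClasses Λ) = ⊤ := by
  refine eq_top_iff.2 fun s _ => ?_
  induction s using StableClass.ind with | h M
  suffices ∀ N : Submodule Λ M, stableClass Λ N ∈ AddSubmonoid.closure (localClasses Λ) by
    rw [← stableClass_congr Submodule.topEquiv]
    exact this ⊤
  intro N
  induction N using submodule_decomposition_induction with
  | bot =>
    rw [stableClass_eq_zero_iff.2 inferInstance]
    exact zero_mem _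
  | indecomposable N _ h =>
    exact AddSubmonoid.subset_closure ⟨.of Λ N, isLocalRing_end_of_indecomposable h, rfl⟩
  | sup N₁ N₂ h h₁ h₂ =>
    obtain ⟨e⟩ := nonempty_prod_equiv_sup_of_disjoint h
    rw [← stableClass_congr e, stableClass_prod]
    exact add_mem h₁ h₂

lemma add_right_cancel_of_mem_localClasses {a b c : StableClass Λ} (hc : c ∈ localClasses Λ)
    (h : a + c = b + c) : a = b := by
  obtain ⟨C, _, rfl⟩ := hc
  induction a using StableClass.ind with | h M
  induction b using StableClass.ind with | h N
  obtain ⟨P, Q, hP, hQ, ⟨e⟩⟩ := stableClass_eq_iff (M := M × C) (N := N × C).1 h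
  have swap (X Y : Type u) [AddCommGroup X] [Module Λ X] [AddCommGroup Y] [Module Λ Y] :
      ((X × C) × Y) ≃ₗ[Λ] ((X × Y) × C) :=
    (LinearEquiv.prodAssoc Λ X C Y).trans (((LinearEquiv.refl Λ X).prodCongr
      (LinearEquiv.prodComm Λ C Y)).trans (LinearEquiv.prodAssoc Λ X Y C).symm)
  obtain ⟨e'⟩ := nonempty_equiv_of_prod_equiv_prod (((swap M P).symm.trans e).trans (swap N Q))
  exact stableClass_eq_iff.2 ⟨P, Q, hP, hQ, ⟨e'⟩⟩

instance [IsArtinianRing Λ] : IsCancelAdd (StableClass Λ) := by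
  have : IsRightCancelAdd (StableClass Λ) := ⟨fun c a b h => by
    have hc : c ∈ AddSubmonoid.closure (localClasses Λ) := by simp [closure_localClasses]
    induction hc using AddSubmonoid.closure_induction generalizing a b with
    | mem c hc => exact add_right_cancel_of_mem_localClasses hc h
    | zero => simpa using h
    | add c d _ _ hc hd => exact hc _ _ (hd _ _ (by simpa [add_assoc] using h))⟩
  exact AddCommMagma.IsRightCancelAdd.toIsCancelAdd _

end KrullSchmidt

section LocalSummands

variable {Λ : Type u} [Ring Λ]

/-- The stable classes of modules with a local endomorphism ring that are summands of `s`. -/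
def localSummands (s : StableClass Λ) : Set (StableClass Λ) :=
  {p ∈ localClasses Λ | ∃ c, p + c = s}

lemma eq_zero_or_isSummand {Y M : Type u} [AddCommGroup Y] [Module Λ Y] [Module.Finite Λ Y]
    [AddCommGroup M] [Module Λ M] [Module.Finite Λ M] [IsLocalRing (Module.End Λ Y)]
    {c : StableClass Λ} (h : stableClass Λ Y + c = stableClass Λ M) :
    stableClass Λ Y = 0 ∨ IsSummand Λ Y M := by
  induction c using StableClass.ind with | h C
  obtain ⟨P, Q, _, _, ⟨e⟩⟩ := stableClass_eq_iff.1 (stableClass_prod (Λ := Λ) Y C ▸ h)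
  have hY : IsSummand Λ Y (M × Q) :=
    ⟨e.toLinearMap ∘ₗ LinearMap.inl Λ _ P ∘ₗ LinearMap.inl Λ Y C,
      LinearMap.fst Λ Y C ∘ₗ LinearMap.fst Λ _ P ∘ₗ e.symm.toLinearMap, by ext; simp⟩
  obtain hM | ⟨i, p, hip⟩ := hY.of_prod
  · exact .inr hM
  · exact .inl (stableClass_eq_zero_iff.2 (.of_split i p hip))

lemma localSummands_add_subset (a b : StableClass Λ) :
    localSummands (a + b) ⊆ localSummands a ∪ localSummands b := by
  rintro p ⟨hp, c, hc⟩
  obtain ⟨Y, _, rfl⟩ := id hp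
  induction a using StableClass.ind with | h M
  induction b using StableClass.ind with | h N
  obtain h0 | h := eq_zero_or_isSummand (M := M × N) hc
  · exact .inl ⟨hp, stableClass Λ M, by rw [h0, zero_add]⟩
  · exact h.of_prod.imp (fun h => ⟨hp, h.exists_stableClass_add_eq⟩)
      (fun h => ⟨hp, h.exists_stableClass_add_eq⟩)

lemma localSummands_subset_add_right (a b : StableClass Λ) :
    localSummands a ⊆ localSummands (a + b) := by
  rintro p ⟨hp, c, rfl⟩
  exact ⟨hp, c + b, (add_assoc ..).symm⟩

lemma localSummands_zero_subset : localSummands (0 : StableClass Λ) ⊆ {0} := by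
  rintro p ⟨-, c, hc⟩
  exact StableClass.eq_zero_of_add_eq_zero hc

lemma localSummands_subset_pair {q : StableClass Λ} (hq : q ∈ localClasses Λ) :
    localSummands q ⊆ {0, q} := by
  obtain ⟨Z, _, rfl⟩ := hq
  rintro _ ⟨⟨Y, hY, rfl⟩, c, hc⟩
  refine (eq_zero_or_isSummand hc).imp_right fun h => ?_
  have : Nontrivial Y := by
    by_contra hsub
    rw [not_nontrivial_iff_subsingleton] at hsub
    exact false_of_nontrivial_of_subsingleton (Module.End Λ Y)
  obtain ⟨e⟩ := h.nonempty_equiv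
  exact stableClass_congr e

variable [IsArtinianRing Λ]

lemma finite_localSummands (s : StableClass Λ) : (localSummands s).Finite := by
  have hs : s ∈ AddSubmonoid.closure (localClasses Λ) := by simp [closure_localClasses]
  induction hs using AddSubmonoid.closure_induction with
  | mem q hq => exact (Set.toFinite {0, q}).subset (localSummands_subset_pair hq)
  | zero => exact (Set.finite_singleton 0).subset localSummands_zero_subset
  | add a b _ _ ha hb => exact (ha.union hb).subset (localSummands_add_subset a b)

lemma mem_closure_localSummands (s : StableClass Λ) :
    s ∈ AddSubmonoid.closure (localSummands s) := by
  have hs : s ∈ AddSubmonoid.closure (localClasses Λ) := by simp [closure_localClasses]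
  induction hs using AddSubmonoid.closure_induction with
  | mem q hq => exact AddSubmonoid.subset_closure ⟨hq, 0, add_zero q⟩
  | zero => exact zero_mem _
  | add a b _ _ ha hb =>
    exact add_mem (AddSubmonoid.closure_mono (localSummands_subset_add_right a b) ha)
      (AddSubmonoid.closure_mono (add_comm b a ▸ localSummands_subset_add_right b a) hb)

lemma exists_finite_forall_summand_mem_closure {U : Set (StableClass Λ)} (hU : U.Finite) :
    ∃ T : Set (StableClass Λ), T.Finite ∧
      ∀ a b, a + b ∈ AddSubmonoid.closure U → a ∈ AddSubmonoid.closure T := by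
  refine ⟨{0} ∪ ⋃ u ∈ U, localSummands u, (Set.finite_singleton 0).union
    (hU.biUnion fun u _ => finite_localSummands u), fun a b hab => ?_⟩
  suffices localSummands (a + b) ⊆ {0} ∪ ⋃ u ∈ U, localSummands u from
    AddSubmonoid.closure_mono ((localSummands_subset_add_right a b).trans this)
      (mem_closure_localSummands a)
  generalize a + b = s at hab
  induction hab using AddSubmonoid.closure_induction with
  | mem u hu => exact (Set.subset_biUnion_of_mem hu).trans Set.subset_union_right
  | zero => exact localSummands_zero_subset.trans Set.subset_union_left
  | add a b _ _ ha hb => exact (localSummands_add_subset a b).trans (Set.union_subset ha hb)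

end LocalSummands

section Syzygies

variable {Λ : Type u} [Ring Λ]

section

variable {X Y Z P : Type*} [AddCommGroup X] [Module Λ X] [AddCommGroup Y] [Module Λ Y]
  [AddCommGroup Z] [Module Λ Z] [AddCommGroup P] [Module Λ P]

lemma surjective_ker_subtype_coprod {g : Y →ₗ[Λ] Z} {s : P →ₗ[Λ] Y}
    (hs : Function.Surjective (g ∘ₗ s)) :
    Function.Surjective ((LinearMap.ker g).subtype.coprod s) := by
  intro y
  obtain ⟨p, hp⟩ := hs (g y)
  exact ⟨(⟨y - s p, by rw [LinearMap.mem_ker, map_sub, sub_eq_zero]; exact hp.symm⟩, p), by simp⟩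

/-- The kernel of `ker g × P → Y` is the kernel of `P → Y → Z`; this rotates a short exact
sequence one step to the left when `P` is a projective module mapping onto `Z`. -/
def kerCoprodEquiv (g : Y →ₗ[Λ] Z) (s : P →ₗ[Λ] Y) :
    LinearMap.ker ((LinearMap.ker g).subtype.coprod s) ≃ₗ[Λ] LinearMap.ker (g ∘ₗ s) where
  toFun w := ⟨w.1.2, by
    have hw : (w.1.1 : Y) + s w.1.2 = 0 := w.2
    have hg : g w.1.1 = 0 := w.1.1.2
    simpa [hg] using congrArg g hw⟩
  map_add' _ _ := rfl
  map_smul' _ _ := rfl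
  invFun p := ⟨(⟨-s p.1, by
    have hp : g (s p.1) = 0 := p.2
    simp [hp]⟩, p.1), by simp⟩
  left_inv w := by
    have hw : (w.1.1 : Y) + s w.1.2 = 0 := w.2
    ext
    · exact (eq_neg_of_add_eq_zero_left hw).symm
    · rfl
  right_inv _ := rfl

lemma nonempty_equiv_ker_prod_of_projective [Module.Projective Λ Z] {g : Y →ₗ[Λ] Z}
    (hg : Function.Surjective g) : Nonempty (Y ≃ₗ[Λ] LinearMap.ker g × Z) := by
  obtain ⟨s, hs⟩ := Module.projective_lifting_property g LinearMap.id hg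
  exact ⟨(((LinearMap.exact_subtype_ker_map g).splitSurjectiveEquiv
    (LinearMap.ker g).injective_subtype) ⟨s, hs⟩).1⟩

end

section

variable {M N P Q : Type u} [AddCommGroup M] [Module Λ M] [AddCommGroup N] [Module Λ N]
  [AddCommGroup P] [Module Λ P] [Module.Finite Λ P]
  [AddCommGroup Q] [Module Λ Q] [Module.Finite Λ Q]

lemma schanuel [Module.Projective Λ P] [Module.Projective Λ Q] {f : P →ₗ[Λ] M} {g : Q →ₗ[Λ] M}
    (hf : Function.Surjective f) (hg : Function.Surjective g) :
    StablyIso Λ (LinearMap.ker f) (LinearMap.ker g) := by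
  obtain ⟨s, rfl⟩ := Module.projective_lifting_property f g hf
  obtain ⟨e⟩ := nonempty_equiv_ker_prod_of_projective (surjective_ker_subtype_coprod hg)
  exact ⟨.of Λ Q, .of Λ P, ‹_›, ‹_›, ⟨e.trans ((kerCoprodEquiv f s).prodCongr (.refl Λ P))⟩⟩

variable [IsNoetherianRing Λ]

lemma stableClass_ker_eq_of_equiv [Module.Projective Λ P] [Module.Projective Λ Q]
    {f : P →ₗ[Λ] M} {g : Q →ₗ[Λ] N} (hf : Function.Surjective f) (hg : Function.Surjective g)
    (e : M ≃ₗ[Λ] N) : stableClass Λ (LinearMap.ker f) = stableClass Λ (LinearMap.ker g) := by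
  rw [stableClass_eq_iff, ← LinearEquiv.ker_comp e f]
  exact schanuel (e.surjective.comp hf) hg

lemma stableClass_ker_prodMap (f : P →ₗ[Λ] M) (g : Q →ₗ[Λ] N) :
    stableClass Λ (LinearMap.ker (f.prodMap g)) =
      stableClass Λ (LinearMap.ker f) + stableClass Λ (LinearMap.ker g) := by
  rw [← stableClass_prod]
  have hinj : Function.Injective
      ((LinearMap.ker f).subtype.prodMap (LinearMap.ker g).subtype) :=
    (LinearMap.ker f).injective_subtype.prodMap (LinearMap.ker g).injective_subtype
  exact (stableClass_congr ((LinearEquiv.ofInjective _ hinj).trans (LinearEquiv.ofEq _ _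
    (by simp [LinearMap.range_prodMap, LinearMap.ker_prodMap])))).symm

end

/-- A presentation of a finitely generated module by a finitely generated free module. -/
noncomputable def freePresentation (Λ : Type u) [Ring Λ] (M : Type u) [AddCommGroup M]
    [Module Λ M] [Module.Finite Λ M] :
    (Fin (Module.Finite.exists_fin' Λ M).choose → Λ) →ₗ[Λ] M :=
  (Module.Finite.exists_fin' Λ M).choose_spec.choose

lemma freePresentation_surjective (M : Type u) [AddCommGroup M] [Module Λ M]
    [Module.Finite Λ M] : Function.Surjective (freePresentation Λ M) :=
  (Module.Finite.exists_fin' Λ M).choose_spec.choose_spec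

variable [IsNoetherianRing Λ]

lemma stableClass_ker_freePresentation_congr {M N : Type u} [AddCommGroup M] [Module Λ M]
    [Module.Finite Λ M] [AddCommGroup N] [Module Λ N] [Module.Finite Λ N]
    (h : StablyIso Λ M N) : stableClass Λ (LinearMap.ker (freePresentation Λ M)) =
      stableClass Λ (LinearMap.ker (freePresentation Λ N)) := by
  obtain ⟨P, Q, _, _, ⟨e⟩⟩ := h
  have key := stableClass_ker_eq_of_equiv
    (f := (freePresentation Λ M).prodMap (LinearMap.id (M := P)))
    (g := (freePresentation Λ N).prodMap (LinearMap.id (M := Q)))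
    ((freePresentation_surjective M).prodMap Function.surjective_id)
    ((freePresentation_surjective N).prodMap Function.surjective_id) e
  have hzero (R : FGModuleCat.{u} Λ) :
      stableClass Λ (LinearMap.ker (LinearMap.id : R →ₗ[Λ] R)) = 0 := by
    rw [stableClass_eq_zero_iff, LinearMap.ker_id]
    infer_instance
  simpa only [stableClass_ker_prodMap, hzero, add_zero] using key

/-- The syzygy operator `Ω` on stable classes: the class of the kernel of any surjection from
a finitely generated projective module. -/
noncomputable def syzygy (Λ : Type u) [Ring Λ] [IsNoetherianRing Λ] :
    StableClass Λ →+ StableClass Λ where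
  toFun := Quotient.lift (fun M => stableClass Λ (LinearMap.ker (freePresentation Λ M)))
    fun _ _ => stableClass_ker_freePresentation_congr
  map_zero' := by
    have h := stableClass_ker_eq_of_equiv (freePresentation_surjective (Λ := Λ) PUnit.{u + 1})
      (g := LinearMap.id) Function.surjective_id (.refl Λ _)
    rw [LinearMap.ker_id] at h
    exact h.trans (stableClass_eq_zero_iff.2 inferInstance)
  map_add' a b := by
    induction a using StableClass.ind with | h M
    induction b using StableClass.ind with | h N
    have h := stableClass_ker_eq_of_equiv (freePresentation_surjective (Λ := Λ) (M × N))
      (g := (freePresentation Λ M).prodMap (freePresentation Λ N))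
      ((freePresentation_surjective M).prodMap (freePresentation_surjective N)) (.refl Λ _)
    exact h.trans (stableClass_ker_prodMap _ _)

lemma stableClass_ker {P M : Type u} [AddCommGroup P] [Module Λ P] [Module.Finite Λ P]
    [Module.Projective Λ P] [AddCommGroup M] [Module Λ M] [Module.Finite Λ M] {f : P →ₗ[Λ] M}
    (hf : Function.Surjective f) : stableClass Λ (LinearMap.ker f) = syzygy Λ (stableClass Λ M) :=
  stableClass_ker_eq_of_equiv hf (freePresentation_surjective M) (.refl Λ M)

lemma projDimLE_iff_iterate_syzygy {n : ℕ} {M : ModuleCat.{u} Λ} [Module.Finite Λ M] :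
    ProjDimLE Λ n M ↔ (syzygy Λ)^[n] (stableClass Λ M) = 0 := by
  induction n generalizing M with
  | zero => exact stableClass_eq_zero_iff.symm
  | succ n ih =>
    rw [Function.iterate_succ_apply]
    constructor
    · rintro ⟨P, g, _, _, hg, h⟩
      rw [← stableClass_ker hg]
      exact ih.1 h
    · intro h
      rw [← stableClass_ker (freePresentation_surjective (Λ := Λ) M)] at h
      exact ⟨.of Λ _, freePresentation Λ M, inferInstance, inferInstance,
        freePresentation_surjective M, ih.2 h⟩

lemma finFinDim_iff_iterate_syzygy : FinFinDim Λ ↔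
    ∃ n, ∀ s : StableClass Λ, (∃ k, (syzygy Λ)^[k] s = 0) → (syzygy Λ)^[n] s = 0 := by
  refine exists_congr fun n => ⟨fun h s => ?_, fun h M _ => ?_⟩
  · induction s using StableClass.ind with | h M
    simpa only [projDimLE_iff_iterate_syzygy] using h (.of Λ M) inferInstance
  · simpa only [projDimLE_iff_iterate_syzygy] using h (stableClass Λ M)

end Syzygies

section ExactTriples

variable {Λ : Type u} [Ring Λ] [IsNoetherianRing Λ]

/-- `x`, `y`, `z` are the stable classes of the terms of a short exact sequence of finitely
generated modules, the first term being written as the kernel of the second map. -/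
def IsExactTriple (x y z : StableClass Λ) : Prop :=
  ∃ (Y Z : FGModuleCat.{u} Λ) (g : Y →ₗ[Λ] Z), Function.Surjective g ∧
    stableClass Λ (LinearMap.ker g) = x ∧ stableClass Λ Y = y ∧ stableClass Λ Z = z

lemma isExactTriple_of_surjective {Y Z : Type u} [AddCommGroup Y] [Module Λ Y]
    [Module.Finite Λ Y] [AddCommGroup Z] [Module Λ Z] [Module.Finite Λ Z] {g : Y →ₗ[Λ] Z}
    (hg : Function.Surjective g) :
    IsExactTriple (stableClass Λ (LinearMap.ker g)) (stableClass Λ Y) (stableClass Λ Z) :=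
  ⟨.of Λ Y, .of Λ Z, g, hg, rfl, rfl, rfl⟩

lemma isExactTriple_of_exact {X Y Z : Type u} [AddCommGroup X] [Module Λ X] [Module.Finite Λ X]
    [AddCommGroup Y] [Module Λ Y] [Module.Finite Λ Y] [AddCommGroup Z] [Module Λ Z]
    [Module.Finite Λ Z] {i : X →ₗ[Λ] Y} {g : Y →ₗ[Λ] Z} (hi : Function.Injective i)
    (hig : Function.Exact i g) (hg : Function.Surjective g) :
    IsExactTriple (stableClass Λ X) (stableClass Λ Y) (stableClass Λ Z) := by
  rw [stableClass_congr ((LinearEquiv.ofInjective i hi).trans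
    (LinearEquiv.ofEq _ _ hig.linearMap_ker_eq.symm))]
  exact isExactTriple_of_surjective hg

lemma isExactTriple_of_surjective_comp {P Y Z : Type u} [AddCommGroup P] [Module Λ P]
    [Module.Finite Λ P] [Module.Projective Λ P] [AddCommGroup Y] [Module Λ Y] [Module.Finite Λ Y]
    [AddCommGroup Z] [Module Λ Z] [Module.Finite Λ Z] {g : Y →ₗ[Λ] Z} {s : P →ₗ[Λ] Y}
    (hs : Function.Surjective (g ∘ₗ s)) :
    IsExactTriple (syzygy Λ (stableClass Λ Z)) (stableClass Λ (LinearMap.ker g))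
      (stableClass Λ Y) := by
  have h := isExactTriple_of_surjective (g := (LinearMap.ker g).subtype.coprod s)
    (surjective_ker_subtype_coprod hs)
  rwa [stableClass_congr (kerCoprodEquiv g s), stableClass_ker hs, stableClass_prod,
    stableClass_eq_zero_iff.2 ‹Module.Projective Λ P›, add_zero] at h

variable {x y z : StableClass Λ}

lemma IsExactTriple.rotate (h : IsExactTriple x y z) : IsExactTriple (syzygy Λ z) x y := by
  obtain ⟨Y, Z, g, hg, rfl, rfl, rfl⟩ := h
  obtain ⟨s, hs⟩ := Module.projective_lifting_property g (freePresentation Λ Z) hg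
  exact isExactTriple_of_surjective_comp (s := s) (by rw [hs]; exact freePresentation_surjective Z)

lemma IsExactTriple.map_syzygy (h : IsExactTriple x y z) :
    IsExactTriple (syzygy Λ x) (syzygy Λ y) (syzygy Λ z) :=
  h.rotate.rotate.rotate

lemma IsExactTriple.map_iterate_syzygy (h : IsExactTriple x y z) (n : ℕ) :
    IsExactTriple ((syzygy Λ)^[n] x) ((syzygy Λ)^[n] y)
      ((syzygy Λ)^[n] z) := by
  induction n with
  | zero => exact h
  | succ n ih => simpa only [Function.iterate_succ_apply'] using ih.map_syzygy

lemma IsExactTriple.eq_of_right_eq_zero (h : IsExactTriple x y 0) : y = x := by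
  obtain ⟨Y, Z, g, hg, rfl, rfl, hZ⟩ := h
  have := stableClass_eq_zero_iff.1 hZ
  obtain ⟨e⟩ := nonempty_equiv_ker_prod_of_projective hg
  rw [stableClass_congr e, stableClass_prod, hZ, add_zero]

lemma IsExactTriple.syzygy_eq_zero (h : IsExactTriple 0 0 z) : syzygy Λ z = 0 :=
  h.rotate.eq_of_right_eq_zero.symm

end ExactTriples

section IteratedEndomorphisms

lemma exists_forall_pow_apply_eq_zero {R M : Type*} [Ring R] [AddCommGroup M] [Module R M]
    (f : Module.End R M) (V : Submodule R M) [IsNoetherian R V] :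
    ∃ n, ∀ v ∈ V, ∀ N, (f ^ N) v = 0 → (f ^ n) v = 0 := by
  obtain ⟨n, hn⟩ := monotone_stabilizes_iff_noetherian.2 ‹_›
    (⟨fun k => (f.iterateKer k).comap V.subtype,
      fun _ _ h => Submodule.comap_mono (f.iterateKer.monotone h)⟩ : ℕ →o Submodule R V)
  refine ⟨n, fun v hv N h => ?_⟩
  have hN : (⟨v, hv⟩ : V) ∈ (f.iterateKer (max N n)).comap V.subtype :=
    f.iterateKer.monotone (le_max_left N n) h
  exact (hn _ (le_max_right N n)).ge hN

variable {S : Type*} [AddCommMonoid S] (σ : S →+ S)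

lemma exists_forall_iterate_eq [IsCancelAdd S] {U : Set S} (hU : U.Finite) :
    ∃ n, ∀ x ∈ AddSubmonoid.closure U, ∀ y ∈ AddSubmonoid.closure U,
      ∀ N, σ^[N] x = σ^[N] y → σ^[n] x = σ^[n] y := by
  let ι : S →+ Algebra.GrothendieckAddGroup S := Algebra.GrothendieckAddGroup.of
  have hι : Function.Injective ι := Algebra.GrothendieckAddGroup.of_injective
  let L : Module.End ℤ (Algebra.GrothendieckAddGroup S) :=
    (Algebra.GrothendieckAddGroup.lift (ι.comp σ)).toIntLinearMap
  have hL : Function.Semiconj ι σ L := fun s =>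
    (DFunLike.congr_fun (Algebra.GrothendieckAddGroup.lift.symm_apply_apply (ι.comp σ)) s).symm
  have hsub (n : ℕ) (x y : S) : (L ^ n) (ι x - ι y) = 0 ↔ σ^[n] x = σ^[n] y := by
    rw [map_sub, Module.End.pow_apply, Module.End.pow_apply, ← (hL.iterate_right n).eq,
      ← (hL.iterate_right n).eq, sub_eq_zero, hι.eq_iff]
  let V : Submodule ℤ (Algebra.GrothendieckAddGroup S) := .span ℤ (ι '' U)
  have hV : AddSubmonoid.closure U ≤ V.toAddSubmonoid.comap ι :=
    AddSubmonoid.closure_le.2 fun u hu => Submodule.subset_span ⟨u, hu, rfl⟩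
  have : Module.Finite ℤ V := Module.Finite.span_of_finite ℤ (hU.image ι)
  obtain ⟨n, hn⟩ := exists_forall_pow_apply_eq_zero L V
  exact ⟨n, fun x hx y hy N h =>
    (hsub n x y).1 (hn _ (V.sub_mem (hV hx) (hV hy)) N ((hsub N x y).2 h))⟩

lemma iterate_mem_closure_image {U : Set S} (n : ℕ) {x : S} (hx : x ∈ AddSubmonoid.closure U) :
    σ^[n] x ∈ AddSubmonoid.closure (σ^[n] '' U) := by
  induction n with
  | zero => simpa using hx
  | succ n ih =>
    rw [Function.iterate_succ', Set.image_comp, Function.comp_apply, ← AddMonoidHom.map_mclosure]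
    exact ⟨_, ih, rfl⟩

variable {σ} in
lemma iterate_eq_zero_of_le {s : S} {m n : ℕ} (hmn : m ≤ n) (h : σ^[m] s = 0) :
    σ^[n] s = 0 := by
  obtain ⟨k, rfl⟩ := Nat.exists_eq_add_of_le' hmn
  rw [Function.iterate_add_apply, h, iterate_map_zero]

lemma exists_forall_iterate_eq_zero (hS : ∀ a b : S, a + b = 0 → a = 0) {T : Set S}
    (hT : T.Finite) :
    ∃ n, ∀ a ∈ AddSubmonoid.closure T, (∃ d, σ^[d] a = 0) → σ^[n] a = 0 := by
  choose! d hd using fun (t : S) (h : ∃ d, σ^[d] t = 0) => h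
  obtain ⟨n, hn⟩ := (hT.image d).bddAbove
  refine ⟨n, fun a ha => ?_⟩
  induction ha using AddSubmonoid.closure_induction with
  | mem t ht => exact fun h => iterate_eq_zero_of_le (hn ⟨t, ht, rfl⟩) (hd t h)
  | zero => exact fun _ => iterate_map_zero σ n
  | add a b _ _ iha ihb =>
    rintro ⟨d, hab⟩
    rw [iterate_map_add] at hab ⊢
    rw [iha ⟨d, hS _ _ hab⟩, ihb ⟨d, hS _ _ ((add_comm _ _).trans hab)⟩, add_zero]

end IteratedEndomorphisms

section ProjectiveDimension

open CategoryTheory Abelian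

section

variable {C : Type*} [Category* C] [Abelian C] [HasExt C] {d : ℕ}

lemma exists_comp_eq_of_hasProjectiveDimensionLT_X₃ {S : ShortComplex C} (hS : S.ShortExact)
    [HasProjectiveDimensionLT S.X₃ (d + 1)] {W : C} {i : ℕ} (hi : d ≤ i) (e : Ext S.X₁ W i) :
    ∃ e', (Ext.mk₀ S.f).comp e' (zero_add i) = e :=
  Ext.contravariant_sequence_exact₁ hS W e (add_comm 1 i)
    (Ext.eq_zero_of_hasProjectiveDimensionLT _ (d + 1) (by lia))

lemma exists_comp_eq_of_hasProjectiveDimensionLT_X₁ {S : ShortComplex C} (hS : S.ShortExact)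
    [HasProjectiveDimensionLT S.X₁ d] {W : C} {i : ℕ} (hi : d ≤ i) (e : Ext S.X₂ W i) :
    ∃ e', (Ext.mk₀ S.g).comp e' (zero_add i) = e :=
  Ext.contravariant_sequence_exact₂ hS W e (Ext.eq_zero_of_hasProjectiveDimensionLT _ d hi)

lemma hasProjectiveDimensionLT_of_isNilpotent {X : C} {f : End X} (hf : IsNilpotent f)
    (h : ∀ (W : C) (i : ℕ), d ≤ i → ∀ e : Ext X W i, ∃ e', (Ext.mk₀ f).comp e' (zero_add i) = e) :
    HasProjectiveDimensionLT X d := by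
  refine HasProjectiveDimensionLT.mk fun i hi W e => ?_
  have hpow (n : ℕ) : ∃ e', (Ext.mk₀ (f ^ n : End X)).comp e' (zero_add i) = e := by
    induction n with
    | zero => exact ⟨e, Ext.mk₀_id_comp e⟩
    | succ n ih =>
      obtain ⟨e₁, rfl⟩ := ih
      obtain ⟨e₂, rfl⟩ := h W i hi e₁
      refine ⟨e₂, ?_⟩
      rw [Ext.mk₀_comp_mk₀_assoc, pow_succ', End.mul_def]
  obtain ⟨n, hn⟩ := hf
  obtain ⟨e', rfl⟩ := hpow n
  rw [hn]
  exact (congrArg (Ext.comp · e' _) (Ext.mk₀_zero X X)).trans (Ext.zero_comp ..)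

/-- Precomposition with the nilpotent endomorphism `φ ≫ π` is surjective on `Ext X W i` for
`d ≤ i`, so these groups vanish. -/
lemma hasProjectiveDimensionLT_of_isNilpotent_comp {P X Y Z : C} {φ : X ⟶ Y} {q : Y ⟶ Z}
    {j : P ⟶ Y} {π : Y ⟶ X} {hφq : φ ≫ q = 0} {hjπ : j ≫ π = 0}
    (h₁ : (ShortComplex.mk φ q hφq).ShortExact) (h₂ : (ShortComplex.mk j π hjπ).ShortExact)
    (hf : IsNilpotent (R := End X) (φ ≫ π)) [hZ : HasProjectiveDimensionLT Z (d + 1)]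
    [hP : HasProjectiveDimensionLT P d] : HasProjectiveDimensionLT X d := by
  refine hasProjectiveDimensionLT_of_isNilpotent hf fun W i hi e => ?_
  obtain ⟨e₁, rfl⟩ : ∃ e', (Ext.mk₀ φ).comp e' (zero_add i) = e :=
    have : HasProjectiveDimensionLT (ShortComplex.mk φ q hφq).X₃ (d + 1) := hZ
    exists_comp_eq_of_hasProjectiveDimensionLT_X₃ h₁ hi e
  obtain ⟨e₂, rfl⟩ : ∃ e', (Ext.mk₀ π).comp e' (zero_add i) = e₁ :=
    have : HasProjectiveDimensionLT (ShortComplex.mk j π hjπ).X₁ d := hP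
    exists_comp_eq_of_hasProjectiveDimensionLT_X₁ h₂ hi e₁
  exact ⟨e₂, (Ext.mk₀_comp_mk₀_assoc ..).symm⟩

end

variable {Λ : Type u} [Ring Λ] {P X Y Z : Type u} [AddCommGroup P] [Module Λ P] [AddCommGroup X]
  [Module Λ X] [AddCommGroup Y] [Module Λ Y] [AddCommGroup Z] [Module Λ Z] {d : ℕ}

lemma shortExact_ofHom {i : X →ₗ[Λ] Y} {q : Y →ₗ[Λ] Z} (hi : Function.Injective i)
    (h : Function.Exact i q) (hq : Function.Surjective q) :
    (ShortComplex.mk (ModuleCat.ofHom i) (ModuleCat.ofHom q)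
      (by ext x; exact h.apply_apply_eq_zero x)).ShortExact where
  exact := (ShortComplex.ShortExact.moduleCat_exact_iff_function_exact _).2 h
  mono_f := (ModuleCat.mono_iff_injective _).2 hi
  epi_g := (ModuleCat.epi_iff_surjective _).2 hq

lemma hasProjectiveDimensionLT_one_iff :
    HasProjectiveDimensionLT (ModuleCat.of Λ X) 1 ↔ Module.Projective Λ X :=
  projective_iff_hasProjectiveDimensionLT_one.symm.trans (IsProjective.iff_projective X).symm

lemma iterate_syzygy_eq_zero_iff [IsNoetherianRing Λ] [Module.Finite Λ X] :
    (syzygy Λ)^[d] (stableClass Λ X) = 0 ↔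
      HasProjectiveDimensionLT (ModuleCat.of Λ X) (d + 1) := by
  induction d generalizing X with
  | zero => exact stableClass_eq_zero_iff.trans hasProjectiveDimensionLT_one_iff.symm
  | succ d ih =>
    rw [Function.iterate_succ_apply, ← stableClass_ker (freePresentation_surjective (Λ := Λ) X), ih]
    exact ((shortExact_ofHom (Submodule.injective_subtype _)
      (LinearMap.exact_subtype_ker_map (freePresentation Λ X))
      (freePresentation_surjective X)).hasProjectiveDimensionLT_X₃_iff d
        ((IsProjective.iff_projective _).1 inferInstance)).symm

lemma iterate_syzygy_eq_zero_of_isNilpotent [IsNoetherianRing Λ] [Module.Finite Λ X]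
    [Module.Finite Λ Z] [Module.Projective Λ P] {φ : X →ₗ[Λ] X × P} {q : X × P →ₗ[Λ] Z}
    (hφ : Function.Injective φ) (hφq : Function.Exact φ q) (hq : Function.Surjective q)
    (hf : IsNilpotent (LinearMap.fst Λ X P ∘ₗ φ : Module.End Λ X))
    (hZ : (syzygy Λ)^[d + 1] (stableClass Λ Z) = 0) : (syzygy Λ)^[d] (stableClass Λ X) = 0 := by
  rw [iterate_syzygy_eq_zero_iff] at hZ ⊢
  have hP : HasProjectiveDimensionLT (ModuleCat.of Λ P) 1 := hasProjectiveDimensionLT_one_iff.2 ‹_›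
  have : HasProjectiveDimensionLT (ModuleCat.of Λ P) (d + 1) :=
    hasProjectiveDimensionLT_of_ge _ 1 _ (by lia)
  refine hasProjectiveDimensionLT_of_isNilpotent_comp (shortExact_ofHom hφ hφq hq)
    (shortExact_ofHom (i := LinearMap.inr Λ X P) (q := LinearMap.fst Λ X P)
      LinearMap.inr_injective .inr_fst LinearMap.fst_surjective) ?_
  exact hf.map (ModuleCat.endRingEquiv (ModuleCat.of Λ X)).symm

end ProjectiveDimension

section NilpotentPart

variable {Λ : Type u} [Ring Λ]

section

variable {X P Z : Type*} [AddCommGroup X] [Module Λ X] [AddCommGroup P] [Module Λ P]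
  [AddCommGroup Z] [Module Λ Z]

lemma eventually_comap_ker_pow_eq [IsNoetherian Λ X] (f : Module.End Λ X) :
    ∀ᶠ n in Filter.atTop, (LinearMap.ker (f ^ n)).comap f = LinearMap.ker (f ^ n) := by
  filter_upwards [LinearMap.eventually_iSup_ker_pow_eq f] with n hn
  refine le_antisymm ?_ ?_
  · rw [← LinearMap.ker_comp, ← Module.End.mul_eq_comp, ← pow_succ, ← hn]
    exact le_iSup (fun m => LinearMap.ker (f ^ m)) (n + 1)
  · rw [← LinearMap.ker_comp, ← Module.End.mul_eq_comp, ← pow_succ]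
    exact f.iterateKer.monotone n.le_succ

/-- Fitting's lemma, stated through the summand on which `f` is nilpotent. -/
lemma exists_isSummand_nilpotent [IsNoetherian Λ X] [IsArtinian Λ X] (f : Module.End Λ X) :
    ∃ X₀ : Submodule Λ X, IsSummand Λ X₀ X ∧ X₀.comap f = X₀ ∧ X₀ ⊔ LinearMap.range f = ⊤ ∧
      ∃ n, X₀ ≤ LinearMap.ker (f ^ n) := by
  obtain ⟨n, ⟨hcompl, hcomap⟩, hpos⟩ := (((LinearMap.eventually_isCompl_ker_pow_range_pow f).and
    (eventually_comap_ker_pow_eq f)).and (Filter.eventually_gt_atTop 0)).exists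
  refine ⟨LinearMap.ker (f ^ n), ⟨Submodule.subtype _, Submodule.projectionOnto _ _ hcompl, ?_⟩,
    hcomap, ?_, n, le_rfl⟩
  · exact LinearMap.ext fun x => Submodule.projectionOnto_apply_left hcompl x
  · rw [eq_top_iff, ← hcompl.sup_eq_top]
    refine sup_le_sup_left ?_ _
    rw [← Nat.succ_pred_eq_of_pos hpos, pow_succ']
    exact LinearMap.range_comp_le_range _ _

lemma exists_exact_restrict {φ : X →ₗ[Λ] X × P} {q : X × P →ₗ[Λ] Z} (hφ : Function.Injective φ)
    (hφq : Function.Exact φ q) (hq : Function.Surjective q) {X₀ : Submodule Λ X}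
    (hcomap : X₀.comap (LinearMap.fst Λ X P ∘ₗ φ) = X₀)
    (hsup : X₀ ⊔ LinearMap.range (LinearMap.fst Λ X P ∘ₗ φ) = ⊤) :
    ∃ (ψ : X₀ →ₗ[Λ] X₀ × P) (r : X₀ × P →ₗ[Λ] Z), Function.Injective ψ ∧ Function.Exact ψ r ∧
      Function.Surjective r ∧ ∀ x, ((ψ x).1 : X) = (φ x).1 := by
  let ι : X₀ × P →ₗ[Λ] X × P := X₀.subtype.prodMap LinearMap.id
  let ψ : X₀ →ₗ[Λ] X₀ × P := ((LinearMap.fst Λ X P ∘ₗ φ).restrict hcomap.ge).prod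
    (LinearMap.snd Λ X P ∘ₗ φ ∘ₗ X₀.subtype)
  have hι : Function.Injective ι := X₀.injective_subtype.prodMap Function.injective_id
  refine ⟨ψ, q ∘ₗ ι, ?_, fun w => ⟨fun hw => ?_, ?_⟩, fun z => ?_, fun _ => rfl⟩
  · exact fun x y h => Subtype.ext (hφ (congrArg ι h))
  · obtain ⟨x, hx⟩ := (hφq (ι w)).1 hw
    have hx₀ : x ∈ X₀ := by
      rw [← hcomap, Submodule.mem_comap, LinearMap.comp_apply, hx]
      exact w.1.2
    exact ⟨⟨x, hx₀⟩, hι hx⟩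
  · rintro ⟨x, rfl⟩
    exact hφq.apply_apply_eq_zero x
  · obtain ⟨⟨x, p⟩, rfl⟩ := hq z
    obtain ⟨x₀, hx₀, _, ⟨y, rfl⟩, rfl⟩ := Submodule.mem_sup.1 (hsup.ge (Submodule.mem_top (x := x)))
    refine ⟨(⟨x₀, hx₀⟩, p - (φ y).2), ?_⟩
    rw [LinearMap.comp_apply, ← sub_eq_zero, ← map_sub, ← neg_eq_zero, ← map_neg]
    refine (hφq _).2 ⟨y, ?_⟩
    ext <;> simp [ι]

end

lemma IsExactTriple.exists_exact [IsNoetherianRing Λ] {x z : StableClass Λ}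
    (h : IsExactTriple x x z) : ∃ (X P Z : FGModuleCat.{u} Λ) (φ : X →ₗ[Λ] X × P)
      (q : X × P →ₗ[Λ] Z), Module.Projective Λ P ∧ Function.Injective φ ∧ Function.Exact φ q ∧
      Function.Surjective q ∧ stableClass Λ X = x ∧ stableClass Λ Z = z := by
  obtain ⟨Y, Z, g, hg, hX, hY, rfl⟩ := h
  obtain ⟨Q, P, _, _, ⟨e⟩⟩ := stableClass_eq_iff.1 (hY.trans hX.symm)
  have hexact : Function.Exact (LinearMap.inl Λ Y Q ∘ₗ (LinearMap.ker g).subtype)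
      (g.prodMap (LinearMap.id (M := Q))) := by
    rintro ⟨y, p⟩
    simp [Prod.ext_iff, eq_comm]
  refine ⟨.of Λ (LinearMap.ker g), P, .of Λ (Z × Q),
    e.toLinearMap ∘ₗ LinearMap.inl Λ Y Q ∘ₗ (LinearMap.ker g).subtype,
    g.prodMap LinearMap.id ∘ₗ e.symm.toLinearMap, ‹_›,
    e.injective.comp (LinearMap.inl_injective.comp (Submodule.injective_subtype _)), ?_,
    (hg.prodMap Function.surjective_id).comp e.symm.surjective, hX, ?_⟩
  · exact (LinearEquiv.conj_exact_iff_exact _ _ e).2 hexact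
  · rw [stableClass_prod, stableClass_eq_zero_iff.2 ‹Module.Projective Λ Q›, add_zero]

variable [IsArtinianRing Λ]

lemma IsExactTriple.exists_nilpotent_part {x z : StableClass Λ} {d : ℕ}
    (h : IsExactTriple x x z) (hz : (syzygy Λ)^[d + 1] z = 0) :
    ∃ a b, a + b = x ∧ (syzygy Λ)^[d] a = 0 ∧ IsExactTriple a a z := by
  obtain ⟨X, P, Z, φ, q, _, hφ, hφq, hq, rfl, rfl⟩ := h.exists_exact
  obtain ⟨X₀, hX₀, hcomap, hsup, n, hn⟩ := exists_isSummand_nilpotent (LinearMap.fst Λ X P ∘ₗ φ)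
  obtain ⟨ψ, r, hψ, hψr, hr, hval⟩ := exists_exact_restrict hφ hφq hq hcomap hsup
  have hnil : IsNilpotent (LinearMap.fst Λ X₀ P ∘ₗ ψ : Module.End Λ X₀) := by
    have hres : LinearMap.fst Λ X₀ P ∘ₗ ψ = (LinearMap.fst Λ X P ∘ₗ φ).restrict hcomap.ge :=
      LinearMap.ext fun x => Subtype.ext (hval x)
    refine ⟨n, LinearMap.ext fun x => Subtype.ext ?_⟩
    rw [hres, Module.End.pow_restrict]
    exact hn x.2
  obtain ⟨b, hb⟩ := hX₀.exists_stableClass_add_eq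
  refine ⟨_, b, hb, iterate_syzygy_eq_zero_of_isNilpotent hψ hψr hr hnil hz, ?_⟩
  simpa only [stableClass_prod, stableClass_eq_zero_iff.2 ‹Module.Projective Λ P›, add_zero]
    using isExactTriple_of_exact hψ hψr hr

lemma exists_forall_iterate_syzygy_eq_zero {U : Set (StableClass Λ)} (hU : U.Finite) :
    ∃ n, ∀ x ∈ AddSubmonoid.closure U, ∀ y ∈ AddSubmonoid.closure U,
      ∀ z, IsExactTriple x y z → (∃ d, (syzygy Λ)^[d] z = 0) → (syzygy Λ)^[n] z = 0 := by
  obtain ⟨n, hn⟩ := exists_forall_iterate_eq (syzygy Λ) hU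
  obtain ⟨T, hT, hsummand⟩ := exists_finite_forall_summand_mem_closure (hU.image (syzygy Λ)^[n])
  obtain ⟨m, hm⟩ := exists_forall_iterate_eq_zero (syzygy Λ)
    (fun _ _ => StableClass.eq_zero_of_add_eq_zero) hT
  refine ⟨m + 1 + n, fun x hx y hy z h ⟨d, hd⟩ => ?_⟩
  have hxy : (syzygy Λ)^[n] y = (syzygy Λ)^[n] x :=
    hn y hy x hx d (hd ▸ h.map_iterate_syzygy d).eq_of_right_eq_zero
  have hz : (syzygy Λ)^[d + 1] ((syzygy Λ)^[n] z) = 0 := by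
    rw [← Function.iterate_add_apply]
    exact iterate_eq_zero_of_le (by lia) hd
  obtain ⟨a, b, hab, ha, htriple⟩ := (hxy ▸ h.map_iterate_syzygy n).exists_nilpotent_part hz
  have ha' : (syzygy Λ)^[m] a = 0 :=
    hm a (hsummand a b (hab ▸ iterate_mem_closure_image _ n hx)) ⟨d, ha⟩
  have := htriple.map_iterate_syzygy m
  rw [ha'] at this
  rw [Function.iterate_add_apply, Function.iterate_succ_apply']
  exact this.syzygy_eq_zero

end NilpotentPart

section Semisimple

variable {Λ : Type u} [Ring Λ]

lemma stableClass_pi (n : ℕ) (M : Type u) [AddCommGroup M] [Module Λ M] [Module.Finite Λ M] :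
    stableClass Λ (Fin n → M) = n • stableClass Λ M := by
  induction n with
  | zero => rw [zero_smul, stableClass_eq_zero_iff]; infer_instance
  | succ n ih =>
    rw [← stableClass_congr (Fin.consLinearEquiv Λ fun _ : Fin (n + 1) => M), stableClass_prod, ih,
      succ_nsmul']

variable [IsArtinianRing Λ]

lemma exists_isSummand_pi_of_jacobson_smul {Z : Type u} [AddCommGroup Z] [Module Λ Z]
    [Module.Finite Λ Z] (hZ : ∀ a ∈ Ring.jacobson Λ, ∀ z : Z, a • z = 0) :
    ∃ n : ℕ, IsSummand Λ Z (Fin n → Λ ⧸ Ring.jacobson Λ) := by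
  have : IsSemisimpleModule Λ (Λ ⧸ Ring.jacobson Λ) :=
    (IsArtinian.isSemisimpleModule_iff_jacobson ..).2 (Module.jacobson_quotient_jacobson Λ Λ)
  obtain ⟨n, s, hs⟩ := Module.Finite.exists_fin (R := Λ) (M := Z)
  let f : (Fin n → Λ ⧸ Ring.jacobson Λ) →ₗ[Λ] Z := LinearMap.lsum Λ _ ℕ fun i =>
    Submodule.liftQ (Ring.jacobson Λ) (LinearMap.toSpanSingleton Λ Z (s i)) fun a ha => hZ a ha _
  have hf : Function.Surjective f := by
    rw [← LinearMap.range_eq_top, ← top_le_iff, ← hs, Submodule.span_le]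
    rintro _ ⟨i, rfl⟩
    exact ⟨Pi.single i (Submodule.Quotient.mk 1),
      (LinearMap.lsum_piSingle _ _ _ _ _ _).trans (one_smul Λ (s i))⟩
  have : IsSemisimpleModule Λ Z := IsSemisimpleModule.of_surjective f hf
  obtain ⟨g, hg⟩ := IsSemisimpleModule.lifting_property f hf LinearMap.id
  exact ⟨n, g, f, hg⟩

lemma exists_finite_forall_jacobson_smul_mem_closure :
    ∃ T : Set (StableClass Λ), T.Finite ∧ ∀ (Z : Type u) [AddCommGroup Z] [Module Λ Z]
      [Module.Finite Λ Z], (∀ a ∈ Ring.jacobson Λ, ∀ z : Z, a • z = 0) →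
        stableClass Λ Z ∈ AddSubmonoid.closure T := by
  obtain ⟨T, hT, hsummand⟩ := exists_finite_forall_summand_mem_closure
    (Set.finite_singleton (stableClass Λ (Λ ⧸ Ring.jacobson Λ)))
  refine ⟨T, hT, fun Z _ _ _ hZ => ?_⟩
  obtain ⟨n, hn⟩ := exists_isSummand_pi_of_jacobson_smul hZ
  obtain ⟨c, hc⟩ := hn.exists_stableClass_add_eq
  refine hsummand _ c ?_
  rw [hc, stableClass_pi]
  exact nsmul_mem (AddSubmonoid.subset_closure (Set.mem_singleton _)) n

end Semisimple

section IdealMul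

open scoped Pointwise

variable {K Λ : Type*} [CommRing K] [Ring Λ] [Algebra K Λ] {B : Subalgebra K Λ}
  {M N : Type*} [AddCommGroup M] [Module Λ M] [AddCommGroup N] [Module Λ N]

/-- The `Λ`-submodule `J Y` of `M` generated by the products of an element of the left ideal `J` of
`Λ` and an element of the submodule `Y` of `M` over the subring `B`. -/
def idealMul (J : Ideal Λ) (Y : Submodule B M) : Submodule Λ M :=
  Submodule.span Λ ((J : Set Λ) • (Y : Set M))

variable {J : Ideal Λ}

lemma smul_mem_idealMul {Y : Submodule B M} {x : Λ} (hx : x ∈ J) {y : M} (hy : y ∈ Y) :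
    x • y ∈ idealMul J Y :=
  Submodule.subset_span (Set.smul_mem_smul hx hy)

lemma idealMul_le {Y : Submodule B M} {L : Submodule Λ M} :
    idealMul J Y ≤ L ↔ ∀ x ∈ J, ∀ y ∈ Y, x • y ∈ L :=
  Submodule.span_le.trans Set.smul_subset_iff

lemma idealMul_bot : idealMul J (⊥ : Submodule B M) = ⊥ := by
  rw [eq_bot_iff, idealMul_le]
  rintro x - y hy
  simp [(Submodule.mem_bot B).1 hy]

lemma idealMul_sup (Y Y' : Submodule B M) :
    idealMul J (Y ⊔ Y') = idealMul J Y ⊔ idealMul J Y' := by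
  refine le_antisymm (idealMul_le.2 fun x hx y hy => ?_) (sup_le ?_ ?_)
  · obtain ⟨y₁, h₁, y₂, h₂, rfl⟩ := Submodule.mem_sup.1 hy
    rw [smul_add]
    exact Submodule.add_mem_sup (smul_mem_idealMul hx h₁) (smul_mem_idealMul hx h₂)
  · exact idealMul_le.2 fun x hx y hy => smul_mem_idealMul hx (Submodule.mem_sup_left hy)
  · exact idealMul_le.2 fun x hx y hy => smul_mem_idealMul hx (Submodule.mem_sup_right hy)

lemma map_idealMul (g : M →ₗ[Λ] N) (Y : Submodule B M) :
    (idealMul J Y).map g = idealMul J (Y.map (g.restrictScalars B)) := by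
  rw [idealMul, idealMul, Submodule.map_span, Submodule.map_coe]
  exact congrArg _ (Set.image_image2_distrib_right (map_smul g))

lemma smul_mem_idealMul_top {a : Λ} (ha : a ∈ J * ⊤) (m : M) :
    a • m ∈ idealMul J (⊤ : Submodule B M) := by
  induction ha using Submodule.smul_induction_on' with
  | smul x hx b _ =>
    rw [smul_assoc]
    exact smul_mem_idealMul hx Submodule.mem_top
  | add a _ b _ ha hb =>
    rw [add_smul]
    exact add_mem ha hb

variable (hJ : ∀ x ∈ J, x ∈ B)

include hJ

lemma mem_of_mem_idealMul {Y : Submodule B M} {z : M} (hz : z ∈ idealMul J Y) : z ∈ Y := by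
  suffices ∀ a : Λ, a • z ∈ Y by simpa using this 1
  induction hz using Submodule.span_induction with
  | mem z hz =>
    obtain ⟨x, hx, y, hy, rfl⟩ := hz
    intro a
    exact smul_smul a x y ▸ Y.smul_mem (⟨a * x, hJ _ (J.mul_mem_left a hx)⟩ : B) hy
  | zero => simp
  | add z w _ _ hz hw => exact fun a => smul_add a z w ▸ add_mem (hz a) (hw a)
  | smul b z _ hz => exact fun a => smul_smul a b z ▸ hz (a * b)

lemma disjoint_idealMul {Y Y' : Submodule B M} (h : Disjoint Y Y') :
    Disjoint (idealMul J Y) (idealMul J Y') :=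
  Submodule.disjoint_def.2 fun z hz hz' => Submodule.disjoint_def.1 h z
    (mem_of_mem_idealMul hJ hz) (mem_of_mem_idealMul hJ hz')

lemma nonempty_idealMul_equiv_map {g : M →ₗ[Λ] N} {Y : Submodule B M} (hg : Set.InjOn g Y) :
    Nonempty (idealMul J Y ≃ₗ[Λ] idealMul J (Y.map (g.restrictScalars B))) := by
  rw [← map_idealMul]
  exact ⟨LinearEquiv.ofBijective (g.submoduleMap (idealMul J Y))
    ⟨LinearMap.submoduleMap_injective_of_injOn (hg.mono fun _ => mem_of_mem_idealMul hJ),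
      g.submoduleMap_surjective _⟩⟩

/-- Both sides are images of `J G`, where `G` is the graph of the isomorphism `Y ≃ Y'`. -/
lemma nonempty_idealMul_equiv {Y : Submodule B M} {Y' : Submodule B N} (e : Y ≃ₗ[B] Y') :
    Nonempty (idealMul J Y ≃ₗ[Λ] idealMul J Y') := by
  let G : Submodule B (M × N) :=
    LinearMap.range (Y.subtype.prod (Y'.subtype ∘ₗ e.toLinearMap))
  have hfst : Set.InjOn (LinearMap.fst Λ M N) G := by
    rintro _ ⟨y, rfl⟩ _ ⟨y', rfl⟩ h
    exact congrArg _ (Subtype.ext h)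
  have hsnd : Set.InjOn (LinearMap.snd Λ M N) G := by
    rintro _ ⟨y, rfl⟩ _ ⟨y', rfl⟩ h
    exact congrArg _ (e.injective (Subtype.ext h))
  have hmap_fst : G.map ((LinearMap.fst Λ M N).restrictScalars B) = Y :=
    (LinearMap.range_comp _ _).symm.trans Y.range_subtype
  have hmap_snd : G.map ((LinearMap.snd Λ M N).restrictScalars B) = Y' :=
    (LinearMap.range_comp _ _).symm.trans ((LinearEquiv.range_comp e _).trans Y'.range_subtype)
  obtain ⟨e₁⟩ := nonempty_idealMul_equiv_map hJ hfst
  obtain ⟨e₂⟩ := nonempty_idealMul_equiv_map hJ hsnd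
  rw [hmap_fst] at e₁
  rw [hmap_snd] at e₂
  exact ⟨e₁.symm.trans e₂⟩

end IdealMul

section RepresentationFinite

variable {K : Type*} {Λ : Type u} [CommRing K] [Ring Λ] [Algebra K Λ] [IsNoetherianRing Λ]
  {B : Subalgebra K Λ} {J : Ideal Λ}

lemma finite_stableClass_idealMul (hJ : ∀ x ∈ J, x ∈ B) (Y : ModuleCat.{u} B) :
    {s | ∃ (M : FGModuleCat.{u} Λ) (Y' : Submodule B M), Nonempty (Y' ≃ₗ[B] Y) ∧
      stableClass Λ (idealMul J Y') = s}.Finite := by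
  refine Set.Subsingleton.finite ?_
  rintro _ ⟨M, Y₁, ⟨e₁⟩, rfl⟩ _ ⟨N, Y₂, ⟨e₂⟩, rfl⟩
  obtain ⟨e⟩ := nonempty_idealMul_equiv hJ (e₁.trans e₂.symm)
  exact stableClass_congr e

lemma exists_finite_forall_stableClass_idealMul_mem_closure [IsArtinianRing B] [Module.Finite B Λ]
    (hJ : ∀ x ∈ J, x ∈ B) (hB : ClassRepFinite B fun Y => ∃ (M : ModuleCat.{u} Λ) (i : Y →ₗ[B] M),
      Module.Finite Λ M ∧ Function.Injective i) :
    ∃ U : Set (StableClass Λ), U.Finite ∧ ∀ (M : FGModuleCat.{u} Λ) (Y : Submodule B M),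
      stableClass Λ (idealMul J Y) ∈ AddSubmonoid.closure U := by
  obtain ⟨k, N, hN⟩ := hB
  refine ⟨_, Set.finite_iUnion fun i => finite_stableClass_idealMul hJ (N i), fun M Y => ?_⟩
  have : Module.Finite B M := Module.Finite.trans Λ M
  induction Y using submodule_decomposition_induction with
  | bot =>
    rw [idealMul_bot, stableClass_eq_zero_iff.2 inferInstance]
    exact zero_mem _
  | indecomposable Y hnontrivial hindec =>
    obtain ⟨i, hi⟩ := hN (.of B Y) ⟨.of Λ M, Y.subtype, inferInstanceAs (Module.Finite Λ M),
      Y.injective_subtype⟩ ⟨hnontrivial, hindec⟩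
    exact AddSubmonoid.subset_closure (Set.mem_iUnion.2 ⟨i, M, Y, hi, rfl⟩)
  | sup Y Y' hdisj hY hY' =>
    obtain ⟨e⟩ := nonempty_prod_equiv_sup_of_disjoint (disjoint_idealMul hJ hdisj)
    rw [idealMul_sup, ← stableClass_congr e, stableClass_prod]
    exact add_mem hY hY'

end RepresentationFinite

section RadSet

variable {K Λ : Type u} [CommRing K] [Ring Λ] [Algebra K Λ] {B : Subalgebra K Λ}

/-- The radical of a subalgebra, as a left ideal of the ambient algebra. -/
def radSetIdeal (hleft : ∀ a : Λ, ∀ x ∈ radSet B, a * x ∈ radSet B) : Ideal Λ where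
  __ := (jacobsonRad B).toAddSubmonoid.map B.val
  smul_mem' := hleft

lemma mem_of_mem_radSetIdeal {hleft : ∀ a : Λ, ∀ x ∈ radSet B, a * x ∈ radSet B} {x : Λ}
    (hx : x ∈ radSetIdeal hleft) : x ∈ B := by
  obtain ⟨b, -, rfl⟩ := hx
  exact b.2

lemma closure_radSet_mul_le (hleft : ∀ a : Λ, ∀ x ∈ radSet B, a * x ∈ radSet B) :
    AddSubgroup.closure {z : Λ | ∃ x ∈ radSet B, ∃ a : Λ, z = x * a} ≤
      (radSetIdeal hleft * ⊤).toAddSubgroup := by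
  rw [AddSubgroup.closure_le]
  rintro _ ⟨x, hx, a, rfl⟩
  exact Ideal.mul_mem_mul (show x ∈ radSetIdeal hleft from hx) (Submodule.mem_top (x := a))

lemma jacobson_le_radSetIdeal_mul_top (hleft : ∀ a : Λ, ∀ x ∈ radSet B, a * x ∈ radSet B)
    (h : (jacobsonRad Λ).toAddSubgroup ≤
      AddSubgroup.closure {z : Λ | ∃ x ∈ radSet B, ∃ a : Λ, z = x * a}) :
    Ring.jacobson Λ ≤ radSetIdeal hleft * ⊤ := by
  rw [Ring.jacobson_eq_sInf_isMaximal]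
  exact h.trans (closure_radSet_mul_le hleft)

lemma RepFinite.classRepFinite_submodules [IsArtinianRing B] [Module.Finite B Λ]
    (h : RepFinite B) : ClassRepFinite B fun Y => ∃ (M : ModuleCat.{u} Λ) (i : Y →ₗ[B] M),
      Module.Finite Λ M ∧ Function.Injective i := by
  obtain ⟨k, N, hN⟩ := h
  refine ⟨k, N, fun Y ⟨M, i, _, hi⟩ => hN Y ?_⟩
  have : Module.Finite B M := Module.Finite.trans Λ M
  exact Module.Finite.of_injective i hi

lemma isArtinianRing_subalgebra [IsArtinianRing K] [Module.Finite K Λ] (B : Subalgebra K Λ) :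
    IsArtinianRing B :=
  have : Module.Finite K B := inferInstanceAs (Module.Finite K (Subalgebra.toSubmodule B))
  IsArtinianRing.of_finite K B

end RadSet

section Subalgebra

variable {K : Type*} {Λ : Type u} [CommRing K] [Ring Λ] [Algebra K Λ]

lemma isArtinianRing_of_finite_subalgebra (B : Subalgebra K Λ) [IsArtinianRing B]
    [Module.Finite B Λ] : IsArtinianRing Λ :=
  isArtinian_of_tower B isArtinian_of_fg_of_artinian'

lemma jacobson_smul_quotient_idealMul_eq_zero {B : Subalgebra K Λ} {J : Ideal Λ}
    (hJ : Ring.jacobson Λ ≤ J * ⊤) {M : Type*} [AddCommGroup M] [Module Λ M] {a : Λ}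
    (ha : a ∈ Ring.jacobson Λ) (z : M ⧸ idealMul J (⊤ : Submodule B M)) : a • z = 0 := by
  induction z using Submodule.Quotient.induction_on with | H m
  rw [← Submodule.Quotient.mk_smul, Submodule.Quotient.mk_eq_zero]
  exact smul_mem_idealMul_top (hJ ha) m

theorem statement6_general (B : Subalgebra K Λ) [IsArtinianRing B] [Module.Finite B Λ]
    (J : Ideal Λ) (hJB : ∀ x ∈ J, x ∈ B) (hJ : Ring.jacobson Λ ≤ J * ⊤)
    (hB : ClassRepFinite B fun Y => ∃ (M : ModuleCat.{u} Λ) (i : Y →ₗ[B] M),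
      Module.Finite Λ M ∧ Function.Injective i) :
    FinFinDim Λ := by
  have := isArtinianRing_of_finite_subalgebra B
  obtain ⟨U, hU, hU_mem⟩ := exists_finite_forall_stableClass_idealMul_mem_closure hJB hB
  obtain ⟨T, hT, hT_mem⟩ := exists_finite_forall_jacobson_smul_mem_closure (Λ := Λ)
  obtain ⟨n, hn⟩ := exists_forall_iterate_syzygy_eq_zero ((hT.image (syzygy Λ)).union hU)
  refine finFinDim_iff_iterate_syzygy.2 ⟨n, fun s hs => ?_⟩
  induction s using StableClass.ind with | h M
  let L : Submodule Λ M := idealMul J (⊤ : Submodule B M)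
  have htriple := (isExactTriple_of_surjective L.mkQ_surjective).rotate
  rw [L.ker_mkQ] at htriple
  have hquot : stableClass Λ (M ⧸ L) ∈ AddSubmonoid.closure T :=
    hT_mem _ fun _ ha => jacobson_smul_quotient_idealMul_eq_zero hJ ha
  refine hn _ (AddSubmonoid.closure_mono Set.subset_union_left ?_) _
    (AddSubmonoid.closure_mono Set.subset_union_right (hU_mem (.of Λ M) ⊤)) _ htriple hs
  exact iterate_mem_closure_image (syzygy Λ) 1 hquot

end Subalgebra

/-- If `B ⊆ A` is a subalgebra with `rad B` a left ideal of `A` and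
`rad B · A = rad A`, and `B` is representation-finite, then `fin.dim A < ∞`. -/
theorem statement6 (B : Subalgebra R A)
    (hleft : ∀ a : A, ∀ x ∈ radSet B, a * x ∈ radSet B)
    (heq : AddSubgroup.closure {z : A | ∃ x ∈ radSet B, ∃ a : A, z = x * a} =
      (jacobsonRad A).toAddSubgroup)
    (hB : RepFinite ↥B) :
    FinFinDim A := by
  have : IsArtinianRing B := isArtinianRing_subalgebra B
  have : Module.Finite B A := Module.Finite.of_restrictScalars_finite R B A
  exact statement6_general B (radSetIdeal hleft) (fun _ => mem_of_mem_radSetIdeal)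
    (jacobson_le_radSetIdeal_mul_top hleft heq.ge) hB.classRepFinite_submodules
end
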